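/- arXiv:1504.00395 — 9 statements merged into one kernel-verified Lean document; each statement's English description precedes it below -/
import Mathlib

section
/- Let f : S¹ → ℝ be continuously differentiable with ∫_{S¹} f(x) dx = 0, and suppose c* ∈ ℝ is such that f′(x) ≤ c* for all x ∈ S¹. Then sup_{x∈S¹} |f(x)| ≤ c* and ∫_{S¹} |f′(x)| dx ≤ 2c*. -/
/-- Lemma 4.1 of the paper: a C¹ function on the circle ℝ/ℤ with zero mean whose
derivative is bounded above by `c` satisfies `|f|_∞ ≤ c` and `|f'|_{L¹} ≤ 2c`. -/
theorem stmt_1 (f : ℝ → ℝ) (hper : Function.Periodic f 1)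
    (hf : ContDiff ℝ 1 f)
    (hmean : ∫ x in (0:ℝ)..1, f x = 0)
    (c : ℝ) (hc : ∀ x, deriv f x ≤ c) :
    (∀ x, |f x| ≤ c) ∧ (∫ x in (0:ℝ)..1, |deriv f x|) ≤ 2 * c := by
  have hd : Differentiable ℝ f := hf.differentiable (by norm_num)
  have hcd : Continuous (deriv f) := hf.continuous_deriv (by norm_num)
  have hcf : Continuous f := hf.continuous
  have h01 : f 1 = f 0 := by simpa using hper 0
  have hint : ∫ x in (0:ℝ)..1, deriv f x = 0 := by
    rw [intervalIntegral.integral_deriv_eq_sub (fun x _ => hd x)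
      (hcd.intervalIntegrable _ _), h01, sub_self]
  have hlip : ∀ x y, x ≤ y → f y - f x ≤ c * (y - x) := fun x y hxy =>
    image_sub_le_mul_sub_of_deriv_le hd hc hxy
  have hc0 : 0 ≤ c := by
    have := hlip 0 1 zero_le_one
    rw [h01] at this
    linarith
  have hmean' : ∀ a, ∫ x in a..(a+1), f x = 0 := fun a => by
    rw [hper.intervalIntegral_add_eq a 0, zero_add, hmean]
  refine ⟨fun x => abs_le.2 ⟨?_, ?_⟩, ?_⟩
  · have h := intervalIntegral.integral_mono_on (a := x) (b := x + 1) (f := f)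
      (g := fun _ => f x + c) (μ := MeasureTheory.volume) (by linarith)
      (hcf.intervalIntegrable _ _) (continuous_const.intervalIntegrable _ _)
      (fun t ht => by
        have := hlip x t ht.1
        have := ht.2
        nlinarith)
    rw [hmean', intervalIntegral.integral_const] at h
    simp at h
    linarith
  · have h := intervalIntegral.integral_mono_on (a := x - 1) (b := x - 1 + 1)
      (f := fun _ => f x - c) (g := f) (μ := MeasureTheory.volume) (by linarith)
      (continuous_const.intervalIntegrable _ _) (hcf.intervalIntegrable _ _)
      (fun t ht => by
        have h2 := ht.2
        have := hlip t x (by linarith)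
        have := ht.1
        nlinarith)
    rw [hmean', intervalIntegral.integral_const] at h
    simp at h
    linarith
  · have h := intervalIntegral.integral_mono_on (a := 0) (b := 1)
      (f := fun x => |deriv f x|) (g := fun x => 2 * c - deriv f x)
      (μ := MeasureTheory.volume) zero_le_one
      (hcd.abs.intervalIntegrable _ _)
      ((continuous_const.sub hcd).intervalIntegrable _ _)
      (fun t _ => by
        have := hc t
        exact abs_le.2 ⟨by linarith, by linarith⟩)
    rw [intervalIntegral.integral_sub (continuous_const.intervalIntegrable _ _)
      (hcd.intervalIntegrable _ _), hint, intervalIntegral.integral_const] at h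
    simpa using h
end

section
/- Let ν > 0, T > 0, and let v : [0,T] × S¹ → ℝ be continuous with continuous space derivative ∂_x v. Suppose w′, w″ : [0,T] × S¹ → ℝ are continuous, with continuous derivatives ∂_t w, ∂_x w, ∂_x² w on [0,T] × S¹, and both satisfy pointwise the perturbed Burgers equation ∂_t w − ν ∂_x² w + (1/2) ∂_x((w + v)²) = 0 together with the same initial condition w′(0,·) = w″(0,·). Then w′ = w″ on [0,T] × S¹. -/
open Set


theorem aux_second (f : ℝ → ℝ) (x : ℝ) (hd : Differentiable ℝ f)
    (hm : ∀ y, f y ≤ f x) : deriv f x = 0 ∧ deriv (deriv f) x ≤ 0 := by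
  have hmax : IsLocalMax f x := Filter.Eventually.of_forall hm
  have h1 := hmax.deriv_eq_zero
  refine ⟨h1, ?_⟩
  by_contra hpos
  push Not at hpos
  have hmin := isLocalMin_of_deriv_deriv_pos hpos h1 hd.continuous.continuousAt
  have hEq : f =ᶠ[nhds x] fun _ => f x := by
    filter_upwards [hmin] with y hy
    exact le_antisymm (hm y) hy
  have h2 := hEq.deriv.deriv_eq
  simp at h2
  linarith

theorem aux_left (g : ℝ → ℝ) (g' t : ℝ) (ht : 0 < t) (hg : HasDerivAt g g' t)
    (hm : ∀ s ∈ Icc (0:ℝ) t, g s ≤ g t) : 0 ≤ g' := by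
  have h : IsLocalMaxOn g (Icc 0 t) t := by
    filter_upwards [self_mem_nhdsWithin] with s hs using hm s hs
  have hseg : segment ℝ t (t + (-t)) ⊆ Icc 0 t := by
    rw [add_neg_cancel, segment_symm, segment_eq_Icc ht.le]
  have := h.hasFDerivWithinAt_nonpos hg.hasFDerivAt.hasFDerivWithinAt
    (mem_posTangentConeAt_of_segment_subset hseg)
  simp at this
  nlinarith

theorem aux_le (ν T : ℝ) (hν : 0 < ν) (hT : 0 < T)
    (v w₁ w₂ : ℝ → ℝ → ℝ)
    -- regularity of the coefficient v : continuous on [0,T] × S¹ with continuous ∂ₓv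
    (hv_per : ∀ t, Function.Periodic (v t) 1)
    (hv_cont : ContinuousOn (fun p : ℝ × ℝ => v p.1 p.2) (Icc 0 T ×ˢ univ))
    (hv_x : ∀ t ∈ Icc (0:ℝ) T, Differentiable ℝ (v t))
    (hv_x_cont : ContinuousOn (fun p : ℝ × ℝ => deriv (v p.1) p.2) (Icc 0 T ×ˢ univ))
    -- regularity of w₁ : continuous with continuous ∂ₜw₁, ∂ₓw₁, ∂ₓ²w₁ on [0,T] × S¹
    (hw₁_per : ∀ t, Function.Periodic (w₁ t) 1)
    (hw₁_cont : ContinuousOn (fun p : ℝ × ℝ => w₁ p.1 p.2) (Icc 0 T ×ˢ univ))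
    (hw₁_t : ∀ x : ℝ, ∀ t ∈ Icc (0:ℝ) T, DifferentiableAt ℝ (fun s => w₁ s x) t)
    (hw₁_t_cont : ContinuousOn (fun p : ℝ × ℝ => deriv (fun s => w₁ s p.2) p.1)
      (Icc 0 T ×ˢ univ))
    (hw₁_x : ∀ t ∈ Icc (0:ℝ) T, Differentiable ℝ (w₁ t) ∧ Differentiable ℝ (deriv (w₁ t)))
    (hw₁_x_cont : ContinuousOn (fun p : ℝ × ℝ => deriv (w₁ p.1) p.2) (Icc 0 T ×ˢ univ))
    (hw₁_xx_cont : ContinuousOn (fun p : ℝ × ℝ => deriv (deriv (w₁ p.1)) p.2)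
      (Icc 0 T ×ˢ univ))
    -- regularity of w₂ : continuous with continuous ∂ₜw₂, ∂ₓw₂, ∂ₓ²w₂ on [0,T] × S¹
    (hw₂_per : ∀ t, Function.Periodic (w₂ t) 1)
    (hw₂_cont : ContinuousOn (fun p : ℝ × ℝ => w₂ p.1 p.2) (Icc 0 T ×ˢ univ))
    (hw₂_t : ∀ x : ℝ, ∀ t ∈ Icc (0:ℝ) T, DifferentiableAt ℝ (fun s => w₂ s x) t)
    (hw₂_t_cont : ContinuousOn (fun p : ℝ × ℝ => deriv (fun s => w₂ s p.2) p.1)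
      (Icc 0 T ×ˢ univ))
    (hw₂_x : ∀ t ∈ Icc (0:ℝ) T, Differentiable ℝ (w₂ t) ∧ Differentiable ℝ (deriv (w₂ t)))
    (hw₂_x_cont : ContinuousOn (fun p : ℝ × ℝ => deriv (w₂ p.1) p.2) (Icc 0 T ×ˢ univ))
    (hw₂_xx_cont : ContinuousOn (fun p : ℝ × ℝ => deriv (deriv (w₂ p.1)) p.2)
      (Icc 0 T ×ˢ univ))
    -- both satisfy the perturbed Burgers equation pointwise on [0,T] × S¹
    (hw₁_eq : ∀ t ∈ Icc (0:ℝ) T, ∀ x : ℝ,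
      deriv (fun s => w₁ s x) t - ν * deriv (deriv (w₁ t)) x
        + (1 / 2) * deriv (fun y => (w₁ t y + v t y) ^ 2) x = 0)
    (hw₂_eq : ∀ t ∈ Icc (0:ℝ) T, ∀ x : ℝ,
      deriv (fun s => w₂ s x) t - ν * deriv (deriv (w₂ t)) x
        + (1 / 2) * deriv (fun y => (w₂ t y + v t y) ^ 2) x = 0)
    -- same initial condition
    (h0 : ∀ x : ℝ, w₁ 0 x = w₂ 0 x) :
    ∀ t ∈ Icc (0:ℝ) T, ∀ x : ℝ, w₁ t x ≤ w₂ t x := by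
  have hK : IsCompact (Icc (0:ℝ) T ×ˢ Icc (0:ℝ) 1) := isCompact_Icc.prod isCompact_Icc
  have hsub : Icc (0:ℝ) T ×ˢ Icc (0:ℝ) 1 ⊆ Icc (0:ℝ) T ×ˢ (univ : Set ℝ) :=
    prod_mono le_rfl (subset_univ _)
  obtain ⟨M, hM⟩ := hK.exists_bound_of_continuousOn ((hw₁_x_cont.add hv_x_cont).mono hsub)
  let z : ℝ × ℝ → ℝ := fun p => Real.exp (-(M + 1) * p.1) * (w₁ p.1 p.2 - w₂ p.1 p.2)
  have hz : ContinuousOn z (Icc (0:ℝ) T ×ˢ Icc (0:ℝ) 1) := by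
    apply ContinuousOn.mul
    · fun_prop
    · exact (hw₁_cont.sub hw₂_cont).mono hsub
  obtain ⟨⟨t₀, x₀⟩, hp, hmax⟩ := hK.exists_isMaxOn
    ⟨(0, 0), ⟨le_rfl, hT.le⟩, ⟨le_rfl, zero_le_one⟩⟩ hz
  obtain ⟨ht₀, hx₀⟩ := hp
  simp only at ht₀ hx₀
  have hmax' : ∀ t ∈ Icc (0:ℝ) T, ∀ x, z (t, x) ≤ z (t₀, x₀) := by
    intro t ht x
    have hper : Function.Periodic (fun x => z (t, x)) 1 := by
      intro y
      simp only [z, hw₁_per t y, hw₂_per t y]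
    obtain ⟨y, hy, hxy⟩ := hper.exists_mem_Ico₀ one_pos x
    rw [hxy]
    exact hmax (show (t, y) ∈ _ from ⟨ht, Ico_subset_Icc_self hy⟩)
  suffices hle : z (t₀, x₀) ≤ 0 by
    intro t ht x
    have h := (hmax' t ht x).trans hle
    have := nonpos_of_mul_nonpos_right h (Real.exp_pos _)
    linarith
  by_contra hpos
  push Not at hpos
  have hu : 0 < w₁ t₀ x₀ - w₂ t₀ x₀ := (mul_pos_iff_of_pos_left (Real.exp_pos _)).1 hpos
  have ht0 : 0 < t₀ := by
    rcases ht₀.1.eq_or_lt with h | h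
    · rw [← h, h0 x₀] at hu
      simp at hu
    · exact h
  obtain ⟨d1, d1'⟩ := hw₁_x t₀ ht₀
  obtain ⟨d2, d2'⟩ := hw₂_x t₀ ht₀
  have dv := hv_x t₀ ht₀
  obtain ⟨hx1, hx2⟩ := aux_second (fun x => w₁ t₀ x - w₂ t₀ x) x₀ (d1.sub d2) (by
    intro y
    exact le_of_mul_le_mul_left (hmax' t₀ ht₀ y) (Real.exp_pos _))
  have e1 : deriv (fun x => w₁ t₀ x - w₂ t₀ x) = fun x => deriv (w₁ t₀) x - deriv (w₂ t₀) x := by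
    funext x
    exact deriv_fun_sub (d1 x) (d2 x)
  rw [e1] at hx1 hx2
  rw [deriv_fun_sub (d1' x₀) (d2' x₀)] at hx2
  have q1 := hw₁_eq t₀ ht₀ x₀
  have q2 := hw₂_eq t₀ ht₀ x₀
  have r1 := (((d1 x₀).hasDerivAt.add (dv x₀).hasDerivAt).pow 2).deriv
  have r2 := (((d2 x₀).hasDerivAt.add (dv x₀).hasDerivAt).pow 2).deriv
  have r1' : deriv (fun y => (w₁ t₀ y + v t₀ y) ^ 2) x₀
      = 2 * (w₁ t₀ x₀ + v t₀ x₀) * (deriv (w₁ t₀) x₀ + deriv (v t₀) x₀) := by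
    simp at r1
    exact r1
  have r2' : deriv (fun y => (w₂ t₀ y + v t₀ y) ^ 2) x₀
      = 2 * (w₂ t₀ x₀ + v t₀ x₀) * (deriv (w₂ t₀) x₀ + deriv (v t₀) x₀) := by
    simp at r2
    exact r2
  rw [r1'] at q1
  rw [r2'] at q2
  have hb := (abs_le.1 (hM (t₀, x₀) ⟨ht₀, hx₀⟩)).1
  change -M ≤ deriv (w₁ t₀) x₀ + deriv (v t₀) x₀ at hb
  have hE : HasDerivAt (fun s : ℝ => Real.exp (-(M + 1) * s))
      (Real.exp (-(M + 1) * t₀) * (-(M + 1))) t₀ := by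
    simpa using ((hasDerivAt_id t₀).const_mul (-(M + 1))).exp
  have hD := aux_left _ _ t₀ ht0
    (hE.mul ((hw₁_t x₀ t₀ ht₀).hasDerivAt.sub (hw₂_t x₀ t₀ ht₀).hasDerivAt))
    (fun s hs => hmax' s ⟨hs.1, hs.2.trans ht₀.2⟩ x₀)
  simp only [Pi.sub_apply] at hD
  have hD' : 0 ≤ (deriv (fun s => w₁ s x₀) t₀ - deriv (fun s => w₂ s x₀) t₀)
      - (M + 1) * (w₁ t₀ x₀ - w₂ t₀ x₀) := by
    refine (mul_nonneg_iff_of_pos_left (Real.exp_pos (-(M + 1) * t₀))).1 ?_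
    linarith
  have hx1' : deriv (w₂ t₀) x₀ = deriv (w₁ t₀) x₀ := by linarith
  rw [hx1'] at q2
  have k1 := mul_nonneg hν.le (neg_nonneg.2 hx2)
  have k2 := mul_nonneg hu.le (by linarith :
    0 ≤ M + (deriv (w₁ t₀) x₀ + deriv (v t₀) x₀))
  nlinarith

/-- Uniqueness (Étape 0 of Theorem 3.4 of the paper): two classical solutions on
`[0,T] × S¹` (S¹ = ℝ/ℤ, functions represented as 1-periodic in space) of the perturbed
Burgers equation `w_t − ν w_xx + (1/2)((w+v)²)_x = 0` with the same initial data
coincide. -/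
theorem stmt_3 (ν T : ℝ) (hν : 0 < ν) (hT : 0 < T)
    (v w₁ w₂ : ℝ → ℝ → ℝ)
    -- regularity of the coefficient v : continuous on [0,T] × S¹ with continuous ∂ₓv
    (hv_per : ∀ t, Function.Periodic (v t) 1)
    (hv_cont : ContinuousOn (fun p : ℝ × ℝ => v p.1 p.2) (Icc 0 T ×ˢ univ))
    (hv_x : ∀ t ∈ Icc (0:ℝ) T, Differentiable ℝ (v t))
    (hv_x_cont : ContinuousOn (fun p : ℝ × ℝ => deriv (v p.1) p.2) (Icc 0 T ×ˢ univ))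
    -- regularity of w₁ : continuous with continuous ∂ₜw₁, ∂ₓw₁, ∂ₓ²w₁ on [0,T] × S¹
    (hw₁_per : ∀ t, Function.Periodic (w₁ t) 1)
    (hw₁_cont : ContinuousOn (fun p : ℝ × ℝ => w₁ p.1 p.2) (Icc 0 T ×ˢ univ))
    (hw₁_t : ∀ x : ℝ, ∀ t ∈ Icc (0:ℝ) T, DifferentiableAt ℝ (fun s => w₁ s x) t)
    (hw₁_t_cont : ContinuousOn (fun p : ℝ × ℝ => deriv (fun s => w₁ s p.2) p.1)
      (Icc 0 T ×ˢ univ))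
    (hw₁_x : ∀ t ∈ Icc (0:ℝ) T, Differentiable ℝ (w₁ t) ∧ Differentiable ℝ (deriv (w₁ t)))
    (hw₁_x_cont : ContinuousOn (fun p : ℝ × ℝ => deriv (w₁ p.1) p.2) (Icc 0 T ×ˢ univ))
    (hw₁_xx_cont : ContinuousOn (fun p : ℝ × ℝ => deriv (deriv (w₁ p.1)) p.2)
      (Icc 0 T ×ˢ univ))
    -- regularity of w₂ : continuous with continuous ∂ₜw₂, ∂ₓw₂, ∂ₓ²w₂ on [0,T] × S¹
    (hw₂_per : ∀ t, Function.Periodic (w₂ t) 1)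
    (hw₂_cont : ContinuousOn (fun p : ℝ × ℝ => w₂ p.1 p.2) (Icc 0 T ×ˢ univ))
    (hw₂_t : ∀ x : ℝ, ∀ t ∈ Icc (0:ℝ) T, DifferentiableAt ℝ (fun s => w₂ s x) t)
    (hw₂_t_cont : ContinuousOn (fun p : ℝ × ℝ => deriv (fun s => w₂ s p.2) p.1)
      (Icc 0 T ×ˢ univ))
    (hw₂_x : ∀ t ∈ Icc (0:ℝ) T, Differentiable ℝ (w₂ t) ∧ Differentiable ℝ (deriv (w₂ t)))
    (hw₂_x_cont : ContinuousOn (fun p : ℝ × ℝ => deriv (w₂ p.1) p.2) (Icc 0 T ×ˢ univ))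
    (hw₂_xx_cont : ContinuousOn (fun p : ℝ × ℝ => deriv (deriv (w₂ p.1)) p.2)
      (Icc 0 T ×ˢ univ))
    -- both satisfy the perturbed Burgers equation pointwise on [0,T] × S¹
    (hw₁_eq : ∀ t ∈ Icc (0:ℝ) T, ∀ x : ℝ,
      deriv (fun s => w₁ s x) t - ν * deriv (deriv (w₁ t)) x
        + (1 / 2) * deriv (fun y => (w₁ t y + v t y) ^ 2) x = 0)
    (hw₂_eq : ∀ t ∈ Icc (0:ℝ) T, ∀ x : ℝ,
      deriv (fun s => w₂ s x) t - ν * deriv (deriv (w₂ t)) x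
        + (1 / 2) * deriv (fun y => (w₂ t y + v t y) ^ 2) x = 0)
    -- same initial condition
    (h0 : ∀ x : ℝ, w₁ 0 x = w₂ 0 x) :
    ∀ t ∈ Icc (0:ℝ) T, ∀ x : ℝ, w₁ t x = w₂ t x := by
  intro t ht x
  apply le_antisymm
  · exact aux_le ν T hν hT v w₁ w₂ hv_per hv_cont hv_x hv_x_cont hw₁_per hw₁_cont hw₁_t hw₁_t_cont
      hw₁_x hw₁_x_cont hw₁_xx_cont hw₂_per hw₂_cont hw₂_t hw₂_t_cont hw₂_x hw₂_x_cont hw₂_xx_cont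
      hw₁_eq hw₂_eq h0 t ht x
  · exact aux_le ν T hν hT v w₂ w₁ hv_per hv_cont hv_x hv_x_cont hw₂_per hw₂_cont hw₂_t hw₂_t_cont
      hw₂_x hw₂_x_cont hw₂_xx_cont hw₁_per hw₁_cont hw₁_t hw₁_t_cont hw₁_x hw₁_x_cont hw₁_xx_cont
      hw₂_eq hw₁_eq (fun x => (h0 x).symm) t ht x
end

section
/- Let ν > 0, T > 0, let u₀ : S¹ → ℝ be smooth with ∫_{S¹} u₀(x) dx = 0, and let η : [0,T] × S¹ → ℝ be smooth with ∫_{S¹} η(t,x) dx = 0 for every t. Then there exists exactly one function u : [0,T] × S¹ → ℝ which is continuous, has continuous derivatives ∂_t u, ∂_x u, ∂_x² u on [0,T] × S¹, satisfies pointwise u_t + u·u_x − ν·u_xx = η on [0,T] × S¹ and u(0,·) = u₀. Moreover, this solution satisfies ∫_{S¹} u(t,x) dx = 0 for all t ∈ [0,T]. -/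
open Set

/-- `u` is a classical solution of the periodic viscous Burgers equation
`u_t + u u_x − ν u_xx = η` on `[0,T] × S¹` (S¹ = ℝ/ℤ, functions 1-periodic in space),
with initial condition `u₀`: `u` is continuous with continuous derivatives
`∂ₜu`, `∂ₓu`, `∂ₓ²u` on `[0,T] × S¹` and satisfies the equation pointwise. -/
def IsClassicalBurgersSolution (ν T : ℝ) (η : ℝ → ℝ → ℝ) (u₀ : ℝ → ℝ)
    (u : ℝ → ℝ → ℝ) : Prop :=
  (∀ t ∈ Icc (0:ℝ) T, Function.Periodic (u t) 1) ∧
  ContinuousOn (fun p : ℝ × ℝ => u p.1 p.2) (Icc 0 T ×ˢ univ) ∧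
  (∀ x : ℝ, ∀ t ∈ Icc (0:ℝ) T, DifferentiableAt ℝ (fun s => u s x) t) ∧
  ContinuousOn (fun p : ℝ × ℝ => deriv (fun s => u s p.2) p.1) (Icc 0 T ×ˢ univ) ∧
  (∀ t ∈ Icc (0:ℝ) T, Differentiable ℝ (u t) ∧ Differentiable ℝ (deriv (u t))) ∧
  ContinuousOn (fun p : ℝ × ℝ => deriv (u p.1) p.2) (Icc 0 T ×ˢ univ) ∧
  ContinuousOn (fun p : ℝ × ℝ => deriv (deriv (u p.1)) p.2) (Icc 0 T ×ˢ univ) ∧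
  (∀ t ∈ Icc (0:ℝ) T, ∀ x : ℝ,
    deriv (fun s => u s x) t + u t x * deriv (u t) x - ν * deriv (deriv (u t)) x
      = η t x) ∧
  (∀ x : ℝ, u 0 x = u₀ x)


theorem bg_second (f : ℝ → ℝ) (hf : Differentiable ℝ f) (x : ℝ) (h : ∀ y, f x ≤ f y) :
    deriv f x = 0 ∧ 0 ≤ deriv (deriv f) x := by
  have hmin : IsLocalMin f x := Filter.Eventually.of_forall h
  refine ⟨hmin.deriv_eq_zero, ?_⟩
  by_contra hneg
  push Not at hneg
  have hmax := isLocalMax_of_deriv_deriv_neg hneg hmin.deriv_eq_zero hf.continuous.continuousAt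
  have hc : f =ᶠ[nhds x] fun _ => f x := by
    filter_upwards [hmax] with y hy using le_antisymm hy (h y)
  have h2 : deriv (deriv f) x = 0 := by
    rw [hc.deriv.deriv_eq]; simp
  linarith

theorem bg_maxp (ν T M : ℝ) (hν : 0 < ν) (hT : 0 < T) (w c : ℝ → ℝ → ℝ)
    (hper : ∀ t ∈ Icc (0:ℝ) T, Function.Periodic (w t) 1)
    (hcont : ContinuousOn (fun p : ℝ × ℝ => w p.1 p.2) (Icc 0 T ×ˢ univ))
    (hdt : ∀ x : ℝ, ∀ t ∈ Icc (0:ℝ) T, DifferentiableAt ℝ (fun s => w s x) t)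
    (hdx : ∀ t ∈ Icc (0:ℝ) T, Differentiable ℝ (w t))
    (hc : ∀ t ∈ Icc (0:ℝ) T, ∀ x, c t x ≤ M)
    (heq : ∀ t ∈ Icc (0:ℝ) T, ∀ x, deriv (w t) x = 0 →
      ν * deriv (deriv (w t)) x + c t x * w t x ≤ deriv (fun s => w s x) t)
    (h0 : ∀ x, 0 ≤ w 0 x) : ∀ t ∈ Icc (0:ℝ) T, ∀ x, 0 ≤ w t x := by
  have hK : IsCompact (Icc (0:ℝ) T ×ˢ Icc (0:ℝ) 1) := isCompact_Icc.prod isCompact_Icc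
  have hz : ContinuousOn (fun p : ℝ × ℝ => Real.exp (-(M+1)*p.1) * w p.1 p.2)
      (Icc (0:ℝ) T ×ˢ Icc (0:ℝ) 1) := by
    refine ContinuousOn.mul (by fun_prop) (hcont.mono ?_)
    exact prod_mono le_rfl (subset_univ _)
  obtain ⟨⟨t0, x0⟩, hm, hmin⟩ := hK.exists_isMinOn
    ⟨(0,0), by simp [hT.le]⟩ hz
  have ht0 : t0 ∈ Icc (0:ℝ) T := hm.1
  have hall : ∀ t ∈ Icc (0:ℝ) T, ∀ x, Real.exp (-(M+1)*t0) * w t0 x0 ≤ Real.exp (-(M+1)*t) * w t x := by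
    intro t ht x
    obtain ⟨y, hy, hxy⟩ := (hper t ht).exists_mem_Ico₀ one_pos x
    rw [hxy]
    exact hmin (show (t,y) ∈ _ from ⟨ht, ⟨hy.1, hy.2.le⟩⟩)
  suffices hs : 0 ≤ w t0 x0 by
    intro t ht x
    have h1 := hall t ht x
    have h2 : 0 ≤ Real.exp (-(M+1)*t) * w t x := le_trans (by positivity) h1
    exact nonneg_of_mul_nonneg_right h2 (Real.exp_pos _)
  by_contra hneg
  push Not at hneg
  have ht0pos : 0 < t0 := by
    rcases ht0.1.lt_or_eq with h | h
    · exact h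
    · exfalso; have := h0 x0; rw [← h] at hneg; linarith
  have hxmin : ∀ y, w t0 x0 ≤ w t0 y := fun y =>
    le_of_mul_le_mul_left (hall t0 ht0 y) (Real.exp_pos _)
  obtain ⟨hd1, hd2⟩ := bg_second (w t0) (hdx t0 ht0) x0 hxmin
  have hE := heq t0 ht0 x0 hd1
  have hder : HasDerivAt (fun s => Real.exp (-(M+1)*s) * w s x0)
      (Real.exp (-(M+1)*t0) * (-(M+1)) * w t0 x0 + Real.exp (-(M+1)*t0) * deriv (fun s => w s x0) t0) t0 := by
    have h1 : HasDerivAt (fun s => Real.exp (-(M+1)*s)) (Real.exp (-(M+1)*t0) * (-(M+1))) t0 := by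
      have := ((hasDerivAt_id t0).const_mul (-(M+1))).exp
      simpa using this
    exact h1.mul (hdt x0 t0 ht0).hasDerivAt
  have hcc := hc t0 ht0 x0
  have hpos : 0 < Real.exp (-(M+1)*t0) * (-(M+1)) * w t0 x0 + Real.exp (-(M+1)*t0) * deriv (fun s => w s x0) t0 := by
    have : 0 < -(M+1) * w t0 x0 + deriv (fun s => w s x0) t0 := by
      have : 0 ≤ ν * deriv (deriv (w t0)) x0 := by positivity
      nlinarith
    have := mul_pos (Real.exp_pos (-(M+1)*t0)) this
    linarith
  -- slope is nonpositive from the left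
  have hlt := hder.hasDerivWithinAt (s := Iio t0)
  have hev := (hasDerivWithinAt_iff_tendsto_slope' (by simp)).1 hlt |>.eventually (lt_mem_nhds hpos)
  have hev2 : ∀ᶠ s in nhdsWithin t0 (Iio t0), s ∈ Ioo 0 t0 := Ioo_mem_nhdsLT ht0pos
  obtain ⟨s, hs1, hs2⟩ := (hev.and hev2).exists
  have h3 := hall s ⟨hs2.1.le, hs2.2.le.trans ht0.2⟩ x0
  rw [slope_def_field] at hs1
  have : (Real.exp (-(M+1)*s) * w s x0 - Real.exp (-(M+1)*t0) * w t0 x0) / (s - t0) ≤ 0 :=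
    div_nonpos_of_nonneg_of_nonpos (by linarith) (by linarith [hs2.2])
  linarith

theorem bg_uniq (ν T : ℝ) (hν : 0 < ν) (hT : 0 < T) (η : ℝ → ℝ → ℝ) (u₀ : ℝ → ℝ) (u v : ℝ → ℝ → ℝ)
    (hu : IsClassicalBurgersSolution ν T η u₀ u) (hv : IsClassicalBurgersSolution ν T η u₀ v) :
    ∀ t ∈ Icc (0:ℝ) T, ∀ x, 0 ≤ u t x - v t x := by
  obtain ⟨up, uc, udt, -, udx, -, -, ue, u0⟩ := hu
  obtain ⟨vp, vc, vdt, -, vdx, vxc, -, ve, v0⟩ := hv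
  have hK : IsCompact (Icc (0:ℝ) T ×ˢ Icc (0:ℝ) 1) := isCompact_Icc.prod isCompact_Icc
  obtain ⟨M, hM⟩ := hK.exists_bound_of_continuousOn
    (vxc.mono (prod_mono le_rfl (subset_univ (Icc (0:ℝ) 1))))
  have hdper : ∀ t ∈ Icc (0:ℝ) T, Function.Periodic (deriv (v t)) 1 := by
    intro t ht x
    rw [← deriv_comp_add_const]
    congr 1
    funext y
    exact vp t ht y
  have hb : ∀ t ∈ Icc (0:ℝ) T, ∀ x, - deriv (v t) x ≤ M := by
    intro t ht x
    obtain ⟨y, hy, hxy⟩ := (hdper t ht).exists_mem_Ico₀ one_pos x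
    rw [hxy]
    have := hM (t, y) ⟨ht, ⟨hy.1, hy.2.le⟩⟩
    exact (neg_le_abs _).trans this
  have hdw : ∀ t ∈ Icc (0:ℝ) T, deriv (fun x => u t x - v t x) = fun x => deriv (u t) x - deriv (v t) x := by
    intro t ht
    funext x
    exact deriv_fun_sub ((udx t ht).1 x) ((vdx t ht).1 x)
  refine bg_maxp ν T M hν hT (fun t x => u t x - v t x) (fun t x => - deriv (v t) x) ?_ ?_ ?_ ?_ hb ?_ ?_
  · intro t ht x
    simp only [up t ht x, vp t ht x]
  · exact uc.sub vc
  · exact fun x t ht => (udt x t ht).sub (vdt x t ht)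
  · exact fun t ht => (udx t ht).1.sub (vdx t ht).1
  · intro t ht x h
    simp only [hdw t ht] at h ⊢
    rw [deriv_fun_sub ((udx t ht).2 x) ((vdx t ht).2 x), deriv_fun_sub (udt x t ht) (vdt x t ht)]
    have h1 := ue t ht x
    have h2 := ve t ht x
    have h3 : deriv (u t) x = deriv (v t) x := by linarith
    rw [h3] at h1
    linarith
  · intro x; simp [u0, v0]

theorem bg_colehopf (ν T : ℝ) (hν : 0 < ν) (η W : ℝ → ℝ → ℝ) (u₀ : ℝ → ℝ)
    (p0 p1 p2 p3 q0 q1 : ℝ → ℝ → ℝ)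
    (hp : ∀ t, Function.Periodic (p0 t) 1)
    (hp1 : ∀ t, Function.Periodic (p1 t) 1)
    (c0 : Continuous (fun p : ℝ × ℝ => p0 p.1 p.2))
    (c1 : Continuous (fun p : ℝ × ℝ => p1 p.1 p.2))
    (c2 : Continuous (fun p : ℝ × ℝ => p2 p.1 p.2))
    (c3 : Continuous (fun p : ℝ × ℝ => p3 p.1 p.2))
    (cη : ContinuousOn (fun p : ℝ × ℝ => η p.1 p.2) (Icc 0 T ×ˢ univ))
    (d0 : ∀ t x, HasDerivAt (p0 t) (p1 t x) x)
    (d1 : ∀ t x, HasDerivAt (p1 t) (p2 t x) x)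
    (d2 : ∀ t x, HasDerivAt (p2 t) (p3 t x) x)
    (e0 : ∀ t ∈ Icc (0:ℝ) T, ∀ x, q0 t x = p0 t x)
    (e1 : ∀ t ∈ Icc (0:ℝ) T, ∀ x, q1 t x = p1 t x)
    (t0 : ∀ t ∈ Icc (0:ℝ) T, ∀ x, HasDerivAt (fun s => q0 s x) (ν * p2 t x + W t x * p0 t x) t)
    (t1 : ∀ t ∈ Icc (0:ℝ) T, ∀ x, HasDerivAt (fun s => q1 s x)
      (ν * p3 t x + (-(1/(2*ν)) * η t x) * p0 t x + W t x * p1 t x) t)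
    (hpos : ∀ t ∈ Icc (0:ℝ) T, ∀ x, 0 < p0 t x)
    (hin : ∀ x, -2 * ν * (p1 0 x / p0 0 x) = u₀ x) (hT : 0 < T) :
    IsClassicalBurgersSolution ν T η u₀ (fun t x => -2 * ν * (q1 t x / q0 t x)) ∧
      ∀ t ∈ Icc (0:ℝ) T, ∫ x in (0:ℝ)..1, (-2 * ν * (q1 t x / q0 t x)) = 0 := by
  have hu : ∀ t ∈ Icc (0:ℝ) T, (fun x => -2 * ν * (q1 t x / q0 t x)) = fun x => -2 * ν * (p1 t x / p0 t x) := by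
    intro t ht; funext x; rw [e0 t ht, e1 t ht]
  have hux : ∀ t ∈ Icc (0:ℝ) T, ∀ x, HasDerivAt (fun x => -2 * ν * (p1 t x / p0 t x))
      (-2 * ν * ((p2 t x * p0 t x - p1 t x * p1 t x) / p0 t x ^ 2)) x := fun t ht x =>
    ((d1 t x).div (d0 t x) (hpos t ht x).ne').const_mul _
  have hux' : ∀ t ∈ Icc (0:ℝ) T, deriv (fun x => -2 * ν * (p1 t x / p0 t x)) =
      fun x => -2 * ν * ((p2 t x * p0 t x - p1 t x * p1 t x) / p0 t x ^ 2) := fun t ht =>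
    funext fun x => (hux t ht x).deriv
  have huxx : ∀ t ∈ Icc (0:ℝ) T, ∀ x, HasDerivAt (fun x => -2 * ν * ((p2 t x * p0 t x - p1 t x * p1 t x) / p0 t x ^ 2))
      (-2 * ν * ((((p3 t x * p0 t x + p2 t x * p1 t x) - (p2 t x * p1 t x + p1 t x * p2 t x)) * p0 t x ^ 2 - 
        (p2 t x * p0 t x - p1 t x * p1 t x) * (2 * p0 t x * p1 t x)) / (p0 t x ^ 2)^2)) x := by
    intro t ht x
    have h1 := ((d2 t x).mul (d0 t x)).sub ((d1 t x).mul (d1 t x))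
    have h2 := (d0 t x).pow 2
    have h3 := (h1.div h2 (pow_pos (hpos t ht x) 2).ne').const_mul (-2*ν)
    refine HasDerivAt.congr_deriv h3 ?_
    simp
  have hut : ∀ t ∈ Icc (0:ℝ) T, ∀ x, HasDerivAt (fun s => -2 * ν * (q1 s x / q0 s x))
      (-2 * ν * (((ν * p3 t x + (-(1/(2*ν)) * η t x) * p0 t x + W t x * p1 t x) * p0 t x - 
        p1 t x * (ν * p2 t x + W t x * p0 t x)) / p0 t x ^ 2)) t := by
    intro t ht x
    have h := ((t1 t ht x).div (t0 t ht x) (by rw [e0 t ht]; exact (hpos t ht x).ne')).const_mul (-2*ν)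
    rw [e0 t ht, e1 t ht] at h
    exact h
  have hEQ : ∀ t ∈ Icc (0:ℝ) T, ∀ x, deriv (fun s => -2 * ν * (q1 s x / q0 s x)) t
      = η t x - (-2 * ν * (p1 t x / p0 t x)) * (-2 * ν * ((p2 t x * p0 t x - p1 t x * p1 t x) / p0 t x ^ 2))
      + ν * (-2 * ν * ((((p3 t x * p0 t x + p2 t x * p1 t x) - (p2 t x * p1 t x + p1 t x * p2 t x)) * p0 t x ^ 2 - 
        (p2 t x * p0 t x - p1 t x * p1 t x) * (2 * p0 t x * p1 t x)) / (p0 t x ^ 2)^2)) := by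
    intro t ht x
    rw [(hut t ht x).deriv]
    have := (hpos t ht x).ne'
    field_simp
    ring
  have hne : ∀ p ∈ (Icc (0:ℝ) T ×ˢ (univ : Set ℝ)), p0 p.1 p.2 ≠ 0 := fun p hp => (hpos p.1 hp.1 p.2).ne'
  have C0 := c0.continuousOn (s := (Icc (0:ℝ) T ×ˢ (univ : Set ℝ)))
  have C1 := c1.continuousOn (s := (Icc (0:ℝ) T ×ˢ (univ : Set ℝ)))
  have C2 := c2.continuousOn (s := (Icc (0:ℝ) T ×ˢ (univ : Set ℝ)))
  have C3 := c3.continuousOn (s := (Icc (0:ℝ) T ×ˢ (univ : Set ℝ)))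
  have K0 : ContinuousOn (fun p : ℝ × ℝ => -2 * ν * (p1 p.1 p.2 / p0 p.1 p.2)) (Icc 0 T ×ˢ univ) :=
    continuousOn_const.mul (C1.div C0 hne)
  have K1 : ContinuousOn (fun p : ℝ × ℝ => -2 * ν * ((p2 p.1 p.2 * p0 p.1 p.2 - p1 p.1 p.2 * p1 p.1 p.2) / p0 p.1 p.2 ^ 2)) (Icc 0 T ×ˢ univ) :=
    continuousOn_const.mul (((C2.mul C0).sub (C1.mul C1)).div (C0.pow 2) (fun p hp => pow_ne_zero 2 (hne p hp)))
  have K2 : ContinuousOn (fun p : ℝ × ℝ => (-2 * ν * ((((p3 p.1 p.2 * p0 p.1 p.2 + p2 p.1 p.2 * p1 p.1 p.2) - (p2 p.1 p.2 * p1 p.1 p.2 + p1 p.1 p.2 * p2 p.1 p.2)) * p0 p.1 p.2 ^ 2 - 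
        (p2 p.1 p.2 * p0 p.1 p.2 - p1 p.1 p.2 * p1 p.1 p.2) * (2 * p0 p.1 p.2 * p1 p.1 p.2)) / (p0 p.1 p.2 ^ 2)^2))) (Icc 0 T ×ˢ univ) := by
    refine continuousOn_const.mul (ContinuousOn.div ?_ ((C0.pow 2).pow 2) (fun p hp => pow_ne_zero 2 (pow_ne_zero 2 (hne p hp))))
    fun_prop
  refine ⟨⟨?_, ?_, ?_, ?_, ?_, ?_, ?_, ?_, ?_⟩, ?_⟩
  · intro t ht x
    simp only [e0 t ht, e1 t ht, hp t x, hp1 t x]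
  · refine K0.congr ?_
    intro p hp
    simp only [e0 p.1 hp.1, e1 p.1 hp.1]
  · exact fun x t ht => (hut t ht x).differentiableAt
  · refine ((cη.sub (K0.mul K1)).add ((continuousOn_const (c := ν)).mul K2)).congr ?_
    intro p hp
    exact hEQ p.1 hp.1 p.2
  · intro t ht
    simp only [hu t ht, hux' t ht]
    exact ⟨fun x => (hux t ht x).differentiableAt, fun x => (huxx t ht x).differentiableAt⟩
  · refine K1.congr ?_
    intro p hp
    simp only [hu p.1 hp.1, hux' p.1 hp.1]
  · refine K2.congr ?_
    intro p hp
    simp only [hu p.1 hp.1, hux' p.1 hp.1, (huxx p.1 hp.1 p.2).deriv]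
  · intro t ht x
    simp only [hu t ht, hux' t ht, (huxx t ht x).deriv, hEQ t ht x, e0 t ht, e1 t ht]
    ring
  · intro x
    have h0 : (0:ℝ) ∈ Icc (0:ℝ) T := ⟨le_rfl, hT.le⟩
    simp only [e0 0 h0, e1 0 h0, hin]
  · intro t ht
    simp only [hu t ht]
    have hd : ∀ x ∈ uIcc (0:ℝ) 1, HasDerivAt (fun x => -2 * ν * Real.log (p0 t x)) (-2 * ν * (p1 t x / p0 t x)) x :=
      fun x _ => ((d0 t x).log (hpos t ht x).ne').const_mul _
    rw [intervalIntegral.integral_eq_sub_of_hasDerivAt hd]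
    · have := hp t 0
      rw [zero_add] at this
      rw [this]; ring
    · apply Continuous.intervalIntegrable
      have h1 : Continuous (p1 t) := c1.comp (Continuous.prodMk_right t)
      have h0 : Continuous (p0 t) := c0.comp (Continuous.prodMk_right t)
      exact continuous_const.mul (h1.div h0 fun x => (hpos t ht x).ne')


theorem bg_int_bound (μ τ D : ℝ) (hμ : 0 < μ) (hτ : 0 ≤ τ) (g : ℝ → ℂ) (hD : 0 ≤ D)
    (hg : ∀ s, ‖g s‖ ≤ D) :
    ‖∫ s in (0:ℝ)..τ, Real.exp (-μ * (τ - s)) • g s‖ ≤ D / μ := by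
  have hder : ∀ s ∈ uIcc 0 τ, HasDerivAt (fun s => D / μ * Real.exp (-μ * (τ - s)))
      (Real.exp (-μ * (τ - s)) * D) s := by
    intro s _
    have h1 : HasDerivAt (fun s => -μ * (τ - s)) μ s := by
      have := ((hasDerivAt_id s).const_sub τ).const_mul (-μ)
      simpa using this
    refine (h1.exp.const_mul (D / μ)).congr_deriv ?_
    field_simp
  have hint : IntervalIntegrable (fun s => Real.exp (-μ * (τ - s)) * D) MeasureTheory.volume 0 τ :=
    Continuous.intervalIntegrable (by fun_prop) _ _
  have h1 : ‖∫ s in (0:ℝ)..τ, Real.exp (-μ * (τ - s)) • g s‖ ≤ ∫ s in (0:ℝ)..τ, Real.exp (-μ * (τ - s)) * D := by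
    refine intervalIntegral.norm_integral_le_of_norm_le hτ ?_ hint
    refine Filter.Eventually.of_forall fun s _ => ?_
    rw [norm_smul, Real.norm_of_nonneg (Real.exp_pos _).le]
    exact mul_le_mul_of_nonneg_left (hg s) (Real.exp_pos _).le
  rw [intervalIntegral.integral_eq_sub_of_hasDerivAt hder hint] at h1
  refine h1.trans ?_
  have : 0 ≤ D / μ * Real.exp (-μ * (τ - 0)) := by positivity
  simp only [sub_self, mul_zero, Real.exp_zero, mul_one]
  linarith

theorem bg_conv (w v : ℤ → ℝ) (hw1 : ∀ k, 1 ≤ w k) (hws : ∀ j l, w (j + l) ≤ w j * w l)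
    (hS : Summable fun l => w l * v l) (V : ℤ → ℂ) (hV : ∀ l, ‖V l‖ ≤ v l)
    (z : ℤ → ℂ) (Z : ℝ) (hz : ∀ j, ‖z j‖ ≤ Z) (k : ℤ) :
    (Summable fun j => (w k / w j) • (V (k - j) * z j)) ∧
    ‖∑' j, (w k / w j) • (V (k - j) * z j)‖ ≤ (∑' l, w l * v l) * Z ∧
    ∀ j, ‖(w k / w j) • (V (k - j) * z j)‖ ≤ w (k - j) * v (k - j) * Z := by
  have hb : ∀ j, ‖(w k / w j) • (V (k - j) * z j)‖ ≤ w (k - j) * v (k - j) * Z := by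
    intro j
    have hwj := hw1 j
    have hwk := hw1 k
    have h1 : w k / w j ≤ w (k - j) := by
      rw [div_le_iff₀ (by linarith)]
      simpa using hws (k - j) j
    rw [norm_smul, norm_mul, Real.norm_of_nonneg (by positivity), mul_assoc]
    refine mul_le_mul h1 (mul_le_mul (hV _) (hz _) (norm_nonneg _) ((norm_nonneg _).trans (hV _))) (by positivity) ?_
    linarith [hw1 (k - j)]
  have hs : HasSum (fun j => w (k - j) * v (k - j) * Z) ((∑' l, w l * v l) * Z) := by
    refine HasSum.mul_right Z ?_
    exact (Equiv.subLeft k).hasSum_iff.2 hS.hasSum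
  exact ⟨Summable.of_norm_bounded hs.summable hb, tsum_of_norm_bounded hs hb, hb⟩

theorem bg_ode (T C : ℝ) (hT : 0 < T) (hC0 : 0 < C) (w v : ℤ → ℝ) (hw1 : ∀ k, 1 ≤ w k)
    (hws : ∀ j l, w (j + l) ≤ w j * w l)
    (V : ℤ → ℝ → ℂ) (hVc : ∀ l, Continuous (V l)) (hV : ∀ l t, ‖V l t‖ ≤ v l)
    (hS : Summable fun l => w l * v l) (hC : ∑' l, w l * v l < C)
    (μ : ℤ → ℝ) (hμ : ∀ k, C ≤ μ k) (b : ℤ → ℂ) (B : ℝ) (hb : ∀ k, w k * ‖b k‖ ≤ B) :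
    ∃ (α a : ℤ → ℝ → ℂ) (A : ℝ), (∀ k, Continuous (α k)) ∧ (∀ k t, w k * ‖α k t‖ ≤ A) ∧
      (∀ k, α k 0 = b k) ∧ (∀ k, ∀ t ∈ Icc (0:ℝ) T, a k t = α k t) ∧
      ∀ k t, HasDerivAt (a k) (-(μ k) • α k t + ∑' j, V (k - j) t * α j t) t := by
  have hw0 : ∀ k, 0 < w k := fun k => by linarith [hw1 k]
  have hμ0 : ∀ k, 0 < μ k := fun k => by linarith [hμ k]
  set S := ∑' l, w l * v l with hSdef
  have hS0 : 0 ≤ S := tsum_nonneg fun l => mul_nonneg (hw0 l).le ((norm_nonneg _).trans (hV l 0))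
  let clip : ℝ → ℝ := fun t => max 0 (min t T)
  have hclipc : Continuous clip := by fun_prop
  have hclip0 : ∀ t, 0 ≤ clip t := fun t => le_max_left _ _
  have hclip : ∀ t ∈ Icc (0:ℝ) T, clip t = t := fun t ht => by
    simp only [clip]; rw [min_eq_left ht.2, max_eq_right ht.1]
  let E := BoundedContinuousFunction (ℤ × ℝ) ℂ
  let G : E → ℤ → ℝ → ℂ := fun β k s => ∑' j, (w k / w j) • (V (k - j) s * β (j, s))
  have hGb : ∀ β : E, ∀ k s, ‖G β k s‖ ≤ S * ‖β‖ := fun β k s =>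
    (bg_conv w v hw1 hws hS (fun l => V l s) (fun l => hV l s) (fun j => β (j, s)) ‖β‖
      (fun j => β.norm_coe_le_norm _) k).2.1
  have hGc : ∀ β : E, ∀ k, Continuous (G β k) := by
    intro β k
    refine continuous_tsum (u := fun j => w (k - j) * v (k - j) * ‖β‖) ?_ ?_ ?_
    · intro j
      have h1 : Continuous fun s => β (j, s) := β.continuous.comp (Continuous.prodMk_right j)
      exact ((hVc (k - j)).mul h1).const_smul (w k / w j)
    · exact ((Equiv.subLeft k).summable_iff.2 hS).mul_right _
    · intro j s
      exact (bg_conv w v hw1 hws hS (fun l => V l s) (fun l => hV l s) (fun j => β (j, s)) ‖β‖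
        (fun j => β.norm_coe_le_norm _) k).2.2 j
  have hGsub : ∀ β β' : E, ∀ k s, G β k s - G β' k s = G (β - β') k s := by
    intro β β' k s
    have s1 := (bg_conv w v hw1 hws hS (fun l => V l s) (fun l => hV l s) (fun j => β (j, s)) ‖β‖
      (fun j => β.norm_coe_le_norm _) k).1
    have s2 := (bg_conv w v hw1 hws hS (fun l => V l s) (fun l => hV l s) (fun j => β' (j, s)) ‖β'‖
      (fun j => β'.norm_coe_le_norm _) k).1
    simp only [G]
    rw [← s1.tsum_sub s2]
    congr 1; funext j
    rw [← smul_sub, ← mul_sub]; rfl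
  let Φ0 : E → ℤ × ℝ → ℂ := fun β p => (w p.1 * Real.exp (-μ p.1 * clip p.2)) • b p.1 +
    ∫ s in (0:ℝ)..clip p.2, Real.exp (-μ p.1 * (clip p.2 - s)) • G β p.1 s
  have hΦc : ∀ β, Continuous (Φ0 β) := by
    intro β
    rw [continuous_prod_of_discrete_left]
    intro k
    have h1 : Continuous fun t => (w k * Real.exp (-μ k * clip t)) • b k := by fun_prop
    refine h1.add ?_
    refine intervalIntegral.continuous_parametric_intervalIntegral_of_continuous ?_ hclipc
    have := hGc β k
    simp only [Function.uncurry_def]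
    fun_prop
  have hΦb : ∀ β, ∀ p, ‖Φ0 β p‖ ≤ B + S * ‖β‖ / C := by
    rintro β ⟨k, t⟩
    refine (norm_add_le _ _).trans (add_le_add ?_ ?_)
    · rw [norm_smul, Real.norm_of_nonneg (mul_nonneg (hw0 k).le (Real.exp_pos _).le)]
      refine le_trans ?_ (hb k)
      have : Real.exp (-μ k * clip t) ≤ 1 := by
        rw [Real.exp_le_one_iff]
        have := mul_nonneg (hμ0 k).le (hclip0 t)
        linarith
      have h2 : w k * Real.exp (-μ k * clip t) ≤ w k := by nlinarith [hw0 k]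
      exact mul_le_mul_of_nonneg_right h2 (norm_nonneg _)
    · refine (bg_int_bound (μ k) (clip t) (S * ‖β‖) (hμ0 k) (hclip0 t) _ (by positivity) (hGb β k)).trans ?_
      exact div_le_div_of_nonneg_left (by positivity) hC0 (hμ k)
  let Φ : E → E := fun β => BoundedContinuousFunction.ofNormedAddCommGroup (Φ0 β) (hΦc β) _ (hΦb β)
  have hcontr : ContractingWith (Real.toNNReal (S / C)) Φ := by
    refine ⟨?_, ?_⟩
    · exact Real.toNNReal_lt_one.2 ((div_lt_one hC0).2 hC)
    · refine LipschitzWith.of_dist_le_mul fun β β' => ?_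
      have hnn : 0 ≤ S / C * dist β β' := by positivity
      rw [Real.coe_toNNReal _ (by positivity)]
      refine (BoundedContinuousFunction.dist_le hnn).2 ?_
      rintro ⟨k, t⟩
      rw [dist_eq_norm]
      have hint : ∀ β : E, IntervalIntegrable (fun s => Real.exp (-μ k * (clip t - s)) • G β k s)
          MeasureTheory.volume 0 (clip t) := by
        intro β
        have := hGc β k
        exact Continuous.intervalIntegrable (by fun_prop) _ _
      have : Φ β (k, t) - Φ β' (k, t) =
          ∫ s in (0:ℝ)..clip t, Real.exp (-μ k * (clip t - s)) • G (β - β') k s := by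
        change Φ0 β (k, t) - Φ0 β' (k, t) = _
        simp only [Φ0]
        rw [add_sub_add_left_eq_sub, ← intervalIntegral.integral_sub (hint β) (hint β')]
        congr 1; funext s
        rw [← smul_sub, hGsub]
      rw [this]
      refine (bg_int_bound (μ k) (clip t) (S * ‖β - β'‖) (hμ0 k) (hclip0 t) _ (by positivity) (hGb (β - β') k)).trans ?_
      rw [dist_eq_norm, div_mul_eq_mul_div]
      exact div_le_div_of_nonneg_left (by positivity) hC0 (hμ k)
  obtain ⟨β, hβ⟩ : ∃ β, Φ β = β := ⟨_, hcontr.fixedPoint_isFixedPt⟩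
  have hβ' : ∀ k t, β (k, t) = Φ0 β (k, t) := fun k t => by
    conv_lhs => rw [← hβ]
    rfl
  have hαc : ∀ k, Continuous fun t => (w k)⁻¹ • β (k, t) := fun k => by
    have h1 : Continuous fun s => β (k, s) := β.continuous.comp (Continuous.prodMk_right k)
    exact h1.const_smul (w k)⁻¹
  have hF : ∀ k t, ∑' j, V (k - j) t * ((w j)⁻¹ • β (j, t)) = (w k)⁻¹ • G β k t := by
    intro k t
    simp only [G]
    rw [← tsum_const_smul'']
    congr 1; funext j
    rw [smul_smul, mul_smul_comm]
    congr 1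
    have := (hw0 k).ne'
    field_simp
  have hFc : ∀ k, Continuous fun t => ∑' j, V (k - j) t * ((w j)⁻¹ • β (j, t)) := by
    intro k
    simp only [hF]
    exact (hGc β k).const_smul (w k)⁻¹
  refine ⟨fun k t => (w k)⁻¹ • β (k, t), fun k t => b k + ∫ s in (0:ℝ)..t,
    (-(μ k) • ((w k)⁻¹ • β (k, s)) + ∑' j, V (k - j) s * ((w j)⁻¹ • β (j, s))), ‖β‖, hαc, ?_, ?_, ?_, ?_⟩
  · intro k t
    rw [norm_smul, norm_inv, Real.norm_of_nonneg (hw0 k).le, ← mul_assoc, mul_inv_cancel₀ (hw0 k).ne', one_mul]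
    exact β.norm_coe_le_norm _
  · intro k
    have h0 : clip 0 = 0 := hclip 0 ⟨le_rfl, hT.le⟩
    simp only [hβ', Φ0, h0, intervalIntegral.integral_same, mul_zero, Real.exp_zero, mul_one, add_zero]
    rw [smul_smul, inv_mul_cancel₀ (hw0 k).ne', one_smul]
  · intro k
    set F := fun t => ∑' j, V (k - j) t * ((w j)⁻¹ • β (j, t)) with hFdef
    let y : ℝ → ℂ := fun t => Real.exp (-μ k * t) • (b k + ∫ s in (0:ℝ)..t, Real.exp (μ k * s) • F s)
    have hy : ∀ t, HasDerivAt y (-(μ k) • y t + F t) t := by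
      intro t
      have h1 : HasDerivAt (fun t => Real.exp (-μ k * t)) (Real.exp (-μ k * t) * (-μ k)) t := by
        have := ((hasDerivAt_id t).const_mul (-μ k)).exp
        simpa using this
      have hcc : Continuous fun s => Real.exp (μ k * s) • F s := by
        have h3 : Continuous F := hFc k
        fun_prop
      have h2 : HasDerivAt (fun t => b k + ∫ s in (0:ℝ)..t, Real.exp (μ k * s) • F s) (Real.exp (μ k * t) • F t) t :=
        (intervalIntegral.integral_hasDerivAt_right (hcc.intervalIntegrable _ _)
          (hcc.stronglyMeasurableAtFilter _ _) hcc.continuousAt).const_add _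
      refine (h1.smul h2).congr_deriv ?_
      rw [smul_smul, ← Real.exp_add]
      have : -μ k * t + μ k * t = 0 := by ring
      rw [this, Real.exp_zero, one_smul, add_comm]
      congr 1
      simp only [y]
      rw [smul_smul, mul_comm]
    have hyα : ∀ t ∈ Icc (0:ℝ) T, y t = (w k)⁻¹ • β (k, t) := by
      intro t ht
      rw [hβ']
      simp only [Φ0, y, hclip t ht]
      rw [smul_add, smul_add, smul_smul, ← mul_assoc, inv_mul_cancel₀ (hw0 k).ne', one_mul]
      congr 1
      rw [← intervalIntegral.integral_smul, ← intervalIntegral.integral_smul]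
      congr 1; funext s
      simp only [hFdef, hF]
      rw [smul_smul, ← Real.exp_add, smul_comm (w k)⁻¹]
      congr 2; ring
    intro t ht
    beta_reduce
    rw [← hyα t ht]
    have hcont2 : Continuous fun s => (-(μ k) • ((w k)⁻¹ • β (k, s)) + F s) :=
      ((hαc k).const_smul (-(μ k))).add (hFc k)
    have ha : ∀ t, HasDerivAt (fun t => b k + ∫ s in (0:ℝ)..t, (-(μ k) • ((w k)⁻¹ • β (k, s)) + F s))
        (-(μ k) • ((w k)⁻¹ • β (k, t)) + F t) t := fun t =>
      (intervalIntegral.integral_hasDerivAt_right (hcont2.intervalIntegrable _ _)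
          (hcont2.stronglyMeasurableAtFilter _ _) hcont2.continuousAt).const_add _
    refine eq_of_has_deriv_right_eq (f' := fun t => -(μ k) • ((w k)⁻¹ • β (k, t)) + F t)
      (fun x _ => (ha x).hasDerivWithinAt) ?_ (fun x _ => (ha x).continuousAt.continuousWithinAt)
      (fun x _ => (hy x).continuousAt.continuousWithinAt) ?_ t ht
    · intro x hx
      have := (hy x).hasDerivWithinAt (s := Ici x)
      rw [hyα x ⟨hx.1, hx.2.le⟩] at this
      exact this
    · simp [y]
  · intro k t
    have hcont2 : Continuous fun s => (-(μ k) • ((w k)⁻¹ • β (k, s)) + ∑' j, V (k - j) s * ((w j)⁻¹ • β (j, s))) :=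
      ((hαc k).const_smul (-(μ k))).add (hFc k)
    exact (intervalIntegral.integral_hasDerivAt_right (hcont2.intervalIntegrable _ _)
          (hcont2.stronglyMeasurableAtFilter _ _) hcont2.continuousAt).const_add _


/-- Fourier mode. -/
noncomputable def bgE (k : ℤ) (x : ℝ) : ℂ := Complex.exp (2 * Real.pi * Complex.I * k * x)

/-- Fourier symbol of the derivative. -/
noncomputable def bgL (k : ℤ) : ℂ := 2 * Real.pi * Complex.I * k

/-- Weight. -/
noncomputable def bgr (k : ℤ) : ℝ := 1 + |(k : ℝ)|

/-- Fourier series, differentiated `n` times. -/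
noncomputable def bgS (n : ℕ) (c : ℤ → ℂ) (x : ℝ) : ℂ := ∑' k, c k * bgL k ^ n * bgE k x

/-- Fourier coefficient. -/
noncomputable def bgc (f : ℝ → ℝ) (k : ℤ) : ℂ := ∫ x in (0:ℝ)..1, (f x : ℂ) * bgE (-k) x

theorem bgr_pos (k : ℤ) : 0 < bgr k := by unfold bgr; positivity

theorem bgr_one (k : ℤ) : 1 ≤ bgr k := by unfold bgr; linarith [abs_nonneg (k : ℝ)]

theorem bgr_sub (j l : ℤ) : bgr (j + l) ≤ bgr j * bgr l := by
  unfold bgr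
  push_cast
  nlinarith [abs_add_le (j : ℝ) l, abs_nonneg (j : ℝ), abs_nonneg (l : ℝ),
    mul_nonneg (abs_nonneg (j : ℝ)) (abs_nonneg (l : ℝ))]

theorem bgr_summable : Summable fun k : ℤ => 1 / bgr k ^ 2 := by
  have h := (Real.summable_one_div_int_pow (p := 2)).2 (by norm_num)
  refine Summable.of_norm_bounded_eventually h ?_
  have : ∀ᶠ k : ℤ in Filter.cofinite, k ≠ 0 := by
    have : ({0} : Set ℤ).Finite := finite_singleton 0
    exact this.compl_mem_cofinite
  filter_upwards [this] with k hk
  rw [Real.norm_of_nonneg (by positivity)]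
  have hk' : (k : ℝ) ≠ 0 := by exact_mod_cast hk
  have : (k : ℝ) ^ 2 ≤ bgr k ^ 2 := by
    rw [← sq_abs (k : ℝ)]
    exact pow_le_pow_left₀ (abs_nonneg _) (by unfold bgr; linarith) 2
  exact one_div_le_one_div_of_le (by positivity) this

theorem bgE_norm (k : ℤ) (x : ℝ) : ‖bgE k x‖ = 1 := by
  unfold bgE
  rw [show (2 * Real.pi * Complex.I * k * x : ℂ) = ((2 * Real.pi * k * x : ℝ) : ℂ) * Complex.I by push_cast; ring]
  exact Complex.norm_exp_ofReal_mul_I _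

theorem bgE_deriv (k : ℤ) (x : ℝ) : HasDerivAt (bgE k) (bgL k * bgE k x) x := by
  have h1 : HasDerivAt (fun x : ℝ => (2 * Real.pi * Complex.I * k * x : ℂ)) (bgL k) x := by
    have := (Complex.ofRealCLM.hasDerivAt (x := x)).const_mul (bgL k)
    simpa [bgL] using this
  have := h1.cexp
  rw [mul_comm (bgL k)]
  exact this

theorem bgE_cont (k : ℤ) : Continuous (bgE k) :=
  continuous_iff_continuousAt.2 fun x => (bgE_deriv k x).continuousAt

theorem bgE_per (k : ℤ) : Function.Periodic (bgE k) 1 := by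
  intro x
  unfold bgE
  rw [Complex.exp_eq_exp_iff_exists_int]
  exact ⟨k, by push_cast; ring⟩

theorem bgE_add (k l : ℤ) (x : ℝ) : bgE (k + l) x = bgE k x * bgE l x := by
  unfold bgE
  rw [← Complex.exp_add]
  congr 1; push_cast; ring

theorem bgL_norm (k : ℤ) : ‖bgL k‖ = 2 * Real.pi * |(k : ℝ)| := by
  unfold bgL
  simp [abs_of_pos Real.pi_pos]

theorem bg_term (n : ℕ) (c : ℂ) (k : ℤ) (A : ℝ) (h : bgr k ^ (n + 2) * ‖c‖ ≤ A) (x : ℝ) :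
    ‖c * bgL k ^ n * bgE k x‖ ≤ A * (2 * Real.pi) ^ n * (1 / bgr k ^ 2) := by
  rw [norm_mul, norm_mul, norm_pow, bgE_norm, bgL_norm, mul_one, mul_pow]
  have hr := bgr_pos k
  have h1 : |(k : ℝ)| ^ n ≤ bgr k ^ n := pow_le_pow_left₀ (abs_nonneg _) (by unfold bgr; linarith) n
  have h2 : ‖c‖ * bgr k ^ n ≤ A * (1 / bgr k ^ 2) := by
    rw [mul_one_div, le_div_iff₀ (by positivity)]
    calc _ = bgr k ^ (n + 2) * ‖c‖ := by ring
      _ ≤ A := h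
  have hpi : 0 ≤ (2 * Real.pi) ^ n := by positivity
  calc ‖c‖ * ((2 * Real.pi) ^ n * |(k : ℝ)| ^ n) = (‖c‖ * |(k : ℝ)| ^ n) * (2 * Real.pi) ^ n := by ring
    _ ≤ (A * (1 / bgr k ^ 2)) * (2 * Real.pi) ^ n := by
      refine mul_le_mul_of_nonneg_right (le_trans ?_ h2) hpi
      exact mul_le_mul_of_nonneg_left h1 (norm_nonneg _)
    _ = _ := by ring

theorem bg_weight {m n : ℕ} (hmn : m ≤ n) (c : ℂ) (k : ℤ) (A : ℝ) (h : bgr k ^ n * ‖c‖ ≤ A) :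
    bgr k ^ m * ‖c‖ ≤ A :=
  le_trans (mul_le_mul_of_nonneg_right (pow_le_pow_right₀ (bgr_one k) hmn) (norm_nonneg _)) h

theorem bg_summ (n : ℕ) (c : ℤ → ℂ) (A : ℝ) (h : ∀ k, bgr k ^ (n + 2) * ‖c k‖ ≤ A) (x : ℝ) :
    Summable fun k => c k * bgL k ^ n * bgE k x :=
  Summable.of_norm_bounded (bgr_summable.mul_left _) fun k => bg_term n (c k) k A (h k) x

theorem bgS_deriv (n : ℕ) (c : ℤ → ℂ) (A : ℝ) (h : ∀ k, bgr k ^ (n + 3) * ‖c k‖ ≤ A) (x : ℝ) :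
    HasDerivAt (bgS n c) (bgS (n + 1) c x) x := by
  refine hasDerivAt_tsum (y₀ := 0) (bgr_summable.mul_left (A * (2 * Real.pi) ^ (n + 1))) ?_
    (fun k y => bg_term (n + 1) (c k) k A (h k) y) ?_ x
  · intro k y
    refine ((bgE_deriv k y).const_mul (c k * bgL k ^ n)).congr_deriv ?_
    ring
  · exact bg_summ n c A (fun k => bg_weight (by omega) _ _ _ (h k)) 0

theorem bgS_cont (n : ℕ) (c : ℤ → ℝ → ℂ) (hc : ∀ k, Continuous (c k)) (A : ℝ)
    (h : ∀ k t, bgr k ^ (n + 2) * ‖c k t‖ ≤ A) :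
    Continuous fun p : ℝ × ℝ => bgS n (fun k => c k p.1) p.2 := by
  refine continuous_tsum (u := fun k => A * (2 * Real.pi) ^ n * (1 / bgr k ^ 2)) ?_
    (bgr_summable.mul_left _) (fun k p => bg_term n (c k p.1) k A (h k p.1) p.2)
  intro k
  have := hc k
  have := bgE_cont k
  fun_prop

theorem bgS_tderiv (n : ℕ) (a a' : ℤ → ℝ → ℂ) (A A' : ℝ) (ha : ∀ k t, HasDerivAt (a k) (a' k t) t)
    (h0 : ∀ k, bgr k ^ (n + 2) * ‖a k 0‖ ≤ A)
    (h : ∀ k t, bgr k ^ (n + 2) * ‖a' k t‖ ≤ A') (x t : ℝ) :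
    HasDerivAt (fun t => bgS n (fun k => a k t) x) (bgS n (fun k => a' k t) x) t := by
  unfold bgS
  refine hasDerivAt_tsum (y₀ := 0) (g := fun k t => a k t * bgL k ^ n * bgE k x)
    (g' := fun k t => a' k t * bgL k ^ n * bgE k x) (bgr_summable.mul_left (A' * (2 * Real.pi) ^ n)) ?_
    (fun k y => bg_term n (a' k y) k A' (h k y) x) (bg_summ n (fun k => a k 0) A h0 x) t
  intro k y
  exact ((ha k y).mul_const _).mul_const _

theorem bgS_per (n : ℕ) (c : ℤ → ℂ) : Function.Periodic (bgS n c) 1 := by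
  intro x
  unfold bgS
  simp only [bgE_per _ x]

theorem bg_convolution (V α : ℤ → ℂ) (hV : Summable fun k => ‖V k‖) (hα : Summable fun k => ‖α k‖) (x : ℝ) :
    bgS 0 (fun k => ∑' j, V (k - j) * α j) x = bgS 0 V x * bgS 0 α x := by
  unfold bgS
  simp only [pow_zero, mul_one]
  have h1 : Summable fun k => ‖V k * bgE k x‖ := by simpa [bgE_norm] using hV
  have h2 : Summable fun k => ‖α k * bgE k x‖ := by simpa [bgE_norm] using hα
  rw [tsum_mul_tsum_of_summable_norm h1 h2]
  let e : ℤ × ℤ ≃ ℤ × ℤ :=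
    { toFun := fun p => (p.1 - p.2, p.2)
      invFun := fun p => (p.1 + p.2, p.2)
      left_inv := fun p => by simp
      right_inv := fun p => by simp }
  have hs := summable_mul_of_summable_norm h1 h2
  have hs2 : Summable fun c => V (e c).1 * bgE (e c).1 x * (α (e c).2 * bgE (e c).2 x) := e.summable_iff.2 hs
  rw [← e.tsum_eq, hs2.tsum_prod]
  congr 1; funext k
  rw [← tsum_mul_right]
  congr 1; funext j
  simp only [e, Equiv.coe_fn_mk]
  have : bgE k x = bgE (k - j) x * bgE j x := by rw [← bgE_add]; simp
  rw [this]; ring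

theorem bgc_ibp (f f' : ℝ → ℝ) (hf : ∀ x, HasDerivAt f (f' x) x) (hf' : Continuous f')
    (hp : Function.Periodic f 1) (k : ℤ) : bgc f' k = bgL k * bgc f k := by
  unfold bgc
  have hfc : Continuous f := continuous_iff_continuousAt.2 fun x => (hf x).continuousAt
  have hE := bgE_cont (-k)
  have h := intervalIntegral.integral_mul_deriv_eq_deriv_mul (a := 0) (b := 1)
    (u := fun x => (f x : ℂ)) (v := bgE (-k)) (u' := fun x => (f' x : ℂ)) (v' := fun x => bgL (-k) * bgE (-k) x)
    (fun x _ => (hf x).ofReal_comp) (fun x _ => bgE_deriv (-k) x)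
    (Continuous.intervalIntegrable (by fun_prop) _ _) (Continuous.intervalIntegrable (by fun_prop) _ _)
  have e1 : f 1 = f 0 := by simpa using hp 0
  have e2 : bgE (-k) 1 = bgE (-k) 0 := by simpa using bgE_per (-k) 0
  have e3 : bgL (-k) = - bgL k := by unfold bgL; push_cast; ring
  rw [e1, e2, sub_self, zero_sub] at h
  have h2 : ∫ x in (0:ℝ)..1, (f x : ℂ) * (bgL (-k) * bgE (-k) x) = bgL (-k) * ∫ x in (0:ℝ)..1, (f x : ℂ) * bgE (-k) x := by
    rw [← intervalIntegral.integral_const_mul]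
    congr 1; funext x; ring
  rw [h2, e3] at h
  linear_combination h

theorem bgc_bound (f : ℝ → ℝ) (B : ℝ) (h : ∀ x ∈ Icc (0:ℝ) 1, |f x| ≤ B) (k : ℤ) : ‖bgc f k‖ ≤ B := by
  have := intervalIntegral.norm_integral_le_of_norm_le_const (a := 0) (b := 1) (C := B)
    (f := fun x => (f x : ℂ) * bgE (-k) x) (by
      intro x hx
      rw [uIoc_of_le zero_le_one] at hx
      rw [norm_mul, bgE_norm, mul_one, Complex.norm_real]
      exact h x ⟨hx.1.le, hx.2⟩)
  simpa [bgc] using this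

theorem bgc_hasSum (f : ℝ → ℝ) (hf : Continuous f) (hp : Function.Periodic f 1)
    (hs : Summable (bgc f)) (x : ℝ) : bgS 0 (bgc f) x = f x := by
  have : Fact ((0:ℝ) < 1) := ⟨one_pos⟩
  have hp' : Function.Periodic (fun x => (f x : ℂ)) 1 := fun x => by simp only [hp x]
  let g : C(AddCircle (1:ℝ), ℂ) := ⟨hp'.lift, by
    refine Continuous.quotient_lift ?_ _
    fun_prop⟩
  have hg : ∀ x : ℝ, g (x : AddCircle (1:ℝ)) = f x := fun x => rfl
  have hc : ∀ k, fourierCoeff g k = bgc f k := by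
    intro k
    rw [fourierCoeff_eq_intervalIntegral _ _ 0]
    simp only [hg, bgc, fourier_coe_apply, bgE, smul_eq_mul]
    simp only [zero_add, div_one, one_smul, Complex.ofReal_one]
    congr 1; funext x
    rw [mul_comm]
  have h1 : Summable (fourierCoeff g) := by
    rw [show (fourierCoeff g) = bgc f from funext hc]; exact hs
  have := (has_pointwise_sum_fourier_series_of_summable h1 (x : AddCircle (1:ℝ))).tsum_eq
  rw [hg] at this
  rw [← this]
  unfold bgS
  congr 1; funext k
  rw [hc, fourier_coe_apply]
  simp [bgE]

theorem bgc_decay (f : ℕ → ℝ → ℝ) (hf : ∀ n x, HasDerivAt (f n) (f (n + 1) x) x)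
    (hp : ∀ n, Function.Periodic (f n) 1) (B : ℝ) (h0 : ∀ x ∈ Icc (0:ℝ) 1, |f 0 x| ≤ B)
    (h7 : ∀ x ∈ Icc (0:ℝ) 1, |f 7 x| ≤ B) (k : ℤ) : bgr k ^ 7 * ‖bgc (f 0) k‖ ≤ 128 * B := by
  have hc : ∀ n, Continuous (f n) := fun n => continuous_iff_continuousAt.2 fun x => (hf n x).continuousAt
  have hit : ∀ n, bgc (f n) k = bgL k ^ n * bgc (f 0) k := by
    intro n
    induction n with
    | zero => simp
    | succ n ih => rw [bgc_ibp (f n) (f (n + 1)) (hf n) (hc _) (hp n), ih]; ring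
  have b0 := bgc_bound (f 0) B h0 k
  have b7 := bgc_bound (f 7) B h7 k
  rw [hit 7, norm_mul, norm_pow, bgL_norm, mul_pow] at b7
  have hpi : 1 ≤ (2 * Real.pi) ^ 7 := one_le_pow₀ (by linarith [Real.pi_gt_three])
  have h1 : |(k : ℝ)| ^ 7 * ‖bgc (f 0) k‖ ≤ B := by
    refine le_trans ?_ b7
    have : 0 ≤ |(k : ℝ)| ^ 7 * ‖bgc (f 0) k‖ := by positivity
    nlinarith
  have h2 : bgr k ^ 7 ≤ 2 ^ 6 * (1 ^ 7 + |(k : ℝ)| ^ 7) := add_pow_le zero_le_one (abs_nonneg _) 7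
  have h3 := mul_le_mul_of_nonneg_right h2 (norm_nonneg (bgc (f 0) k))
  nlinarith


theorem bg_pos (ν T M : ℝ) (hν : 0 < ν) (hT : 0 < T) (W : ℝ → ℝ → ℝ)
    (p0 p1 p2 q0 : ℝ → ℝ → ℝ)
    (hp : ∀ t, Function.Periodic (p0 t) 1)
    (c0 : Continuous (fun p : ℝ × ℝ => p0 p.1 p.2))
    (d0 : ∀ t x, HasDerivAt (p0 t) (p1 t x) x)
    (d1 : ∀ t x, HasDerivAt (p1 t) (p2 t x) x)
    (e0 : ∀ t ∈ Icc (0:ℝ) T, ∀ x, q0 t x = p0 t x)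
    (t0 : ∀ t ∈ Icc (0:ℝ) T, ∀ x, HasDerivAt (fun s => q0 s x) (ν * p2 t x + W t x * p0 t x) t)
    (hW : ∀ t x, |W t x| ≤ M) (hin : ∀ x, 0 < p0 0 x) :
    ∀ t ∈ Icc (0:ℝ) T, ∀ x, 0 < p0 t x := by
  have h0 : (0:ℝ) ∈ Icc (0:ℝ) T := ⟨le_rfl, hT.le⟩
  have hc : Continuous (p0 0) := c0.comp (Continuous.prodMk_right 0)
  obtain ⟨x0, -, hx0⟩ := isCompact_Icc.exists_isMinOn (s := Icc (0:ℝ) 1) ⟨0, by simp⟩ hc.continuousOn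
  set δ := p0 0 x0 with hδ
  have hδ0 : 0 < δ := hin x0
  have hmin : ∀ x, δ ≤ p0 0 x := by
    intro x
    obtain ⟨y, hy, hxy⟩ := (hp 0).exists_mem_Ico₀ one_pos x
    rw [hxy]
    exact hx0 ⟨hy.1, hy.2.le⟩
  have hf : ∀ t ∈ Icc (0:ℝ) T, (fun x => q0 t x - δ * Real.exp (-M * t)) = fun x => p0 t x - δ * Real.exp (-M * t) :=
    fun t ht => funext fun x => by rw [e0 t ht]
  have hd : ∀ t ∈ Icc (0:ℝ) T, deriv (fun x => q0 t x - δ * Real.exp (-M * t)) = p1 t := by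
    intro t ht
    rw [hf t ht]
    funext x
    exact ((d0 t x).sub_const _).deriv
  have hdt : ∀ x, ∀ t ∈ Icc (0:ℝ) T, HasDerivAt (fun s => q0 s x - δ * Real.exp (-M * s))
      (ν * p2 t x + W t x * p0 t x - δ * (Real.exp (-M * t) * (-M))) t := by
    intro x t ht
    have h1 : HasDerivAt (fun s => Real.exp (-M * s)) (Real.exp (-M * t) * (-M)) t := by
      have := ((hasDerivAt_id t).const_mul (-M)).exp
      simpa using this
    exact (t0 t ht x).sub (h1.const_mul δ)
  have := bg_maxp ν T M hν hT (fun t x => q0 t x - δ * Real.exp (-M * t)) W ?_ ?_ ?_ ?_ ?_ ?_ ?_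
  · intro t ht x
    have h1 := this t ht x
    have h2 := mul_pos hδ0 (Real.exp_pos (-M * t))
    rw [e0 t ht] at h1
    linarith
  · intro t ht x
    simp only [e0 t ht, hp t x]
  · have : Continuous fun p : ℝ × ℝ => p0 p.1 p.2 - δ * Real.exp (-M * p.1) := by fun_prop
    refine this.continuousOn.congr ?_
    intro p hp
    simp only [e0 p.1 hp.1]
  · exact fun x t ht => (hdt x t ht).differentiableAt
  · intro t ht x
    simp only [hf t ht]
    exact ((d0 t x).sub_const _).differentiableAt
  · exact fun t ht x => (le_abs_self _).trans (hW t x)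
  · intro t ht x _
    simp only [hd t ht]
    rw [(d1 t x).deriv, (hdt x t ht).deriv, e0 t ht]
    have h2 := mul_pos hδ0 (Real.exp_pos (-M * t))
    have h3 : -W t x ≤ M := (neg_le_abs _).trans (hW t x)
    nlinarith
  · intro x
    simp only [e0 0 h0, mul_zero, Real.exp_zero, mul_one]
    linarith [hmin x]

theorem bg_heat (ν T B B' : ℝ) (hν : 0 < ν) (hT : 0 < T) (hB0 : 0 ≤ B) (f : ℕ → ℝ → ℝ → ℝ) (g : ℕ → ℝ → ℝ)
    (hfc : Continuous fun p : ℝ × ℝ => f 0 p.1 p.2)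
    (hf : ∀ n t x, HasDerivAt (f n t) (f (n + 1) t x) x)
    (hfp : ∀ n t, Function.Periodic (f n t) 1)
    (hf0 : ∀ t, ∀ x ∈ Icc (0:ℝ) 1, |f 0 t x| ≤ B)
    (hf7 : ∀ t, ∀ x ∈ Icc (0:ℝ) 1, |f 7 t x| ≤ B)
    (hg : ∀ n x, HasDerivAt (g n) (g (n + 1) x) x)
    (hgp : ∀ n, Function.Periodic (g n) 1)
    (hg0 : ∀ x ∈ Icc (0:ℝ) 1, |g 0 x| ≤ B')
    (hg7 : ∀ x ∈ Icc (0:ℝ) 1, |g 7 x| ≤ B') :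
    ∃ (C : ℝ) (p0 p1 p2 p3 q0 q1 : ℝ → ℝ → ℝ),
    (∀ t, Function.Periodic (p0 t) 1) ∧
    (∀ t, Function.Periodic (p1 t) 1) ∧
    (Continuous (fun p : ℝ × ℝ => p0 p.1 p.2)) ∧
    (Continuous (fun p : ℝ × ℝ => p1 p.1 p.2)) ∧
    (Continuous (fun p : ℝ × ℝ => p2 p.1 p.2)) ∧
    (Continuous (fun p : ℝ × ℝ => p3 p.1 p.2)) ∧
    (∀ t x, HasDerivAt (p0 t) (p1 t x) x) ∧
    (∀ t x, HasDerivAt (p1 t) (p2 t x) x) ∧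
    (∀ t x, HasDerivAt (p2 t) (p3 t x) x) ∧
    (∀ t ∈ Icc (0:ℝ) T, ∀ x, q0 t x = p0 t x) ∧
    (∀ t ∈ Icc (0:ℝ) T, ∀ x, q1 t x = p1 t x) ∧
    (∀ t x, HasDerivAt (fun s => q0 s x) (ν * p2 t x + (f 0 t x - C) * p0 t x) t) ∧
    (∀ t x, HasDerivAt (fun s => q1 s x)
      (ν * p3 t x + f 1 t x * p0 t x + (f 0 t x - C) * p1 t x) t) ∧
    (∀ x, p0 0 x = g 0 x) := by
  have h0 : (0:ℝ) ∈ Icc (0:ℝ) T := ⟨le_rfl, hT.le⟩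
  let V : ℤ → ℝ → ℂ := fun k t => bgc (f 0 t) k
  have hV7 : ∀ k t, bgr k ^ 7 * ‖V k t‖ ≤ 128 * B := fun k t =>
    bgc_decay (fun n => f n t) (fun n x => hf n t x) (fun n => hfp n t) B (hf0 t) (hf7 t) k
  have hb7 : ∀ k, bgr k ^ 7 * ‖bgc (g 0) k‖ ≤ 128 * B' := fun k => bgc_decay g hg hgp B' hg0 hg7 k
  have hVc : ∀ k, Continuous (V k) := by
    intro k
    refine intervalIntegral.continuous_parametric_intervalIntegral_of_continuous (s := fun _ => 1) ?_ continuous_const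
    have := bgE_cont (-k)
    simp only [Function.uncurry_def]
    fun_prop
  let v : ℤ → ℝ := fun k => 128 * B / bgr k ^ 7
  have hv : ∀ k t, ‖V k t‖ ≤ v k := by
    intro k t
    have := bgr_pos k
    simp only [v]
    rw [le_div_iff₀ (by positivity), mul_comm]
    exact hV7 k t
  let w : ℤ → ℝ := fun k => bgr k ^ 5
  have hw1 : ∀ k, 1 ≤ w k := fun k => one_le_pow₀ (bgr_one k)
  have hws : ∀ j l, w (j + l) ≤ w j * w l := fun j l => by
    simp only [w]
    rw [← mul_pow]
    exact pow_le_pow_left₀ (bgr_pos _).le (bgr_sub j l) 5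
  have hS : Summable fun l => w l * v l := by
    refine (bgr_summable.mul_left (128 * B)).congr fun k => ?_
    have := (bgr_pos k).ne'
    simp only [w, v]
    field_simp
  set S := ∑' l, w l * v l with hSdef
  have hS0 : 0 ≤ S := tsum_nonneg fun l => mul_nonneg (by linarith [hw1 l]) ((norm_nonneg _).trans (hv l 0))
  let C := S + 1
  let μ : ℤ → ℝ := fun k => ν * (2 * Real.pi * k) ^ 2 + C
  have hμ : ∀ k, C ≤ μ k := fun k => by
    have : 0 ≤ ν * (2 * Real.pi * k) ^ 2 := by positivity
    simp only [μ]; linarith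
  obtain ⟨α, a, A, hαc, hαA, hα0, haα, had⟩ := bg_ode T C hT (by simp only [C]; linarith) w v hw1 hws V hVc hv hS
    (by simp only [C]; linarith) μ hμ (bgc (g 0)) (128 * B')
    (fun k => bg_weight (by norm_num) _ k _ (hb7 k))
  have hα5 : ∀ k t, bgr k ^ 5 * ‖α k t‖ ≤ A := hαA
  have hαn : ∀ n ≤ 5, ∀ k t, bgr k ^ n * ‖α k t‖ ≤ A := fun n hn k t => bg_weight hn _ k _ (hα5 k t)
  have hA0 : 0 ≤ A := le_trans (mul_nonneg (by linarith [hw1 0]) (norm_nonneg _)) (hαA 0 0)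
  let cv : ℤ → ℝ → ℂ := fun k t => ∑' j, V (k - j) t * α j t
  have hcv : ∀ k t, bgr k ^ 5 * ‖cv k t‖ ≤ S * A := by
    intro k t
    have h := (bg_conv w v hw1 hws hS (fun l => V l t) (fun l => hv l t) (fun j => w j • α j t) A
      (fun j => by rw [norm_smul, Real.norm_of_nonneg (by linarith [hw1 j])]; exact hαA j t) k).2.1
    have e : ∑' j, (w k / w j) • (V (k - j) t * (w j • α j t)) = w k • cv k t := by
      simp only [cv]
      rw [← tsum_const_smul'']
      congr 1; funext j
      have : w j ≠ 0 := by linarith [hw1 j]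
      rw [mul_smul_comm, smul_smul, div_mul_cancel₀ _ this]
    rw [e, norm_smul, Real.norm_of_nonneg (by linarith [hw1 k])] at h
    exact h
  let a' : ℤ → ℝ → ℂ := fun k t => -(μ k) • α k t + cv k t
  have ha' : ∀ k t, bgr k ^ 3 * ‖a' k t‖ ≤ (ν * (2 * Real.pi) ^ 2 + C) * A + S * A := by
    intro k t
    have h1 : ‖a' k t‖ ≤ μ k * ‖α k t‖ + ‖cv k t‖ := by
      refine (norm_add_le _ _).trans ?_
      rw [norm_smul, norm_neg, Real.norm_of_nonneg (le_trans (by simp only [C]; linarith) (hμ k))]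
    have hr := bgr_one k
    have h2 : μ k ≤ (ν * (2 * Real.pi) ^ 2 + C) * bgr k ^ 2 := by
      have e1 : (k : ℝ) ^ 2 ≤ bgr k ^ 2 := by
        rw [← sq_abs (k : ℝ)]
        exact pow_le_pow_left₀ (abs_nonneg _) (by unfold bgr; linarith) 2
      have e2 : 1 ≤ bgr k ^ 2 := one_le_pow₀ hr
      have e3 : 0 ≤ ν * (2 * Real.pi) ^ 2 := by positivity
      have e4 : 0 ≤ C := by simp only [C]; linarith
      have e5 := mul_le_mul_of_nonneg_left e1 e3
      have e6 := mul_le_mul_of_nonneg_left e2 e4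
      simp only [μ]
      linarith
    have hC0 : 0 ≤ ν * (2 * Real.pi) ^ 2 + C := by
      have e4 : 0 ≤ C := by simp only [C]; linarith
      positivity
    have hr3 : 0 ≤ bgr k ^ 3 := by positivity
    calc bgr k ^ 3 * ‖a' k t‖ ≤ bgr k ^ 3 * ((ν * (2 * Real.pi) ^ 2 + C) * bgr k ^ 2 * ‖α k t‖ + ‖cv k t‖) := by
          refine mul_le_mul_of_nonneg_left (h1.trans ?_) hr3
          gcongr
      _ = (ν * (2 * Real.pi) ^ 2 + C) * (bgr k ^ 5 * ‖α k t‖) + bgr k ^ 3 * ‖cv k t‖ := by ring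
      _ ≤ _ := add_le_add (mul_le_mul_of_nonneg_left (hα5 k t) hC0) (bg_weight (by norm_num) _ k _ (hcv k t))
  have hsV : ∀ t, Summable fun k => ‖V k t‖ := by
    intro t
    have : Summable v := by
      refine Summable.of_nonneg_of_le (fun k => (norm_nonneg _).trans (hv k 0)) (fun k => ?_) hS
      have := (norm_nonneg _).trans (hv k 0)
      nlinarith [hw1 k]
    exact Summable.of_nonneg_of_le (fun k => norm_nonneg _) (fun k => hv k t) this
  have hsα : ∀ t, Summable fun k => ‖α k t‖ := by
    intro t
    refine Summable.of_nonneg_of_le (fun k => norm_nonneg _) (fun k => ?_) (bgr_summable.mul_left A)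
    have := bgr_pos k
    rw [mul_one_div, le_div_iff₀ (by positivity), mul_comm]
    exact hαn 2 (by norm_num) k t
  have hVS : ∀ t x, bgS 0 (fun k => V k t) x = f 0 t x := by
    intro t x
    refine bgc_hasSum (f 0 t) ?_ (hfp 0 t) (hsV t).of_norm x
    exact hfc.comp (Continuous.prodMk_right t)
  have hR0 : ∀ t x, bgS 0 (fun k => a' k t) x = ν * bgS 2 (fun k => α k t) x
      + (f 0 t x - C) * bgS 0 (fun k => α k t) x := by
    intro t x
    have h1 := bg_convolution (fun k => V k t) (fun k => α k t) (hsV t) (hsα t) x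
    rw [hVS] at h1
    have s0 := bg_summ 0 (fun k => α k t) A (fun k => hαn 2 (by norm_num) k t) x
    have s2 := bg_summ 2 (fun k => α k t) A (fun k => hαn 4 (by norm_num) k t) x
    have sc := bg_summ 0 (fun k => cv k t) (S * A) (fun k => bg_weight (by norm_num) _ k _ (hcv k t)) x
    rw [sub_mul, ← h1]
    unfold bgS
    rw [← tsum_mul_left, ← tsum_mul_left, ← sc.tsum_sub (s0.mul_left _), ← (s2.mul_left _).tsum_add (sc.sub (s0.mul_left _))]
    congr 1; funext k
    simp only [a', cv, μ, bgL, Complex.real_smul]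
    push_cast
    linear_combination (-(ν : ℂ) * α k t * (2 * Real.pi * k) ^ 2 * bgE k x) * Complex.I_sq
  have P0 : ∀ t x, HasDerivAt (bgS 0 (fun k => α k t)) (bgS 1 (fun k => α k t) x) x := fun t x =>
    bgS_deriv 0 _ A (fun k => hαn 3 (by norm_num) k t) x
  have P1 : ∀ t x, HasDerivAt (bgS 1 (fun k => α k t)) (bgS 2 (fun k => α k t) x) x := fun t x =>
    bgS_deriv 1 _ A (fun k => hαn 4 (by norm_num) k t) x
  have P2 : ∀ t x, HasDerivAt (bgS 2 (fun k => α k t)) (bgS 3 (fun k => α k t) x) x := fun t x =>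
    bgS_deriv 2 _ A (fun k => hαn 5 (by norm_num) k t) x
  have hR1 : ∀ t x, bgS 1 (fun k => a' k t) x = ν * bgS 3 (fun k => α k t) x
      + (f 1 t x * bgS 0 (fun k => α k t) x + (f 0 t x - C) * bgS 1 (fun k => α k t) x) := by
    intro t x
    have h1 : HasDerivAt (bgS 0 (fun k => a' k t)) _ x := bgS_deriv 0 _ _ (fun k => ha' k t) x
    rw [show bgS 0 (fun k => a' k t) = fun x => ν * bgS 2 (fun k => α k t) x
      + (f 0 t x - C) * bgS 0 (fun k => α k t) x from funext (hR0 t)] at h1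
    have h2 := ((P2 t x).const_mul (ν : ℂ)).add
      (((hf 0 t x).ofReal_comp.sub_const (C : ℂ)).mul (P0 t x))
    exact h1.unique h2
  have re : ∀ {F : ℝ → ℂ} {F' : ℂ} {x : ℝ}, HasDerivAt F F' x → HasDerivAt (fun y => (F y).re) F'.re x := by
    intro F F' x h
    exact (Complex.reCLM.hasFDerivAt.comp_hasDerivAt x h)
  have ha0 : ∀ n ≤ 5, ∀ k, bgr k ^ n * ‖a k 0‖ ≤ A := by
    intro n hn k
    rw [haα k 0 h0]
    exact hαn n hn k 0
  refine ⟨C, fun t x => (bgS 0 (fun k => α k t) x).re, fun t x => (bgS 1 (fun k => α k t) x).re,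
    fun t x => (bgS 2 (fun k => α k t) x).re, fun t x => (bgS 3 (fun k => α k t) x).re,
    fun t x => (bgS 0 (fun k => a k t) x).re, fun t x => (bgS 1 (fun k => a k t) x).re,
    ?_, ?_, ?_, ?_, ?_, ?_, fun t x => re (P0 t x), fun t x => re (P1 t x), fun t x => re (P2 t x), ?_, ?_, ?_, ?_, ?_⟩
  · intro t x; simp only [bgS_per 0 _ x]
  · intro t x; simp only [bgS_per 1 _ x]
  · exact Complex.continuous_re.comp (bgS_cont 0 α hαc A (hαn 2 (by norm_num)))
  · exact Complex.continuous_re.comp (bgS_cont 1 α hαc A (hαn 3 (by norm_num)))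
  · exact Complex.continuous_re.comp (bgS_cont 2 α hαc A (hαn 4 (by norm_num)))
  · exact Complex.continuous_re.comp (bgS_cont 3 α hαc A (hαn 5 (by norm_num)))
  · intro t ht x
    simp only [haα _ t ht]
  · intro t ht x
    simp only [haα _ t ht]
  · intro t x
    have h := re (bgS_tderiv 0 a a' A _ had (ha0 2 (by norm_num)) (fun k t => bg_weight (by norm_num) _ k _ (ha' k t)) x t)
    refine h.congr_deriv ?_
    rw [hR0, ← Complex.ofReal_sub, Complex.add_re, Complex.re_ofReal_mul, Complex.re_ofReal_mul]
  · intro t x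
    have h := re (bgS_tderiv 1 a a' A _ had (ha0 3 (by norm_num)) ha' x t)
    refine h.congr_deriv ?_
    rw [hR1, ← Complex.ofReal_sub, Complex.add_re, Complex.add_re, Complex.re_ofReal_mul, Complex.re_ofReal_mul,
      Complex.re_ofReal_mul, add_assoc]
  · intro x
    simp only [hα0]
    have hs : Summable (bgc (g 0)) := by
      have := (hsα 0).of_norm
      simpa only [hα0] using this
    have hgc : Continuous (g 0) := continuous_iff_continuousAt.2 fun x => (hg 0 x).continuousAt
    have := bgc_hasSum (g 0) hgc (hgp 0) hs x
    rw [show (fun k => bgc (g 0) k) = bgc (g 0) from rfl, this, Complex.ofReal_re]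


theorem bg_dper (f : ℝ → ℝ) (h : Function.Periodic f 1) (n : ℕ) : Function.Periodic (deriv^[n] f) 1 := by
  induction n with
  | zero => exact h
  | succ n ih =>
    rw [Function.iterate_succ_apply']
    intro x
    rw [← deriv_comp_add_const]
    congr 1
    funext y
    exact ih y

theorem bg_smooth (F : ℝ → ℝ → ℝ) (h : ContDiff ℝ (⊤ : ℕ∞) (fun p : ℝ × ℝ => F p.1 p.2)) :
    (∀ t x, HasDerivAt (F t) (deriv (F t) x) x) ∧
    ContDiff ℝ (⊤ : ℕ∞) (fun p : ℝ × ℝ => deriv (F p.1) p.2) := by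
  have hd : ∀ t x, HasDerivAt (F t) (fderiv ℝ (fun p : ℝ × ℝ => F p.1 p.2) (t, x) (0, 1)) x := by
    intro t x
    have h1 : HasFDerivAt (fun p : ℝ × ℝ => F p.1 p.2)
        (fderiv ℝ (fun p : ℝ × ℝ => F p.1 p.2) (t, x)) (t, x) :=
      (h.differentiable (by simp) (t, x)).hasFDerivAt
    have h2 : HasDerivAt (fun y : ℝ => (t, y)) ((0 : ℝ), (1 : ℝ)) x :=
      (hasDerivAt_const x t).prodMk (hasDerivAt_id x)
    exact h1.comp_hasDerivAt x h2
  refine ⟨fun t x => (hd t x).differentiableAt.hasDerivAt, ?_⟩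
  have : (fun p : ℝ × ℝ => deriv (F p.1) p.2) =
      fun p => fderiv ℝ (fun p : ℝ × ℝ => F p.1 p.2) p (0, 1) := by
    funext p
    exact (hd p.1 p.2).deriv
  rw [this]
  exact (h.fderiv_right (m := (⊤ : ℕ∞)) (by simp)).clm_apply contDiff_const

theorem bg_smooth_iter (F : ℝ → ℝ → ℝ) (h : ContDiff ℝ (⊤ : ℕ∞) (fun p : ℝ × ℝ => F p.1 p.2)) (n : ℕ) :
    ContDiff ℝ (⊤ : ℕ∞) (fun p : ℝ × ℝ => (deriv^[n] (F p.1)) p.2) := by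
  induction n with
  | zero => exact h
  | succ n ih =>
    have := (bg_smooth (fun t => deriv^[n] (F t)) ih).2
    simpa only [Function.iterate_succ_apply'] using this

theorem bg_prim (f : ℝ → ℝ) (hf : Continuous f) (hp : Function.Periodic f 1)
    (h : ∫ x in (0:ℝ)..1, f x = 0) : Function.Periodic (fun x => ∫ y in (0:ℝ)..x, f y) 1 := by
  intro x
  have h1 := hp.intervalIntegral_add_eq x 0
  rw [zero_add, h] at h1
  have h2 := intervalIntegral.integral_add_adjacent_intervals (hf.intervalIntegrable (μ := MeasureTheory.volume) 0 x)
    (hf.intervalIntegrable x (x + 1))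
  simp only
  rw [← h2, h1, add_zero]

/-- Clipped potential and its derivatives. -/
noncomputable def bgf (ν T : ℝ) (η : ℝ → ℝ → ℝ) : ℕ → ℝ → ℝ → ℝ
  | 0 => fun t x => -(1/(2*ν)) * ∫ y in (0:ℝ)..x, η (max 0 (min t T)) y
  | n + 1 => fun t x => -(1/(2*ν)) * (deriv^[n] (η (max 0 (min t T)))) x

theorem bgf_facts (ν T : ℝ) (hT : 0 < T) (η : ℝ → ℝ → ℝ) (hη_per : ∀ t, Function.Periodic (η t) 1)
    (hη : ContDiff ℝ (⊤ : ℕ∞) (fun p : ℝ × ℝ => η p.1 p.2))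
    (hη_mean : ∀ t : ℝ, ∫ x in (0:ℝ)..1, η t x = 0) :
    (∀ n, Continuous fun p : ℝ × ℝ => bgf ν T η n p.1 p.2) ∧
    (∀ n t x, HasDerivAt (bgf ν T η n t) (bgf ν T η (n + 1) t x) x) ∧
    (∀ n t, Function.Periodic (bgf ν T η n t) 1) ∧
    (∀ t ∈ Icc (0:ℝ) T, ∀ x, bgf ν T η 1 t x = -(1/(2*ν)) * η t x) ∧
    (∀ n, ∃ B, ∀ t x, |bgf ν T η n t x| ≤ B) := by
  have hηc : ∀ t, Continuous (η t) := fun t => hη.continuous.comp (Continuous.prodMk_right t)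
  have hcl : Continuous fun t : ℝ => max 0 (min t T) := by fun_prop
  have hclm : ∀ t : ℝ, max 0 (min t T) ∈ Icc (0:ℝ) T := fun t =>
    ⟨le_max_left _ _, max_le hT.le (min_le_right _ _)⟩
  have hcle : ∀ t ∈ Icc (0:ℝ) T, max 0 (min t T) = t := fun t ht => by
    rw [min_eq_left ht.2, max_eq_right ht.1]
  have C : ∀ n, Continuous fun p : ℝ × ℝ => bgf ν T η n p.1 p.2 := by
    intro n
    cases n with
    | zero =>
      have h1 : Continuous fun p : ℝ × ℝ => ∫ y in (0:ℝ)..p.2, η p.1 y :=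
        intervalIntegral.continuous_parametric_primitive_of_continuous
          (f := η) (a₀ := 0) (μ := MeasureTheory.volume) hη.continuous
      have h2 : Continuous fun p : ℝ × ℝ => ((max 0 (min p.1 T) : ℝ), p.2) := by fun_prop
      exact continuous_const.mul (h1.comp h2)
    | succ n =>
      have h1 := (bg_smooth_iter η hη n).continuous
      have h2 : Continuous fun p : ℝ × ℝ => ((max 0 (min p.1 T) : ℝ), p.2) := by fun_prop
      exact continuous_const.mul (h1.comp h2)
  have P : ∀ n t, Function.Periodic (bgf ν T η n t) 1 := by
    intro n t x
    cases n with
    | zero =>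
      have := bg_prim _ (hηc (max 0 (min t T))) (hη_per _) (hη_mean _) x
      simp only [bgf]
      simp only at this
      rw [this]
    | succ n =>
      have := bg_dper _ (hη_per (max 0 (min t T))) n x
      simp only [bgf]
      rw [this]
  have hcl1 : ∀ n t x, bgf ν T η n (max 0 (min t T)) x = bgf ν T η n t x := by
    intro n t x
    cases n <;> simp only [bgf, hcle _ (hclm t)]
  refine ⟨C, ?_, P, ?_, ?_⟩
  · intro n t x
    cases n with
    | zero =>
      have h1 := ((hηc (max 0 (min t T))).integral_hasStrictDerivAt 0 x).hasDerivAt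
      exact h1.const_mul (-(1/(2*ν)))
    | succ n =>
      have h1 := (bg_smooth (fun t => deriv^[n] (η t)) (bg_smooth_iter η hη n)).1 (max 0 (min t T)) x
      have h2 := h1.const_mul (-(1/(2*ν)))
      simp only [← Function.iterate_succ_apply' deriv n] at h2
      exact h2
  · intro t ht x
    simp only [bgf, hcle t ht, Function.iterate_zero, id]
  · intro n
    have hK : IsCompact (Icc (0:ℝ) T ×ˢ Icc (0:ℝ) 1) := isCompact_Icc.prod isCompact_Icc
    obtain ⟨M, hM⟩ := hK.exists_bound_of_continuousOn (C n).continuousOn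
    refine ⟨M, fun t x => ?_⟩
    obtain ⟨y, hy, hxy⟩ := (P n t).exists_mem_Ico₀ one_pos x
    rw [hxy, ← hcl1]
    exact hM (max 0 (min t T), y) ⟨hclm t, ⟨hy.1, hy.2.le⟩⟩

theorem bgg_facts (ν : ℝ) (u₀ : ℝ → ℝ) (hu₀_per : Function.Periodic u₀ 1) (hu₀ : ContDiff ℝ (⊤ : ℕ∞) u₀)
    (hu₀_mean : ∫ x in (0:ℝ)..1, u₀ x = 0) :
    ∃ g : ℕ → ℝ → ℝ, (∀ n x, HasDerivAt (g n) (g (n + 1) x) x) ∧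
    (∀ n, Function.Periodic (g n) 1) ∧ (∀ n, ∃ B, ∀ x, |g n x| ≤ B) ∧
    (∀ x, 0 < g 0 x) ∧ (∀ x, g 1 x = g 0 x * (-(1/(2*ν)) * u₀ x)) := by
  let φ : ℝ → ℝ := fun x => Real.exp (-(1/(2*ν)) * ∫ y in (0:ℝ)..x, u₀ y)
  have hI : ∀ x, HasDerivAt (fun x => ∫ y in (0:ℝ)..x, u₀ y) (u₀ x) x := fun x =>
    (hu₀.continuous.integral_hasStrictDerivAt 0 x).hasDerivAt
  have hIs : ContDiff ℝ (⊤ : ℕ∞) (fun x => ∫ y in (0:ℝ)..x, u₀ y) := by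
    refine contDiff_infty_iff_deriv.2 ⟨fun x => (hI x).differentiableAt, ?_⟩
    rw [show deriv (fun x => ∫ y in (0:ℝ)..x, u₀ y) = u₀ from funext fun x => (hI x).deriv]
    exact hu₀
  have hφ : ContDiff ℝ (⊤ : ℕ∞) φ := (contDiff_const.mul hIs).exp
  have hφd : ∀ x, HasDerivAt φ (φ x * (-(1/(2*ν)) * u₀ x)) x := fun x => ((hI x).const_mul _).exp
  have hφp : Function.Periodic φ 1 := by
    intro x
    have := bg_prim _ hu₀.continuous hu₀_per hu₀_mean x
    simp only at this
    simp only [φ, this]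
  have hs : ∀ n, ContDiff ℝ (⊤ : ℕ∞) (deriv^[n] φ) := by
    intro n
    induction n with
    | zero => exact hφ
    | succ n ih =>
      rw [Function.iterate_succ_apply']
      exact (contDiff_infty_iff_deriv.1 ih).2
  refine ⟨fun n => deriv^[n] φ, ?_, bg_dper φ hφp, ?_, fun x => Real.exp_pos _, fun x => (hφd x).deriv⟩
  · intro n x
    have := ((contDiff_infty_iff_deriv.1 (hs n)).1 x).hasDerivAt
    rw [← Function.iterate_succ_apply' deriv n] at this
    exact this
  · intro n
    obtain ⟨M, hM⟩ := isCompact_Icc.exists_bound_of_continuousOn (s := Icc (0:ℝ) 1) (hs n).continuous.continuousOn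
    refine ⟨M, fun x => ?_⟩
    obtain ⟨y, hy, hxy⟩ := (bg_dper φ hφp n).exists_mem_Ico₀ one_pos x
    beta_reduce
    rw [hxy]
    exact hM y ⟨hy.1, hy.2.le⟩

/-- Well-posedness of the periodic viscous Burgers equation with smooth mean-zero data
(Theorem 3.4 together with Lemma 3.1 and Theorem 3.8 of the paper): there is exactly one
classical solution on `[0,T] × S¹`, and it has zero spatial mean for all times. -/
theorem stmt_4 (ν T : ℝ) (hν : 0 < ν) (hT : 0 < T)
    (u₀ : ℝ → ℝ) (hu₀_per : Function.Periodic u₀ 1) (hu₀ : ContDiff ℝ (⊤ : ℕ∞) u₀)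
    (hu₀_mean : ∫ x in (0:ℝ)..1, u₀ x = 0)
    (η : ℝ → ℝ → ℝ) (hη_per : ∀ t, Function.Periodic (η t) 1)
    (hη : ContDiff ℝ (⊤ : ℕ∞) (fun p : ℝ × ℝ => η p.1 p.2))
    (hη_mean : ∀ t : ℝ, ∫ x in (0:ℝ)..1, η t x = 0) :
    ∃ u : ℝ → ℝ → ℝ, IsClassicalBurgersSolution ν T η u₀ u ∧
      (∀ t ∈ Icc (0:ℝ) T, ∫ x in (0:ℝ)..1, u t x = 0) ∧
      ∀ u' : ℝ → ℝ → ℝ, IsClassicalBurgersSolution ν T η u₀ u' →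
        ∀ t ∈ Icc (0:ℝ) T, ∀ x : ℝ, u' t x = u t x := by
  obtain ⟨fc, fd, fp, f1, fb⟩ := bgf_facts ν T hT η hη_per hη hη_mean
  obtain ⟨g, gd, gp, gb, gpos, g1⟩ := bgg_facts ν u₀ hu₀_per hu₀ hu₀_mean
  obtain ⟨B0, hB0⟩ := fb 0
  obtain ⟨B7, hB7⟩ := fb 7
  obtain ⟨D0, hD0⟩ := gb 0
  obtain ⟨D7, hD7⟩ := gb 7
  obtain ⟨C, p0, p1, p2, p3, q0, q1, hp, hp1, c0, c1, c2, c3, d0, d1, d2, e0, e1, t0, t1, hi⟩ :=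
    bg_heat ν T (max B0 B7) (max D0 D7) hν hT
      (((abs_nonneg _).trans (hB0 0 0)).trans (le_max_left _ _)) (bgf ν T η) g (fc 0) fd fp
      (fun t x _ => (hB0 t x).trans (le_max_left _ _)) (fun t x _ => (hB7 t x).trans (le_max_right _ _))
      gd gp (fun x _ => (hD0 x).trans (le_max_left _ _)) (fun x _ => (hD7 x).trans (le_max_right _ _))
  have hpos := bg_pos ν T (B0 + |C|) hν hT (fun t x => bgf ν T η 0 t x - C) p0 p1 p2 q0 hp c0 d0 d1 e0
    (fun t _ x => t0 t x)
    (fun t x => (abs_sub _ _).trans (add_le_add_left (hB0 t x) _))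
    (fun x => by rw [hi x]; exact gpos x)
  have hin : ∀ x, -2 * ν * (p1 0 x / p0 0 x) = u₀ x := by
    intro x
    have h0 : p0 0 = g 0 := funext hi
    have h1 : p1 0 x = g 1 x := by
      have h2 := d0 0 x
      rw [h0] at h2
      exact h2.unique (gd 0 x)
    rw [h1, hi x, g1 x]
    have := (gpos x).ne'
    have := hν.ne'
    field_simp
  obtain ⟨hs, hm⟩ := bg_colehopf ν T hν η (fun t x => bgf ν T η 0 t x - C) u₀ p0 p1 p2 p3 q0 q1 hp hp1
    c0 c1 c2 c3 hη.continuous.continuousOn d0 d1 d2 e0 e1 (fun t _ x => t0 t x)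
    (fun t ht x => by have := t1 t x; rwa [f1 t ht x] at this) hpos hin hT
  refine ⟨_, hs, hm, fun u' hu' t ht x => ?_⟩
  have h1 := bg_uniq ν T hν hT η u₀ _ _ hs hu' t ht x
  have h2 := bg_uniq ν T hν hT η u₀ _ _ hu' hs t ht x
  linarith
end

section
/- Let ν ∈ (0,1] and T > 0. Let ξ : [0,T] × S¹ → ℝ be continuous with continuous space derivatives ∂_x^j ξ for j = 1,2,3 and ∫_{S¹} ξ(t,x) dx = 0 for every t, and set K = max(1, sup_{0≤t≤T} max_{0≤j≤3} sup_x |∂_x^j ξ(t,x)|). Let u : [0,T] × S¹ → ℝ be continuous with ∫_{S¹} u(t,x) dx = 0 for every t and with continuous space derivatives ∂_x^j u for j = 1,2,3 on [0,T] × S¹, and suppose v := u − ξ has continuous derivatives ∂_t v and ∂_t ∂_x v on (0,T] × S¹ and satisfies pointwise ∂_t v + u·∂_x u − ν·∂_x² v = ν·∂_x² ξ on (0,T] × S¹. Then there exists a constant C = C(T) > 0, independent of u, ξ and of ν ∈ (0,1], such that for every θ ∈ (0,T]: (a) sup_{θ≤t≤T} sup_x (∂_x u(t,x))⁺ ≤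 C·θ⁻¹·K, and (b) sup_{θ≤t≤T} ( sup_x |u(t,x)| + ∫_{S¹} |∂_x u(t,x)| dx ) ≤ C·θ⁻¹·K, where a⁺ = max(a,0). -/
open Set

lemma kr_space (g g' : ℝ → ℝ) (M : ℝ) (hM : 0 ≤ M) (hper : Function.Periodic g 1)
    (hd : ∀ x, HasDerivAt g (g' x) x) (hc : Continuous g') (hm : ∫ x in (0:ℝ)..1, g x = 0)
    (hle : ∀ x, g' x ≤ M) : (∀ x, |g x| ≤ M) ∧ ∫ x in (0:ℝ)..1, |g' x| ≤ 2 * M := by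
  have hdiff : Differentiable ℝ g := fun x => (hd x).differentiableAt
  have hgc : Continuous g := hdiff.continuous
  have hinc : ∀ x y, x ≤ y → g y - g x ≤ M * (y - x) := fun x y hxy =>
    image_sub_le_mul_sub_of_deriv_le hdiff (fun z => by rw [(hd z).deriv]; exact hle z) hxy
  have key : ∀ x ∈ Icc (0:ℝ) 1, ∀ y ∈ Icc (0:ℝ) 1, g x - g y ≤ M := by
    intro x hx y hy
    rcases le_total y x with h | h
    · have := hinc y x h
      nlinarith [hx.1, hx.2, hy.1, hy.2]
    · have h1 := hinc y (x + 1) (by linarith [hx.1, hy.2])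
      rw [hper x] at h1
      nlinarith
  constructor
  · have h01 : ∀ x ∈ Icc (0:ℝ) 1, |g x| ≤ M := by
      intro x hx
      rw [abs_le]
      constructor
      · have : ∫ y in (0:ℝ)..1, g y ≤ ∫ y in (0:ℝ)..1, (M + g x) := by
          apply intervalIntegral.integral_mono_on zero_le_one (hgc.intervalIntegrable _ _)
            (by simp)
          intro y hy
          linarith [key y hy x hx]
        rw [hm] at this
        simp at this
        linarith
      · have : ∫ y in (0:ℝ)..1, (g x - M) ≤ ∫ y in (0:ℝ)..1, g y := by
          apply intervalIntegral.integral_mono_on zero_le_one (by simp)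
            (hgc.intervalIntegrable _ _)
          intro y hy
          linarith [key x hx y hy]
        rw [hm] at this
        simp at this
        linarith
    intro x
    obtain ⟨y, hy, hxy⟩ := hper.exists_mem_Ico₀ one_pos x
    rw [hxy]
    exact h01 y ⟨hy.1, hy.2.le⟩
  · have h1 : ∫ x in (0:ℝ)..1, |g' x| ≤ ∫ x in (0:ℝ)..1, (2 * M - g' x) := by
      apply intervalIntegral.integral_mono_on zero_le_one (hc.abs.intervalIntegrable _ _)
        (Continuous.intervalIntegrable (by fun_prop) _ _)
      intro y _
      rw [abs_le]
      constructor <;> linarith [hle y]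
    rw [intervalIntegral.integral_sub (by simp) (hc.intervalIntegrable _ _),
      intervalIntegral.integral_eq_sub_of_hasDerivAt (fun x _ => hd x)
        (hc.intervalIntegrable _ _)] at h1
    have h2 := hper 0
    simp at h1 h2
    linarith

lemma kr_slice {T : ℝ} {f : ℝ × ℝ → ℝ} (h : ContinuousOn f (Icc 0 T ×ˢ univ)) (x : ℝ) :
    ContinuousOn (fun t => f (t, x)) (Icc 0 T) :=
  h.comp (by fun_prop) (fun t ht => ⟨ht, mem_univ _⟩)

lemma kr_time (T : ℝ) (V V1 F G : ℝ → ℝ → ℝ)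
    (hV : ∀ t ∈ Icc (0:ℝ) T, ∀ x, HasDerivAt (V t) (V1 t x) x)
    (hF : ∀ t ∈ Icc (0:ℝ) T, ∀ x, HasDerivAt (F t) (G t x) x)
    (hFc : ContinuousOn (fun p : ℝ × ℝ => F p.1 p.2) (Icc 0 T ×ˢ univ))
    (hGc : ContinuousOn (fun p : ℝ × ℝ => G p.1 p.2) (Icc 0 T ×ˢ univ))
    (ht : ∀ t ∈ Ioc (0:ℝ) T, ∀ x, HasDerivAt (fun s => V s x) (F t x) t)
    (s : ℝ) (hs : 0 < s) (t0 : ℝ) (hst : s < t0) (ht0 : t0 ≤ T) (x : ℝ) :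
    HasDerivWithinAt (fun t => V1 t x) (G t0 x) (Icc s T) t0 := by
  have hsub : Icc s T ⊆ Icc 0 T := Icc_subset_Icc hs.le le_rfl
  have hFs : ∀ y, ContinuousOn (fun t => F t y) (Icc 0 T) := kr_slice hFc
  have hGs : ∀ y, ContinuousOn (fun t => G t y) (Icc 0 T) := kr_slice hGc
  have hII : ∀ H : ℝ → ℝ, ContinuousOn H (Icc 0 T) → ∀ t ∈ Icc s T,
      IntervalIntegrable H MeasureTheory.volume s t := by
    intro H hH t htt
    apply ContinuousOn.intervalIntegrable
    rw [uIcc_of_le htt.1]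
    exact hH.mono (Icc_subset_Icc hs.le htt.2)
  have hint : ∀ t ∈ Icc s T, V1 t x = V1 s x + ∫ τ in s..t, G τ x := by
    intro t htt
    have h1 : ∀ y, ∫ τ in s..t, F τ y = V t y - V s y := by
      intro y
      apply intervalIntegral.integral_eq_sub_of_hasDerivAt (f := fun τ => V τ y) _ (hII _ (hFs y) t htt)
      intro τ hτ
      rw [uIcc_of_le htt.1] at hτ
      exact ht τ ⟨hs.trans_le hτ.1, hτ.2.trans htt.2⟩ y
    obtain ⟨B, hB⟩ := (isCompact_Icc.prod isCompact_Icc :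
      IsCompact (Icc (0:ℝ) T ×ˢ Icc (x-1) (x+1))).exists_bound_of_continuousOn
        (hGc.mono (prod_mono le_rfl (subset_univ _)))
    have hmem : ∀ τ ∈ uIoc s t, τ ∈ Icc 0 T := by
      intro τ hτ
      rw [uIoc_of_le htt.1] at hτ
      exact ⟨hs.le.trans hτ.1.le, hτ.2.trans htt.2⟩
    have h2 := (intervalIntegral.hasDerivAt_integral_of_dominated_loc_of_deriv_le
      (μ := MeasureTheory.volume) (a := s) (b := t)
      (F := fun y τ => F τ y) (F' := fun y τ => G τ y) (x₀ := x) (bound := fun _ => B)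
      (s := Icc (x-1) (x+1)) (Icc_mem_nhds (by linarith) (by linarith))
      (Filter.Eventually.of_forall fun y => by
        have := (hII _ (hFs y) t htt).aestronglyMeasurable
        rwa [uIoc_of_le htt.1])
      (hII _ (hFs x) t htt)
      (by
        have := (hII _ (hGs x) t htt).aestronglyMeasurable
        rwa [uIoc_of_le htt.1])
      (Filter.Eventually.of_forall fun τ hτ y hy => hB (τ, y) ⟨hmem τ hτ, hy⟩)
      (by simp)
      (Filter.Eventually.of_forall fun τ hτ y hy => hF τ (hmem τ hτ) y)).2
    have h3 := ((hV t (hsub htt) x).sub (hV s (hsub ⟨le_rfl, htt.1.trans htt.2⟩) x))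
    have h4 : (fun y => ∫ τ in s..t, F τ y) = V t - V s := by
      funext y; exact h1 y
    rw [h4] at h2
    linarith [h2.unique h3]
  have hmem0 : t0 ∈ Icc s T := ⟨hst.le, ht0⟩
  have : Fact (t0 ∈ Icc s T) := ⟨hmem0⟩
  have h5 := intervalIntegral.integral_hasDerivWithinAt_right (s := Icc s T) (t := Icc s T)
    (hII _ (hGs x) t0 hmem0)
    (((hGs x).mono hsub).stronglyMeasurableAtFilter_nhdsWithin measurableSet_Icc _)
    (((hGs x).mono hsub) t0 hmem0)
  exact (h5.const_add (V1 s x)).congr hint (hint t0 hmem0)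

lemma kr_second (f f1 f2 : ℝ → ℝ) (x0 : ℝ) (h1 : ∀ x, HasDerivAt f (f1 x) x)
    (h2 : ∀ x, HasDerivAt f1 (f2 x) x) (hmax : ∀ x, f x ≤ f x0) : f1 x0 = 0 ∧ f2 x0 ≤ 0 := by
  have hloc : IsLocalMax f x0 := Filter.Eventually.of_forall hmax
  have hz := hloc.hasDerivAt_eq_zero (h1 x0)
  refine ⟨hz, ?_⟩
  by_contra! hpos
  have hd : deriv f = f1 := funext fun x => (h1 x).deriv
  have hd2 : deriv f1 = f2 := funext fun x => (h2 x).deriv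
  have hmin : IsLocalMin f x0 := isLocalMin_of_deriv_deriv_pos (by rw [hd, hd2]; exact hpos)
    (by rw [hd]; exact hz) (h1 x0).continuousAt
  have hev : f =ᶠ[nhds x0] fun _ => f x0 := by
    filter_upwards [hmin] with y hy using le_antisymm (hmax y) hy
  have := hev.deriv.deriv.eq_of_nhds
  rw [hd, hd2] at this
  simp at this
  linarith

lemma kr_alg (T K ν t m a b c w : ℝ) (ht : 0 < t) (htT : t ≤ T) (hK : 1 ≤ K)
    (hν : 0 < ν) (hν1 : ν ≤ 1) (hm : 0 < m) (ha : |a| ≤ K) (hb : |b| ≤ K) (hc : |c| ≤ K)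
    (hw : |w| ≤ m + K)
    (h : 0 ≤ m + t * (ν * c - (m + a)^2 - w * b)) : t * m ≤ (1 + 6 * T) * K := by
  have h1 : ν * c ≤ K := by
    have := (abs_le.1 hc).2
    nlinarith
  have h2 : - (w * b) ≤ (m + K) * K := by
    have : |w * b| ≤ (m + K) * K := by rw [abs_mul]; gcongr
    linarith [(abs_le.1 this).1]
  have h3 : m ^ 2 - 2 * m * K ≤ (m + a)^2 := by
    nlinarith [(abs_le.1 ha).1, sq_nonneg a]
  have h4 : 0 ≤ m + t * (K - (m^2 - 2 * m * K) + (m+K)*K) := by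
    refine h.trans ?_
    gcongr
    linarith
  have h5 : (t*m)^2 ≤ (t * m) * K + 3 * (t * T) * m * K + 2 * T^2*K^2 := by
    have h6 : 0 ≤ t * (m + t * (K - (m^2 - 2 * m * K) + (m+K)*K)) := by positivity
    have h7 : t^2 * (K + K^2) ≤ T^2 * (2 * K^2) := by
      gcongr; nlinarith
    have h8 : t * m ≤ t * m * K := by
      have : 0 < t * m := by positivity
      nlinarith
    have h9 : t^2 * (m * K) ≤ t * T * (m * K) := by
      have : t ^ 2 ≤ t * T := by nlinarith
      gcongr
    nlinarith
  by_contra! hlt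
  have hN : 0 < t * m := by positivity
  have hT : 0 < T := ht.trans_le htT
  have : (1 + 6 * T) * K * (t * m) < (t*m)^2 := by nlinarith
  have h10 : 3 * T * K * (t * m) < 2 * T^2 * K^2 := by nlinarith
  have h11 : 3 * T * K * ((1 + 6 * T) * K) < 3 * T * K * (t * m) := by
    gcongr
  nlinarith [mul_pos hT (by positivity : 0 < K^2), mul_pos (mul_pos hT hT) (by positivity : 0 < K^2)]

lemma kr_core (T : ℝ) (ν : ℝ) (hν : 0 < ν) (hν1 : ν ≤ 1) (U Z : ℕ → ℝ → ℝ → ℝ)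
    (K : ℝ) (hK : 1 ≤ K)
    (hUp : ∀ j t, Function.Periodic (U j t) 1) (hZp : ∀ j t, Function.Periodic (Z j t) 1)
    (hUd : ∀ t ∈ Icc (0:ℝ) T, ∀ j < 3, ∀ x, HasDerivAt (U j t) (U (j+1) t x) x)
    (hZd : ∀ t ∈ Icc (0:ℝ) T, ∀ j < 3, ∀ x, HasDerivAt (Z j t) (Z (j+1) t x) x)
    (hUc : ∀ j ≤ 3, ContinuousOn (fun p : ℝ × ℝ => U j p.1 p.2) (Icc 0 T ×ˢ univ))
    (hZc : ∀ j ≤ 3, ContinuousOn (fun p : ℝ × ℝ => Z j p.1 p.2) (Icc 0 T ×ˢ univ))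
    (hUm : ∀ t ∈ Icc (0:ℝ) T, ∫ x in (0:ℝ)..1, U 0 t x = 0)
    (hZK : ∀ t ∈ Icc (0:ℝ) T, ∀ j ≤ 3, ∀ x : ℝ, |Z j t x| ≤ K)
    (heq : ∀ t ∈ Ioc (0:ℝ) T, ∀ x, HasDerivAt (fun s => U 0 s x - Z 0 s x)
      (ν * U 2 t x - U 0 t x * U 1 t x) t)
    (t : ℝ) (ht : t ∈ Icc 0 T) (x : ℝ) : t * (U 1 t x - Z 1 t x) ≤ (1 + 6 * T) * K := by
  have hT : 0 ≤ T := ht.1.trans ht.2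
  have hUcx : ∀ t ∈ Icc (0:ℝ) T, ∀ j ≤ 3, Continuous (U j t) := fun t ht j hj =>
    continuousOn_univ.1 ((hUc j hj).comp (f := fun x => (t, x)) (by fun_prop)
      (fun x _ => ⟨ht, mem_univ _⟩))
  obtain ⟨⟨t0, x0⟩, ⟨ht0, hx0⟩, hmax⟩ := (isCompact_Icc.prod isCompact_Icc :
      IsCompact (Icc (0:ℝ) T ×ˢ Icc (0:ℝ) 1)).exists_isMaxOn
        ⟨(0, 0), by simp [hT]⟩
        (f := fun p : ℝ × ℝ => p.1 * (U 1 p.1 p.2 - Z 1 p.1 p.2))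
        ((continuousOn_fst.mul ((hUc 1 (by norm_num)).sub (hZc 1 (by norm_num)))).mono
          (prod_mono le_rfl (subset_univ _)))
  simp only at ht0 hx0
  have hmax' : ∀ t ∈ Icc 0 T, ∀ x, t * (U 1 t x - Z 1 t x) ≤ t0 * (U 1 t0 x0 - Z 1 t0 x0) := by
    intro t ht x
    obtain ⟨y, hy, hxy⟩ := ((hUp 1 t).sub (hZp 1 t)).exists_mem_Ico₀ one_pos x
    simp only [Pi.sub_apply] at hxy
    rw [hxy]
    exact hmax (show (t, y) ∈ _ from ⟨ht, hy.1, hy.2.le⟩)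
  refine (hmax' t ht x).trans ?_
  by_cases hN : t0 * (U 1 t0 x0 - Z 1 t0 x0) ≤ 0
  · exact hN.trans (by positivity)
  push Not at hN
  have ht0pos : 0 < t0 := lt_of_le_of_ne ht0.1 (by rintro rfl; simp at hN)
  have hm : 0 < U 1 t0 x0 - Z 1 t0 x0 := by
    by_contra! h
    nlinarith
  set m := U 1 t0 x0 - Z 1 t0 x0 with hmdef
  have hsp : ∀ x, U 1 t0 x - Z 1 t0 x ≤ m := fun x => le_of_mul_le_mul_left (hmax' t0 ht0 x) ht0pos
  obtain ⟨hx1, hx2⟩ := kr_second (fun x => U 1 t0 x - Z 1 t0 x) (fun x => U 2 t0 x - Z 2 t0 x)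
    (fun x => U 3 t0 x - Z 3 t0 x) x0
    (fun x => (hUd t0 ht0 1 (by norm_num) x).sub (hZd t0 ht0 1 (by norm_num) x))
    (fun x => (hUd t0 ht0 2 (by norm_num) x).sub (hZd t0 ht0 2 (by norm_num) x)) hsp
  have hu : |U 0 t0 x0| ≤ m + K := by
    refine (kr_space (U 0 t0) (U 1 t0) (m + K) (by linarith) (hUp 0 t0)
      (hUd t0 ht0 0 (by norm_num)) (hUcx t0 ht0 1 (by norm_num)) (hUm t0 ht0) ?_).1 x0
    intro x
    linarith [hsp x, (abs_le.1 (hZK t0 ht0 1 (by norm_num) x)).2]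
  have c0 := hUc 0 (by norm_num)
  have c1 := hUc 1 (by norm_num)
  have c2 := hUc 2 (by norm_num)
  have c3 := hUc 3 (by norm_num)
  have htime := kr_time T (fun t x => U 0 t x - Z 0 t x) (fun t x => U 1 t x - Z 1 t x)
    (fun t x => ν * U 2 t x - U 0 t x * U 1 t x)
    (fun t x => ν * U 3 t x - (U 1 t x * U 1 t x + U 0 t x * U 2 t x))
    (fun t ht x => (hUd t ht 0 (by norm_num) x).sub (hZd t ht 0 (by norm_num) x))
    (fun t ht x => ((hUd t ht 2 (by norm_num) x).const_mul ν).sub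
      ((hUd t ht 0 (by norm_num) x).mul (hUd t ht 1 (by norm_num) x)))
    ((continuousOn_const.mul c2).sub (c0.mul c1))
    ((continuousOn_const.mul c3).sub ((c1.mul c1).add (c0.mul c2)))
    heq (t0/2) (by linarith) t0 (by linarith) ht0.2 x0
  have hprod := (hasDerivWithinAt_id t0 (Icc (t0/2) T)).mul htime
  have hmaxon : IsMaxOn (fun t => t * (U 1 t x0 - Z 1 t x0)) (Icc (t0/2) T) t0 :=
    fun t ht => hmax' t ⟨by linarith [ht.1], ht.2⟩ x0
  have hneg := hmaxon.localize.hasFDerivWithinAt_nonpos hprod.hasFDerivWithinAt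
    (y := t0/2 - t0) (mem_posTangentConeAt_of_segment_subset (by
      rw [add_sub_cancel]
      rw [segment_symm, segment_eq_Icc (by linarith)]
      exact Icc_subset_Icc le_rfl ht0.2))
  simp at hneg
  have hder : 0 ≤ m + t0 * (ν * U 3 t0 x0 - (U 1 t0 x0 * U 1 t0 x0 + U 0 t0 x0 * U 2 t0 x0)) := by
    by_contra! h
    nlinarith
  refine kr_alg T K ν t0 m (Z 1 t0 x0) (Z 2 t0 x0) (Z 3 t0 x0) (U 0 t0 x0) ht0pos ht0.2 hK hν hν1 hm
    (hZK t0 ht0 1 (by norm_num) x0) (hZK t0 ht0 2 (by norm_num) x0)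
    (hZK t0 ht0 3 (by norm_num) x0) hu ?_
  have e1 : U 1 t0 x0 = m + Z 1 t0 x0 := by rw [hmdef]; ring
  have e2 : U 2 t0 x0 = Z 2 t0 x0 := by linarith
  rw [e1, e2] at hder
  refine hder.trans ?_
  have : ν * U 3 t0 x0 ≤ ν * Z 3 t0 x0 := by
    apply mul_le_mul_of_nonneg_left _ hν.le
    linarith
  have h9 := mul_le_mul_of_nonneg_left this ht0pos.le
  nlinarith

lemma kr_periodic_iter (f : ℝ → ℝ) (hf : Function.Periodic f 1) (j : ℕ) :
    Function.Periodic (iteratedDeriv j f) 1 := by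
  induction j with
  | zero => simpa using hf
  | succ n ih =>
    intro x
    rw [iteratedDeriv_succ, ← deriv_comp_add_const]
    congr 1
    funext y
    exact ih y


/-- Kružkov's maximum principle (Theorem 4.2 of the paper). `u` solves the forced
Burgers equation `u_t + u u_x − ν u_xx = ∂ₜξ` on `(0,T] × S¹` (S¹ = ℝ/ℤ, functions
1-periodic in space), in the sense that `v = u − ξ` classically solves
`v_t + u u_x − ν v_xx = ν ξ_xx`.  If `K ≥ 1` bounds `|∂ₓ^j ξ|` for `j = 0,…,3` on
`[0,T] × S¹`, then `sup_x (u_x)⁺`, `|u|_∞` and `|u_x|_{L¹}` at time `t ∈ [θ,T]` are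
bounded by `C θ⁻¹ K`, with `C = C(T)` independent of `u`, `ξ` and of `ν ∈ (0,1]`. -/
theorem stmt_5 (T : ℝ) (hT : 0 < T) :
    ∃ C > (0:ℝ), ∀ ν ∈ Ioc (0:ℝ) 1,
      ∀ ξ u : ℝ → ℝ → ℝ, ∀ K : ℝ,
        -- regularity, periodicity and zero mean of the force ξ
        (∀ t, Function.Periodic (ξ t) 1) →
        (∀ t ∈ Icc (0:ℝ) T, ContDiff ℝ 3 (ξ t)) →
        (∀ j : ℕ, j ≤ 3 →
          ContinuousOn (fun p : ℝ × ℝ => iteratedDeriv j (ξ p.1) p.2) (Icc 0 T ×ˢ univ)) →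
        (∀ t ∈ Icc (0:ℝ) T, ∫ x in (0:ℝ)..1, ξ t x = 0) →
        -- K bounds the C³ norm of ξ, K ≥ 1
        1 ≤ K →
        (∀ t ∈ Icc (0:ℝ) T, ∀ j : ℕ, j ≤ 3 → ∀ x : ℝ, |iteratedDeriv j (ξ t) x| ≤ K) →
        -- regularity, periodicity and zero mean of u
        (∀ t, Function.Periodic (u t) 1) →
        (∀ t ∈ Icc (0:ℝ) T, ContDiff ℝ 3 (u t)) →
        (∀ j : ℕ, j ≤ 3 →
          ContinuousOn (fun p : ℝ × ℝ => iteratedDeriv j (u p.1) p.2) (Icc 0 T ×ˢ univ)) →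
        (∀ t ∈ Icc (0:ℝ) T, ∫ x in (0:ℝ)..1, u t x = 0) →
        -- v = u − ξ has continuous ∂ₜv and ∂ₜ∂ₓv on (0,T] × S¹
        (∀ x : ℝ, ∀ t ∈ Ioc (0:ℝ) T, DifferentiableAt ℝ (fun s => u s x - ξ s x) t) →
        ContinuousOn (fun p : ℝ × ℝ => deriv (fun s => u s p.2 - ξ s p.2) p.1)
          (Ioc 0 T ×ˢ univ) →
        (∀ x : ℝ, ∀ t ∈ Ioc (0:ℝ) T,
          DifferentiableAt ℝ (fun s => deriv (fun y => u s y - ξ s y) x) t) →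
        ContinuousOn
          (fun p : ℝ × ℝ => deriv (fun s => deriv (fun y => u s y - ξ s y) p.2) p.1)
          (Ioc 0 T ×ˢ univ) →
        -- the equation v_t + u u_x − ν v_xx = ν ξ_xx holds pointwise on (0,T] × S¹
        (∀ t ∈ Ioc (0:ℝ) T, ∀ x : ℝ,
          deriv (fun s => u s x - ξ s x) t + u t x * deriv (u t) x
            - ν * deriv (deriv (fun y => u t y - ξ t y)) x
          = ν * iteratedDeriv 2 (ξ t) x) →
        ∀ θ ∈ Ioc (0:ℝ) T,
          (∀ t ∈ Icc θ T, ∀ x : ℝ, max (deriv (u t) x) 0 ≤ C * θ⁻¹ * K) ∧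
          (∀ t ∈ Icc θ T, ∀ x : ℝ,
            |u t x| + ∫ y in (0:ℝ)..1, |deriv (u t) y| ≤ C * θ⁻¹ * K) := by

  refine ⟨4 * (1 + 7 * T), by positivity, ?_⟩
  intro ν hν ξ u K hξp hξd hξc _ hK hξK hup hud huc hum hvd _ _ _ heq θ hθ
  have hder : ∀ f : ℝ → ℝ → ℝ, (∀ t ∈ Icc (0:ℝ) T, ContDiff ℝ 3 (f t)) →
      ∀ t ∈ Icc (0:ℝ) T, ∀ j < 3, ∀ x,
        HasDerivAt (iteratedDeriv j (f t)) (iteratedDeriv (j+1) (f t) x) x := by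
    intro f hf t ht j hj x
    rw [iteratedDeriv_succ]
    exact ((hf t ht).differentiable_iteratedDeriv j (by exact_mod_cast hj) x).hasDerivAt
  have hU := hder u hud
  have hZ := hder ξ hξd
  have hcore := kr_core T ν hν.1 hν.2 (fun j t => iteratedDeriv j (u t))
    (fun j t => iteratedDeriv j (ξ t)) K hK (fun j t => kr_periodic_iter _ (hup t) j)
    (fun j t => kr_periodic_iter _ (hξp t) j) hU hZ huc hξc
    (by simpa using hum) hξK (by
      intro t ht x
      have ht' : t ∈ Icc 0 T := ⟨ht.1.le, ht.2⟩
      have h := heq t ht x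
      have e1 : deriv (fun y => u t y - ξ t y)
          = fun y => iteratedDeriv 1 (u t) y - iteratedDeriv 1 (ξ t) y := by
        funext y
        have h0 := (hU t ht' 0 (by norm_num) y).sub (hZ t ht' 0 (by norm_num) y)
        simp only [iteratedDeriv_zero] at h0
        exact h0.deriv
      have e2 : deriv (deriv (fun y => u t y - ξ t y)) x
          = iteratedDeriv 2 (u t) x - iteratedDeriv 2 (ξ t) x := by
        rw [e1]
        exact ((hU t ht' 1 (by norm_num) x).sub (hZ t ht' 1 (by norm_num) x)).deriv
      rw [e2] at h
      have h1 := (hvd x t ht).hasDerivAt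
      simp only [iteratedDeriv_zero, iteratedDeriv_one]
      have e3 : ν * iteratedDeriv 2 (u t) x - u t x * deriv (u t) x
          = deriv (fun s => u s x - ξ s x) t := by linarith
      rw [e3]
      exact h1)
  have hKpos : 0 < K := by linarith
  have hθ0 : 0 < θ := hθ.1
  have hM : 0 ≤ (1 + 7 * T) * θ⁻¹ * K := by positivity
  have hux : ∀ t ∈ Icc θ T, ∀ x, deriv (u t) x ≤ (1 + 7 * T) * θ⁻¹ * K := by
    intro t ht x
    have ht' : t ∈ Icc 0 T := ⟨hθ0.le.trans ht.1, ht.2⟩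
    have h := hcore t ht' x
    have hz := (abs_le.1 (hξK t ht' 1 (by norm_num) x)).2
    simp only [iteratedDeriv_one] at h hz
    have h2 : θ * deriv (u t) x ≤ (1 + 7 * T) * K := by
      by_cases hneg : deriv (u t) x ≤ 0
      · exact (mul_nonpos_of_nonneg_of_nonpos hθ0.le hneg).trans (by positivity)
      · push Not at hneg
        have a1 : θ * deriv (u t) x ≤ t * deriv (u t) x := by
          gcongr
          exact ht.1
        have a2 : t * deriv (ξ t) x ≤ T * K :=
          (mul_le_mul_of_nonneg_left hz ht'.1).trans (by gcongr; exact ht.2)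
        nlinarith
    have h3 : deriv (u t) x = θ⁻¹ * (θ * deriv (u t) x) := by field_simp
    rw [h3]
    calc θ⁻¹ * (θ * deriv (u t) x) ≤ θ⁻¹ * ((1 + 7 * T) * K) := by gcongr
      _ = _ := by ring
  constructor
  · intro t ht x
    refine max_le ?_ (by positivity)
    linarith [hux t ht x]
  · intro t ht x
    have ht' : t ∈ Icc 0 T := ⟨hθ0.le.trans ht.1, ht.2⟩
    have hc1 : Continuous (deriv (u t)) := (hud t ht').continuous_deriv (by norm_num)
    obtain ⟨h1, h2⟩ := kr_space (u t) (deriv (u t)) _ hM (hup t)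
      (fun x => ((hud t ht').differentiable (by norm_num) x).hasDerivAt) hc1 (hum t ht')
      (hux t ht)
    linarith [h1 x]
end

section
/- Let ν > 0 and T > 0. Let u₁, u₂ : [0,T] × S¹ → ℝ be continuous with continuous space derivatives ∂_x u₁, ∂_x u₂, and suppose the difference w := u₁ − u₂ has continuous derivatives ∂_t w, ∂_x w, ∂_x² w on [0,T] × S¹ and satisfies pointwise ∂_t w + (1/2)·∂_x((u₁ + u₂)·w) − ν·∂_x² w = 0 on [0,T] × S¹. Then for every t ∈ [0,T], ∫_{S¹} |u₁(t,x) − u₂(t,x)| dx ≤ ∫_{S¹} |u₁(0,x) − u₂(0,x)| dx. -/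
open Set

noncomputable def SS (e z : ℝ) : ℝ := Real.sqrt (z^2 + e^2)

lemma SS_pos {e : ℝ} (he : 0 < e) (z : ℝ) : 0 < SS e z := Real.sqrt_pos.2 (by positivity)
lemma SS_sq (e z : ℝ) : SS e z ^ 2 = z^2 + e^2 := Real.sq_sqrt (by positivity)
lemma SS_cont (e : ℝ) : Continuous (SS e) := by unfold SS; fun_prop
lemma SS_deriv {e : ℝ} (he : 0 < e) (z : ℝ) : HasDerivAt (SS e) (z / SS e z) z := by
  have h : HasDerivAt (fun z : ℝ => z^2 + e^2) (2*z) z := by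
    simpa using (hasDerivAt_pow 2 z).add_const (e^2)
  have := h.sqrt (by positivity)
  have h2 : z / SS e z = 2 * z / (2 * √(z ^ 2 + e ^ 2)) := by
    rw [mul_div_mul_left _ _ two_ne_zero]; rfl
  rw [h2]; exact this
lemma SS_deriv2 {e : ℝ} (he : 0 < e) (z : ℝ) :
    HasDerivAt (fun z => z / SS e z) (e^2 / SS e z ^ 3) z := by
  have := (hasDerivAt_id' z).div (SS_deriv he z) (SS_pos he z).ne'
  have h := SS_sq e z
  have h0 := SS_pos he z
  have h2 : e^2 / SS e z ^ 3 = (1 * SS e z - z * (z / SS e z)) / SS e z ^ 2 := by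
    field_simp
    linarith
  rw [h2]; exact this
lemma SS_bound {e : ℝ} (he : 0 < e) (z : ℝ) : e^2 / SS e z ^ 3 * z^2 ≤ e := by
  have h := SS_sq e z
  have h0 := SS_pos he z
  have h1 : e ≤ SS e z := by
    apply Real.le_sqrt_of_sq_le; nlinarith [sq_nonneg z]
  rw [div_mul_eq_mul_div, div_le_iff₀ (by positivity)]
  have h2 : z^2 ≤ SS e z ^2 := by rw [h]; nlinarith
  calc e^2 * z^2 = e * (e * z^2) := by ring
    _ ≤ e * (SS e z * SS e z ^ 2) := by gcongr
    _ = _ := by ring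
lemma SS_ge (e z : ℝ) : |z| ≤ SS e z := by
  apply Real.abs_le_sqrt; nlinarith [sq_nonneg e]
lemma SS_le {e : ℝ} (he : 0 < e) (z : ℝ) : SS e z ≤ |z| + e := by
  apply Real.sqrt_le_iff.2
  refine ⟨by positivity, ?_⟩
  nlinarith [sq_abs z, abs_nonneg z]

lemma slice {e ν A : ℝ} (he : 0 < e) (hν : 0 < ν) (w w' w'' a a' : ℝ → ℝ)
    (hw : ∀ x, HasDerivAt w (w' x) x) (hw' : ∀ x, HasDerivAt w' (w'' x) x)
    (ha : ∀ x, HasDerivAt a (a' x) x) (cw : Continuous w'') (ca : Continuous a')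
    (p0 : w 1 = w 0) (p1 : w' 1 = w' 0) (p2 : a 1 = a 0)
    (hA : ∀ x ∈ Icc (0:ℝ) 1, a x ^ 2 ≤ A) :
    ∫ x in (0:ℝ)..1, w x / SS e (w x) * (ν * w'' x - (a' x * w x + a x * w' x))
      ≤ e * A / (4 * ν) := by
  have c0 : Continuous w := continuous_iff_continuousAt.2 fun x => (hw x).continuousAt
  have c1 : Continuous w' := continuous_iff_continuousAt.2 fun x => (hw' x).continuousAt
  have c2 : Continuous a := continuous_iff_continuousAt.2 fun x => (ha x).continuousAt
  have cS : Continuous fun x => SS e (w x) := (SS_cont e).comp c0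
  have nz : ∀ x, SS e (w x) ≠ 0 := fun x => (SS_pos he _).ne'
  have nz3 : ∀ x, SS e (w x) ^ 3 ≠ 0 := fun x => pow_ne_zero _ (nz x)
  have cq : Continuous fun x => w x / SS e (w x) := c0.div cS nz
  have cP : Continuous fun x => e^2 / SS e (w x) ^ 3 := continuous_const.div (cS.pow 3) nz3
  have cG : Continuous fun x => w x / SS e (w x) * (ν * w'' x - (a' x * w x + a x * w' x)) := by
    fun_prop
  set F' : ℝ → ℝ := fun x => (e^2 / SS e (w x) ^ 3 * w' x) * (ν * w' x - a x * w x)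
    + w x / SS e (w x) * (ν * w'' x - (a' x * w x + a x * w' x)) with hF'
  have cF' : Continuous F' := by rw [hF']; fun_prop
  have hF : ∀ x, HasDerivAt (fun x => w x / SS e (w x) * (ν * w' x - a x * w x)) (F' x) x := by
    intro x
    have h1 : HasDerivAt (fun x => w x / SS e (w x)) (e^2 / SS e (w x) ^ 3 * w' x) x :=
      (SS_deriv2 he (w x)).comp x (hw x)
    exact h1.mul (((hw' x).const_mul ν).sub ((ha x).mul (hw x)))
  have hint : ∫ x in (0:ℝ)..1, F' x = 0 := by
    rw [intervalIntegral.integral_eq_sub_of_hasDerivAt (fun x _ => hF x)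
      (cF'.intervalIntegrable _ _), p0, p1, p2, sub_self]
  calc _ ≤ ∫ x in (0:ℝ)..1, (F' x + e * A / (4 * ν)) := by
        apply intervalIntegral.integral_mono_on zero_le_one (cG.intervalIntegrable _ _)
          ((cF'.add continuous_const).intervalIntegrable _ _)
        intro x hx
        have hP : 0 ≤ e^2 / SS e (w x) ^ 3 := by have := SS_pos he (w x); positivity
        have hB := SS_bound he (w x)
        have hA := hA x hx
        change _ ≤ F' x + _
        simp only [hF']
        generalize e^2 / SS e (w x) ^ 3 = P at *
        have k1 : P * w x ^2 * a x ^2 ≤ e * A := by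
          apply mul_le_mul hB hA (sq_nonneg _) he.le
        have k2 : P * w' x * (a x * w x - ν * w' x) ≤ e * A / (4 * ν) := by
          rw [le_div_iff₀ (by positivity)]
          nlinarith [mul_nonneg hP (sq_nonneg (2 * ν * w' x - a x * w x))]
        linarith
    _ = _ := by
        rw [intervalIntegral.integral_add (cF'.intervalIntegrable _ _) (by simp), hint]; simp

lemma evolve {e ν A t : ℝ} (he : 0 < e) (hν : 0 < ν) (ht : 0 ≤ t) (w wt wx wxx a ax : ℝ → ℝ → ℝ)
    (hwt : ∀ s ∈ Icc 0 t, ∀ x, HasDerivAt (fun s => w s x) (wt s x) s)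
    (hw : ∀ s ∈ Icc 0 t, ∀ x, HasDerivAt (w s) (wx s x) x)
    (hwx : ∀ s ∈ Icc 0 t, ∀ x, HasDerivAt (wx s) (wxx s x) x)
    (ha : ∀ s ∈ Icc 0 t, ∀ x, HasDerivAt (a s) (ax s x) x)
    (cw : ContinuousOn (fun p : ℝ × ℝ => w p.1 p.2) (Icc 0 t ×ˢ univ))
    (cwt : ContinuousOn (fun p : ℝ × ℝ => wt p.1 p.2) (Icc 0 t ×ˢ univ))
    (cwxx : ∀ s ∈ Icc 0 t, Continuous (wxx s)) (cax : ∀ s ∈ Icc 0 t, Continuous (ax s))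
    (p0 : ∀ s ∈ Icc 0 t, w s 1 = w s 0) (p1 : ∀ s ∈ Icc 0 t, wx s 1 = wx s 0)
    (p2 : ∀ s ∈ Icc 0 t, a s 1 = a s 0)
    (hA : ∀ s ∈ Icc 0 t, ∀ x ∈ Icc (0:ℝ) 1, a s x ^ 2 ≤ A)
    (heq : ∀ s ∈ Icc 0 t, ∀ x, wt s x = ν * wxx s x - (ax s x * w s x + a s x * wx s x)) :
    ∫ x in (0:ℝ)..1, |w t x| ≤ (∫ x in (0:ℝ)..1, |w 0 x|) + e * (1 + t * (A / (4 * ν))) := by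
  have m0 : (0:ℝ) ∈ Icc 0 t := ⟨le_rfl, ht⟩
  have m1 : t ∈ Icc 0 t := ⟨ht, le_rfl⟩
  have cws : ∀ s ∈ Icc 0 t, Continuous (w s) := fun s hs =>
    continuous_iff_continuousAt.2 fun x => (hw s hs x).continuousAt
  set G : ℝ → ℝ → ℝ := fun s x => w s x / SS e (w s x) * wt s x with hG
  have cG : ContinuousOn (fun p : ℝ × ℝ => G p.1 p.2) (Icc 0 t ×ˢ univ) :=
    (cw.div ((SS_cont e).comp_continuousOn cw) fun p _ => (SS_pos he _).ne').mul cwt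
  have iG : MeasureTheory.IntegrableOn (Function.uncurry G) (uIoc 0 t ×ˢ uIoc 0 1) := by
    have : MeasureTheory.IntegrableOn (Function.uncurry G) (Icc 0 t ×ˢ Icc 0 1) :=
      (cG.mono (prod_mono_right (subset_univ _))).integrableOn_compact (isCompact_Icc.prod isCompact_Icc)
    refine this.mono_set (prod_mono ?_ ?_)
    · rw [uIoc_of_le ht]; exact Ioc_subset_Icc_self
    · rw [uIoc_of_le zero_le_one]; exact Ioc_subset_Icc_self
  have hx : ∀ x, ∫ s in (0:ℝ)..t, G s x = SS e (w t x) - SS e (w 0 x) := by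
    intro x
    apply intervalIntegral.integral_eq_sub_of_hasDerivAt (f := fun s => SS e (w s x))
    · intro s hs
      rw [uIcc_of_le ht] at hs
      exact HasDerivAt.comp (h₂ := SS e) (h := fun s => w s x) s (SS_deriv he (w s x)) (hwt s hs x)
    · apply ContinuousOn.intervalIntegrable
      rw [uIcc_of_le ht]
      exact cG.comp (f := fun s => (s, x)) (by fun_prop) (fun s hs => ⟨hs, mem_univ _⟩)
  have hs : ∀ s ∈ Icc 0 t, ∫ x in (0:ℝ)..1, G s x ≤ e * A / (4 * ν) := by
    intro s hs
    have := slice he hν (w s) (wx s) (wxx s) (a s) (ax s) (hw s hs) (hwx s hs) (ha s hs)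
      (cwxx s hs) (cax s hs) (p0 s hs) (p1 s hs) (p2 s hs) (hA s hs)
    simpa only [hG, heq s hs] using this
  have iS : ∀ s ∈ Icc 0 t, IntervalIntegrable (fun x => SS e (w s x)) MeasureTheory.volume 0 1 :=
    fun s hs => ((SS_cont e).comp (cws s hs)).intervalIntegrable _ _
  have iW : ∀ s ∈ Icc 0 t, IntervalIntegrable (fun x => |w s x|) MeasureTheory.volume 0 1 :=
    fun s hs => ((cws s hs).abs).intervalIntegrable _ _
  have key : ∫ s in (0:ℝ)..t, ∫ x in (0:ℝ)..1, G s x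
      = (∫ x in (0:ℝ)..1, SS e (w t x)) - ∫ x in (0:ℝ)..1, SS e (w 0 x) := by
    rw [MeasureTheory.intervalIntegral_intervalIntegral_swap iG]
    simp_rw [hx]
    exact intervalIntegral.integral_sub (iS t m1) (iS 0 m0)
  have iGs : IntervalIntegrable (fun s => ∫ x in (0:ℝ)..1, G s x) MeasureTheory.volume 0 t := by
    rw [intervalIntegrable_iff]
    simp_rw [intervalIntegral.integral_of_le (zero_le_one (α := ℝ))]
    rw [uIoc_of_le ht, uIoc_of_le zero_le_one, MeasureTheory.IntegrableOn,
      MeasureTheory.Measure.volume_eq_prod, ← MeasureTheory.Measure.prod_restrict] at iG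
    rw [uIoc_of_le ht]
    exact iG.integral_prod_left
  have b : ∫ s in (0:ℝ)..t, ∫ x in (0:ℝ)..1, G s x ≤ ∫ s in (0:ℝ)..t, e * A / (4 * ν) :=
    intervalIntegral.integral_mono_on ht iGs (by simp) hs
  rw [key, intervalIntegral.integral_const, smul_eq_mul, sub_zero] at b
  have l1 : ∫ x in (0:ℝ)..1, |w t x| ≤ ∫ x in (0:ℝ)..1, SS e (w t x) :=
    intervalIntegral.integral_mono_on zero_le_one (iW t m1) (iS t m1) fun x _ => SS_ge _ _
  have l2 : ∫ x in (0:ℝ)..1, SS e (w 0 x) ≤ ∫ x in (0:ℝ)..1, (|w 0 x| + e) :=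
    intervalIntegral.integral_mono_on zero_le_one (iS 0 m0) ((iW 0 m0).add (by simp))
      fun x _ => SS_le he _
  rw [intervalIntegral.integral_add (iW 0 m0) (by simp)] at l2
  simp only [intervalIntegral.integral_const, smul_eq_mul, sub_zero, one_mul] at l2
  have : e * (1 + t * (A / (4 * ν))) = e + t * (e * A / (4 * ν)) := by ring
  linarith

/-- L¹-contraction (Lemma 10.4 of the paper): if the difference `w = u₁ − u₂` of two
functions on `[0,T] × S¹` (S¹ = ℝ/ℤ, functions 1-periodic in space) classically solves
`w_t + (1/2)((u₁+u₂)w)_x − ν w_xx = 0`, then the L¹-distance between `u₁(t,·)` and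
`u₂(t,·)` is bounded by its value at `t = 0`. -/
theorem stmt_6 (ν T : ℝ) (hν : 0 < ν) (hT : 0 < T)
    (u₁ u₂ : ℝ → ℝ → ℝ)
    -- regularity of u₁, u₂ : continuous with continuous ∂ₓu₁, ∂ₓu₂ on [0,T] × S¹
    (h₁_per : ∀ t, Function.Periodic (u₁ t) 1)
    (h₂_per : ∀ t, Function.Periodic (u₂ t) 1)
    (h₁_cont : ContinuousOn (fun p : ℝ × ℝ => u₁ p.1 p.2) (Icc 0 T ×ˢ univ))
    (h₂_cont : ContinuousOn (fun p : ℝ × ℝ => u₂ p.1 p.2) (Icc 0 T ×ˢ univ))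
    (h₁_x : ∀ t ∈ Icc (0:ℝ) T, Differentiable ℝ (u₁ t))
    (h₂_x : ∀ t ∈ Icc (0:ℝ) T, Differentiable ℝ (u₂ t))
    (h₁_x_cont : ContinuousOn (fun p : ℝ × ℝ => deriv (u₁ p.1) p.2) (Icc 0 T ×ˢ univ))
    (h₂_x_cont : ContinuousOn (fun p : ℝ × ℝ => deriv (u₂ p.1) p.2) (Icc 0 T ×ˢ univ))
    -- w = u₁ − u₂ has continuous ∂ₜw, ∂ₓw, ∂ₓ²w on [0,T] × S¹
    (hw_t : ∀ x : ℝ, ∀ t ∈ Icc (0:ℝ) T, DifferentiableAt ℝ (fun s => u₁ s x - u₂ s x) t)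
    (hw_t_cont : ContinuousOn (fun p : ℝ × ℝ => deriv (fun s => u₁ s p.2 - u₂ s p.2) p.1)
      (Icc 0 T ×ˢ univ))
    (hw_x : ∀ t ∈ Icc (0:ℝ) T, Differentiable ℝ (fun y => u₁ t y - u₂ t y) ∧
      Differentiable ℝ (deriv (fun y => u₁ t y - u₂ t y)))
    (hw_x_cont : ContinuousOn
      (fun p : ℝ × ℝ => deriv (fun y => u₁ p.1 y - u₂ p.1 y) p.2) (Icc 0 T ×ˢ univ))
    (hw_xx_cont : ContinuousOn
      (fun p : ℝ × ℝ => deriv (deriv (fun y => u₁ p.1 y - u₂ p.1 y)) p.2)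
      (Icc 0 T ×ˢ univ))
    -- the equation w_t + (1/2)((u₁+u₂)w)_x − ν w_xx = 0 holds pointwise on [0,T] × S¹
    (heq : ∀ t ∈ Icc (0:ℝ) T, ∀ x : ℝ,
      deriv (fun s => u₁ s x - u₂ s x) t
        + (1 / 2) * deriv (fun y => (u₁ t y + u₂ t y) * (u₁ t y - u₂ t y)) x
        - ν * deriv (deriv (fun y => u₁ t y - u₂ t y)) x = 0) :
    ∀ t ∈ Icc (0:ℝ) T,
      (∫ x in (0:ℝ)..1, |u₁ t x - u₂ t x|) ≤ ∫ x in (0:ℝ)..1, |u₁ 0 x - u₂ 0 x| := by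
  intro t ht
  have sub : ∀ s ∈ Icc 0 t, s ∈ Icc 0 T := fun s hs => ⟨hs.1, hs.2.trans ht.2⟩
  have subp : (Icc 0 t ×ˢ univ : Set (ℝ × ℝ)) ⊆ Icc 0 T ×ˢ univ := fun p hp => ⟨sub _ hp.1, hp.2⟩
  have slc : ∀ {f : ℝ → ℝ → ℝ}, ContinuousOn (fun p : ℝ × ℝ => f p.1 p.2) (Icc 0 T ×ˢ univ) →
      ∀ s ∈ Icc 0 t, Continuous (f s) := by
    intro f hf s hs
    rw [← continuousOn_univ]
    exact hf.comp (f := fun x => (s, x)) (by fun_prop) (fun x _ => ⟨sub s hs, mem_univ _⟩)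
  have ca : ContinuousOn (fun p : ℝ × ℝ => ((1/2) * (u₁ p.1 p.2 + u₂ p.1 p.2)) ^ 2)
      (Icc 0 T ×ˢ Icc 0 1) :=
    ((continuousOn_const.mul (h₁_cont.add h₂_cont)).pow 2).mono (prod_mono_right (subset_univ _))
  obtain ⟨A, hA⟩ := (isCompact_Icc.prod isCompact_Icc).bddAbove_image ca
  have main : ∀ e > 0, (∫ x in (0:ℝ)..1, |u₁ t x - u₂ t x|)
      ≤ (∫ x in (0:ℝ)..1, |u₁ 0 x - u₂ 0 x|) + e * (1 + t * (A / (4 * ν))) := by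
    intro e he
    have hperw : ∀ s, Function.Periodic (fun y => u₁ s y - u₂ s y) 1 :=
      fun s => (h₁_per s).sub (h₂_per s)
    refine evolve he hν ht.1 (fun s x => u₁ s x - u₂ s x)
      (fun s x => deriv (fun s => u₁ s x - u₂ s x) s)
      (fun s x => deriv (fun y => u₁ s y - u₂ s y) x)
      (fun s x => deriv (deriv (fun y => u₁ s y - u₂ s y)) x)
      (fun s x => (1/2) * (u₁ s x + u₂ s x))
      (fun s x => (1/2) * (deriv (u₁ s) x + deriv (u₂ s) x))
      (fun s hs x => (hw_t x s (sub s hs)).hasDerivAt)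
      (fun s hs x => ((hw_x s (sub s hs)).1 x).hasDerivAt)
      (fun s hs x => ((hw_x s (sub s hs)).2 x).hasDerivAt)
      (fun s hs x => ((h₁_x s (sub s hs) x).hasDerivAt.add
        (h₂_x s (sub s hs) x).hasDerivAt).const_mul (1/2))
      ((h₁_cont.sub h₂_cont).mono subp) (hw_t_cont.mono subp)
      (slc hw_xx_cont) ?_ ?_ ?_ ?_ ?_ ?_
    · intro s hs
      have q1 : Continuous (deriv (u₁ s)) := slc (f := fun s => deriv (u₁ s)) h₁_x_cont s hs
      have q2 : Continuous (deriv (u₂ s)) := slc (f := fun s => deriv (u₂ s)) h₂_x_cont s hs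
      exact continuous_const.mul (q1.add q2)
    · intro s _; simpa using hperw s 0
    · intro s _
      have h := deriv_comp_add_const (fun y => u₁ s y - u₂ s y) 1 0
      have h2 : (fun y => u₁ s (y + 1) - u₂ s (y + 1)) = fun y => u₁ s y - u₂ s y :=
        funext fun y => hperw s y
      rw [h2, zero_add] at h
      exact h.symm
    · intro s _
      have := (h₁_per s) 0
      have := (h₂_per s) 0
      simp_all
    · intro s hs x hx
      exact hA ⟨(s, x), ⟨sub s hs, hx⟩, rfl⟩
    · intro s hs x
      have h := heq s (sub s hs) x
      have d : HasDerivAt (fun y => (u₁ s y + u₂ s y) * (u₁ s y - u₂ s y)) _ x :=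
        ((h₁_x s (sub s hs) x).hasDerivAt.add (h₂_x s (sub s hs) x).hasDerivAt).mul
        ((hw_x s (sub s hs)).1 x).hasDerivAt
      rw [d.deriv] at h
      simp only [Pi.add_apply] at h
      linarith
  have lim : Filter.Tendsto (fun e : ℝ => (∫ x in (0:ℝ)..1, |u₁ 0 x - u₂ 0 x|)
      + e * (1 + t * (A / (4 * ν)))) (nhdsWithin 0 (Ioi 0))
      (nhds (∫ x in (0:ℝ)..1, |u₁ 0 x - u₂ 0 x|)) := by
    have : Continuous (fun e : ℝ => (∫ x in (0:ℝ)..1, |u₁ 0 x - u₂ 0 x|)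
      + e * (1 + t * (A / (4 * ν)))) := by fun_prop
    have := (this.tendsto 0).mono_left (nhdsWithin_le_nhds (s := Ioi 0))
    simpa using this
  refine ge_of_tendsto lim ?_
  filter_upwards [self_mem_nhdsWithin] with e he using main e he
end

section
/- Let ν > 0 and let u : [0,∞) × S¹ → ℝ be continuous, with continuous derivatives ∂_t u, ∂_x u, ∂_x² u on [0,∞) × S¹, satisfying pointwise u_t + u·u_x − ν·u_xx = 0 and ∫_{S¹} u(t,x) dx = 0 for all t ≥ 0. Then for every t ≥ 0, ‖u(t,·)‖ ≤ e^{−νt}·‖u(0,·)‖, where ‖·‖ denotes the L²(S¹) norm. -/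
open Set

lemma poincare_aux (f : ℝ → ℝ) (hf : Differentiable ℝ f) (hf' : Continuous (deriv f))
    (hm : ∫ x in (0:ℝ)..1, f x = 0) :
    ∫ x in (0:ℝ)..1, (f x) ^ 2 ≤ ∫ x in (0:ℝ)..1, (deriv f x) ^ 2 := by
  have hc : Continuous f := hf.continuous
  obtain ⟨c, hc01, hc0⟩ : ∃ c ∈ Ioo (0:ℝ) 1, f c = 0 := by
    have hd : ∀ x, HasDerivAt (fun y => ∫ z in (0:ℝ)..y, f z) (f x) x := fun x =>
      intervalIntegral.integral_hasDerivAt_right (hc.intervalIntegrable _ _)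
        (hc.stronglyMeasurableAtFilter _ _) hc.continuousAt
    exact exists_hasDerivAt_eq_zero (f := fun y => ∫ z in (0:ℝ)..y, f z) (by norm_num)
      (fun x _ => (hd x).continuousAt.continuousWithinAt) (by simp [hm]) (fun x _ => hd x)
  set m := ∫ x in (0:ℝ)..1, |deriv f x| with hmdef
  set D := ∫ x in (0:ℝ)..1, (deriv f x) ^ 2 with hD
  have hm2 : m ^ 2 ≤ D := by
    have h0 : 0 ≤ ∫ x in (0:ℝ)..1, (|deriv f x| - m) ^ 2 :=
      intervalIntegral.integral_nonneg (by norm_num) (fun x _ => sq_nonneg _)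
    have h1 : ∫ x in (0:ℝ)..1, (|deriv f x| - m) ^ 2 = D - 2 * m * m + m ^ 2 := by
      have : ∀ x, (|deriv f x| - m) ^ 2 = (deriv f x) ^ 2 - 2 * m * |deriv f x| + m ^ 2 := by
        intro x
        rw [sub_sq, sq_abs]; ring
      simp_rw [this]
      rw [intervalIntegral.integral_add, intervalIntegral.integral_sub,
        intervalIntegral.integral_const_mul, intervalIntegral.integral_const]
      · simp [hD, hmdef]
      all_goals exact Continuous.intervalIntegrable (by fun_prop) _ _
    nlinarith
  have hpt : ∀ x ∈ Icc (0:ℝ) 1, (f x) ^ 2 ≤ D := by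
    intro x hx
    have h1 : ∫ z in c..x, deriv f z = f x := by
      rw [intervalIntegral.integral_deriv_eq_sub (fun y _ => hf y)
        (hf'.intervalIntegrable _ _), hc0, sub_zero]
    have h2 : |f x| ≤ m := by
      rw [← h1, ← Real.norm_eq_abs, hmdef, intervalIntegral.integral_of_le (zero_le_one)]
      refine intervalIntegral.norm_integral_le_integral_norm_uIoc.trans ?_
      refine MeasureTheory.setIntegral_mono_set (s := uIoc c x) (t := Ioc 0 1)
        (f := fun z => |deriv f z|) ?_ ?_ ?_
      · exact (hf'.abs.intervalIntegrable 0 1).1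
      · exact Filter.Eventually.of_forall (fun z => abs_nonneg _)
      · refine (LE.le.eventuallyLE ?_)
        exact Ioc_subset_Ioc (le_min hc01.1.le hx.1) (max_le hc01.2.le hx.2)
    rw [← sq_abs]
    exact (pow_le_pow_left₀ (abs_nonneg _) h2 2).trans hm2
  calc ∫ x in (0:ℝ)..1, (f x) ^ 2 ≤ ∫ x in (0:ℝ)..1, D :=
        intervalIntegral.integral_mono_on (by norm_num)
          ((hc.pow 2).intervalIntegrable _ _) (by simp) hpt
    _ = D := by simp


/-- Exponential L² decay for the unforced periodic viscous Burgers equation (from the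
proof of Lemma 10.2 of the paper): a classical mean-zero solution of
`u_t + u u_x − ν u_xx = 0` on `[0,∞) × S¹` (S¹ = ℝ/ℤ, functions 1-periodic in space)
satisfies `‖u(t)‖_{L²} ≤ e^{−νt} ‖u(0)‖_{L²}`. -/
theorem stmt_7 (ν : ℝ) (hν : 0 < ν) (u : ℝ → ℝ → ℝ)
    (h_per : ∀ t, Function.Periodic (u t) 1)
    (h_cont : ContinuousOn (fun p : ℝ × ℝ => u p.1 p.2) (Ici 0 ×ˢ univ))
    (h_t : ∀ x : ℝ, ∀ t ∈ Ici (0:ℝ), DifferentiableAt ℝ (fun s => u s x) t)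
    (h_t_cont : ContinuousOn (fun p : ℝ × ℝ => deriv (fun s => u s p.2) p.1)
      (Ici 0 ×ˢ univ))
    (h_x : ∀ t ∈ Ici (0:ℝ), Differentiable ℝ (u t) ∧ Differentiable ℝ (deriv (u t)))
    (h_x_cont : ContinuousOn (fun p : ℝ × ℝ => deriv (u p.1) p.2) (Ici 0 ×ˢ univ))
    (h_xx_cont : ContinuousOn (fun p : ℝ × ℝ => deriv (deriv (u p.1)) p.2)
      (Ici 0 ×ˢ univ))
    (heq : ∀ t ∈ Ici (0:ℝ), ∀ x : ℝ,
      deriv (fun s => u s x) t + u t x * deriv (u t) x - ν * deriv (deriv (u t)) x = 0)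
    (hmean : ∀ t ∈ Ici (0:ℝ), ∫ x in (0:ℝ)..1, u t x = 0) :
    ∀ t ∈ Ici (0:ℝ),
      Real.sqrt (∫ x in (0:ℝ)..1, (u t x) ^ 2) ≤
        Real.exp (-ν * t) * Real.sqrt (∫ x in (0:ℝ)..1, (u 0 x) ^ 2) := by
  have hclamp : ∀ g : ℝ → ℝ → ℝ, ContinuousOn (fun p : ℝ × ℝ => g p.1 p.2) (Ici 0 ×ˢ univ) →
      Continuous (fun p : ℝ × ℝ => g (max p.1 0) p.2) := by
    intro g hg
    exact hg.comp_continuous (f := fun p : ℝ × ℝ => (max p.1 0, p.2)) (by fun_prop)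
      (fun p => ⟨mem_Ici.2 (le_max_right _ _), mem_univ _⟩)
  have hslice : ∀ g : ℝ → ℝ → ℝ, ContinuousOn (fun p : ℝ × ℝ => g p.1 p.2) (Ici 0 ×ˢ univ) →
      ∀ t, 0 ≤ t → Continuous (g t) := by
    intro g hg t ht
    exact hg.comp_continuous (f := fun x : ℝ => (t, x)) (by fun_prop)
      (fun p => ⟨ht, mem_univ _⟩)
  have cu := hclamp u h_cont
  have cut := hclamp (fun t x => deriv (fun s => u s x) t) h_t_cont
  set E : ℝ → ℝ := fun t => ∫ x in (0:ℝ)..1, (u t x) ^ 2 with hE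
  have hEcont : ContinuousOn E (Ici 0) := by
    have h1 : Continuous (fun t : ℝ => ∫ x in (0:ℝ)..1, (u (max t 0) x) ^ 2) :=
      intervalIntegral.continuous_parametric_intervalIntegral_of_continuous'
        (f := fun t x => (u (max t 0) x) ^ 2)
        (by simpa only [Function.uncurry_def] using cu.fun_pow 2) 0 1
    refine h1.continuousOn.congr ?_
    intro t ht
    simp only [hE, max_eq_left (mem_Ici.1 ht)]
  have hEder : ∀ t, 0 < t → HasDerivAt E
      (∫ x in (0:ℝ)..1, 2 * u t x * deriv (fun s => u s x) t) t := by
    intro t ht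
    have hK : IsCompact (Icc (0:ℝ) (2 * t) ×ˢ Icc (0:ℝ) 1) := isCompact_Icc.prod isCompact_Icc
    obtain ⟨C, hC⟩ := hK.exists_bound_of_continuousOn
      (f := fun p : ℝ × ℝ => 2 * u (max p.1 0) p.2 * deriv (fun s => u s p.2) (max p.1 0))
      ((continuous_const.mul cu).mul cut).continuousOn
    have hnhds : Ioo 0 (2 * t) ∈ nhds t := Ioo_mem_nhds ht (by linarith)
    refine (intervalIntegral.hasDerivAt_integral_of_dominated_loc_of_deriv_le
      (F := fun t x => (u t x) ^ 2)
      (F' := fun t x => 2 * u t x * deriv (fun s => u s x) t)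
      (bound := fun _ => C) (s := Ioo 0 (2 * t)) hnhds ?_ ?_ ?_ ?_ ?_ ?_).2
    · filter_upwards [hnhds] with s hs
      exact ((hslice u h_cont s hs.1.le).pow 2).aestronglyMeasurable
    · exact ((hslice u h_cont t ht.le).pow 2).intervalIntegrable _ _
    · exact ((continuous_const.mul (hslice u h_cont t ht.le)).mul
        (hslice (fun t x => deriv (fun s => u s x) t) h_t_cont t ht.le)).aestronglyMeasurable
    · refine Filter.Eventually.of_forall (fun x hx s hs => ?_)
      rw [uIoc_of_le zero_le_one] at hx
      have := hC (s, x) ⟨⟨hs.1.le, hs.2.le⟩, ⟨hx.1.le, hx.2⟩⟩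
      simpa only [max_eq_left hs.1.le] using this
    · simp
    · refine Filter.Eventually.of_forall (fun x hx s hs => ?_)
      have := ((h_t x s hs.1.le).hasDerivAt).fun_pow 2
      simpa using this
  have hEle : ∀ t, 0 < t →
      ∫ x in (0:ℝ)..1, 2 * u t x * deriv (fun s => u s x) t ≤ -(2 * ν) * E t := by
    intro t ht
    have c0 := hslice u h_cont t ht.le
    have c1 := hslice (fun t x => deriv (u t) x) h_x_cont t ht.le
    have c2 := hslice (fun t x => deriv (deriv (u t)) x) h_xx_cont t ht.le
    obtain ⟨d1, d2⟩ := h_x t ht.le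
    have hH : ∀ x, HasDerivAt (fun x => 2 * ν * (u t x * deriv (u t) x) - 2 / 3 * (u t x) ^ 3)
        (2 * ν * (deriv (u t) x) ^ 2 + 2 * ν * (u t x * deriv (deriv (u t)) x)
          - 2 * (u t x) ^ 2 * deriv (u t) x) x := by
      intro x
      have a := (d1 x).hasDerivAt
      have b := (d2 x).hasDerivAt
      refine (((a.fun_mul b).const_mul (2 * ν)).fun_sub ((a.fun_pow 3).const_mul (2 / 3))).congr_deriv ?_
      push_cast
      ring
    have hint := intervalIntegral.integral_eq_sub_of_hasDerivAt (a := 0) (b := 1)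
      (fun x _ => hH x) (Continuous.intervalIntegrable (by fun_prop) _ _)
    have p0 : u t 1 = u t 0 := by simpa using h_per t 0
    have p1 : deriv (u t) 1 = deriv (u t) 0 := by
      have h := deriv_comp_add_const (u t) 1 0
      rw [show (fun x => u t (x + 1)) = u t from funext (h_per t)] at h
      simpa using h.symm
    rw [p0, p1, sub_self] at hint
    have hpo := poincare_aux (u t) d1 c1 (hmean t ht.le)
    have hrw : ∫ x in (0:ℝ)..1, 2 * u t x * deriv (fun s => u s x) t
        = (∫ x in (0:ℝ)..1, (2 * ν * (deriv (u t) x) ^ 2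
            + 2 * ν * (u t x * deriv (deriv (u t)) x) - 2 * (u t x) ^ 2 * deriv (u t) x))
          - 2 * ν * ∫ x in (0:ℝ)..1, (deriv (u t) x) ^ 2 := by
      rw [← intervalIntegral.integral_const_mul, ← intervalIntegral.integral_sub]
      · refine intervalIntegral.integral_congr (fun x _ => ?_)
        have := heq t ht.le x
        have h3 : deriv (fun s => u s x) t
          = ν * deriv (deriv (u t)) x - u t x * deriv (u t) x := by linarith
        simp only [h3]
        ring
      · exact Continuous.intervalIntegrable (by fun_prop) _ _
      · exact Continuous.intervalIntegrable (by fun_prop) _ _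
    rw [hrw, hint]
    have := mul_le_mul_of_nonneg_left hpo (show 0 ≤ 2 * ν by linarith)
    simp only [hE]
    linarith
  have hGder : ∀ t, 0 < t → HasDerivAt (fun t => Real.exp (2 * ν * t) * E t)
      (Real.exp (2 * ν * t) * (2 * ν) * E t + Real.exp (2 * ν * t) *
        ∫ x in (0:ℝ)..1, 2 * u t x * deriv (fun s => u s x) t) t := by
    intro t ht
    have h1 : HasDerivAt (fun t : ℝ => Real.exp (2 * ν * t)) (Real.exp (2 * ν * t) * (2 * ν)) t := by
      simpa using ((hasDerivAt_id t).const_mul (2 * ν)).exp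
    exact h1.mul (hEder t ht)
  have hanti : AntitoneOn (fun t => Real.exp (2 * ν * t) * E t) (Ici 0) := by
    refine antitoneOn_of_deriv_nonpos (convex_Ici 0) ?_ ?_ ?_
    · exact ContinuousOn.mul (by fun_prop) hEcont
    · intro t ht
      rw [interior_Ici] at ht
      exact (hGder t ht).differentiableAt.differentiableWithinAt
    · intro t ht
      rw [interior_Ici] at ht
      rw [(hGder t ht).deriv]
      have := mul_le_mul_of_nonneg_left (hEle t ht) (Real.exp_pos (2 * ν * t)).le
      linarith
  intro t ht
  have hfin := hanti (mem_Ici.2 le_rfl) ht ht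
  simp only [mul_zero, Real.exp_zero, one_mul] at hfin
  have hexp : Real.exp (-ν * t) = Real.sqrt (Real.exp (-(2 * ν * t))) := by
    rw [← Real.exp_half]; congr 1; ring
  rw [hexp, ← Real.sqrt_mul (Real.exp_pos _).le]
  refine Real.sqrt_le_sqrt ?_
  have h5 := mul_le_mul_of_nonneg_left hfin (Real.exp_pos (-(2 * ν * t))).le
  rw [← mul_assoc, ← Real.exp_add, neg_add_cancel, Real.exp_zero, one_mul] at h5
  exact h5
end

section
/- Let p > 0, M ≥ 1, α > 0 and K > 0. Then there exist constants c* ∈ (0,1], c₁ > 0, c₂ > 0 and C > 0, depending only on p, M, α, K, such that the following holds. Let ν ∈ (0, c*] and let v : S¹ → ℝ be twice continuously differentiable with ∫_{S¹} v(x) dx = 0, sup_x (v′(x))⁺ ≤ M, ∫_{S¹} |v′(x)| dx ≤ M, sup_x |v″(x)| ≤ K·ν⁻², and ∫_{S¹} v′(x)² dx ≥ α·ν⁻¹. Then for every l ∈ [c₁·ν, c₂], ∫_{S¹} |v(x + l) − v(x)|^p dx ≥ C·l^{min(1,p)}. -/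
open Set

lemma aux_lower (h : ℝ → ℝ) (hc : Continuous h) (hper : Function.Periodic h 1)
    (hn : ∀ x, 0 ≤ h x) (s L m : ℝ) (hL0 : 0 ≤ L) (hL : L ≤ 1)
    (hm : ∀ x ∈ Icc s (s + L), m ≤ h x) : m * L ≤ ∫ x in (0:ℝ)..1, h x := by
  have e := hper.intervalIntegral_add_eq 0 s
  rw [zero_add] at e
  rw [e]
  have h1 : (∫ x in s..(s+L), h x) ≤ ∫ x in s..(s+1), h x := by
    apply intervalIntegral.integral_mono_interval le_rfl (by linarith) (by linarith)
    · exact Filter.Eventually.of_forall hn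
    · exact hc.intervalIntegrable _ _
  have h2 : (∫ x in s..(s+L), m) ≤ ∫ x in s..(s+L), h x := by
    apply intervalIntegral.integral_mono_on (by linarith) (by simp) (hc.intervalIntegrable _ _) hm
  simp at h2
  linarith [mul_comm m L]

lemma aux_point (M A ν : ℝ) (hM : 1 ≤ M) (hA : 0 < A) (hν : 0 < ν) (hs : ν * M ≤ A)
    (v : ℝ → ℝ) (hv : ContDiff ℝ 2 v) (h1 : ∀ x, deriv v x ≤ M)
    (h2 : (∫ x in (0:ℝ)..1, |deriv v x|) ≤ M)
    (h3 : 2 * A * M / ν ≤ ∫ x in (0:ℝ)..1, (deriv v x) ^ 2) :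
    ∃ z, deriv v z ≤ - (A / ν) := by
  by_contra! hcon
  have hc : Continuous (deriv v) := hv.continuous_deriv (by norm_num)
  have hMA : M ≤ A / ν := by rw [le_div_iff₀ hν]; linarith
  have hb : (∫ x in (0:ℝ)..1, (deriv v x) ^ 2) ≤ ∫ x in (0:ℝ)..1, (A / ν) * |deriv v x| := by
    apply intervalIntegral.integral_mono_on (by norm_num)
      ((hc.pow 2).intervalIntegrable _ _) ((continuous_const.mul hc.abs).intervalIntegrable _ _)
    intro x _
    show (deriv v x) ^ 2 ≤ A / ν * |deriv v x|
    rw [← sq_abs, sq]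
    apply mul_le_mul_of_nonneg_right _ (abs_nonneg _)
    rw [abs_le]
    exact ⟨(hcon x).le, (h1 x).trans hMA⟩
  rw [intervalIntegral.integral_const_mul] at hb
  have hp : 0 < A / ν := by positivity
  have : A / ν * (∫ x in (0:ℝ)..1, |deriv v x|) ≤ A / ν * M := by gcongr
  have e : 2 * A * M / ν = 2 * (A / ν * M) := by ring
  have : 0 < A / ν * M := by positivity
  linarith

lemma aux_drop (A K ν z : ℝ) (hA : 0 < A) (hK : 0 < K) (hν : 0 < ν)
    (v : ℝ → ℝ) (hv : ContDiff ℝ 2 v) (h3 : ∀ x, |deriv (deriv v) x| ≤ K / ν ^ 2)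
    (hz : deriv v z ≤ - (A / ν)) :
    v (z + A / (2 * K) * ν) - v z ≤ - (A ^ 2 / (4 * K)) := by
  have hd : Differentiable ℝ v := hv.differentiable (by norm_num)
  have hd' : Differentiable ℝ (deriv v) :=
    ((contDiff_succ_iff_deriv (n := 1)).1
      (by rw [one_add_one_eq_two]; exact hv)).2.2.differentiable (by norm_num)
  have key : ∀ x ∈ Icc z (z + A / (2 * K) * ν), deriv v x ≤ - (A / (2 * ν)) := by
    intro x hx
    have := image_sub_le_mul_sub_of_deriv_le hd' (fun y => (le_abs_self _).trans (h3 y)) hx.1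
    have h5 : K / ν ^ 2 * (x - z) ≤ K / ν ^ 2 * (A / (2 * K) * ν) := by
      gcongr; linarith [hx.2]
    have h6 : K / ν ^ 2 * (A / (2 * K) * ν) = A / (2 * ν) := by field_simp
    have h7 : A / ν = 2 * (A / (2 * ν)) := by field_simp
    linarith
  have hpos : 0 ≤ A / (2 * K) * ν := by positivity
  have := (convex_Icc z (z + A / (2 * K) * ν)).image_sub_le_mul_sub_of_deriv_le
    hd.continuous.continuousOn hd.differentiableOn
    (fun x hx => key x (interior_subset hx)) z (left_mem_Icc.2 (by linarith)) _
    (right_mem_Icc.2 (by linarith)) (by linarith)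
  have e : - (A / (2 * ν)) * (z + A / (2 * K) * ν - z) = - (A ^ 2 / (4 * K)) := by
    field_simp; ring
  linarith

theorem stmt_9 (p M α K : ℝ) (hp : 0 < p) (hM : 1 ≤ M) (hα : 0 < α) (hK : 0 < K) :
    ∃ cs c₁ c₂ C : ℝ, 0 < cs ∧ cs ≤ 1 ∧ 0 < c₁ ∧ 0 < c₂ ∧ 0 < C ∧
      ∀ ν ∈ Ioc (0:ℝ) cs, ∀ v : ℝ → ℝ,
        Function.Periodic v 1 → ContDiff ℝ 2 v →
        (∫ x in (0:ℝ)..1, v x) = 0 →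
        (∀ x, max (deriv v x) 0 ≤ M) →
        (∫ x in (0:ℝ)..1, |deriv v x|) ≤ M →
        (∀ x, |deriv (deriv v) x| ≤ K / ν ^ 2) →
        α / ν ≤ ∫ x in (0:ℝ)..1, (deriv v x) ^ 2 →
        ∀ l ∈ Icc (c₁ * ν) c₂,
          C * l ^ min 1 p ≤ ∫ x in (0:ℝ)..1, |v (x + l) - v x| ^ p := by
  have hM0 : 0 < M := by linarith
  obtain ⟨A, hAdef⟩ : ∃ A, A = α / (2 * M) := ⟨_, rfl⟩
  have hA : 0 < A := by rw [hAdef]; positivity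
  have hAα : α = 2 * A * M := by rw [hAdef]; field_simp
  obtain ⟨D, hDdef⟩ : ∃ D, D = A ^ 2 / (4 * K) := ⟨_, rfl⟩
  have hD : 0 < D := by rw [hDdef]; positivity
  have main : ∀ ν ∈ Ioc (0:ℝ) (min 1 (A / M)), ∀ v : ℝ → ℝ,
        Function.Periodic v 1 → ContDiff ℝ 2 v →
        (∀ x, max (deriv v x) 0 ≤ M) →
        (∫ x in (0:ℝ)..1, |deriv v x|) ≤ M →
        (∀ x, |deriv (deriv v) x| ≤ K / ν ^ 2) →
        α / ν ≤ ∫ x in (0:ℝ)..1, (deriv v x) ^ 2 →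
        ∀ l ∈ Icc ((A / K) * ν) (min 1 (D / (2 * M))), 0 < l ∧
          (∀ x, v (x + l) - v x ≤ M * l) ∧
          ∀ q : ℝ, 0 < q → (D / 2) ^ q * (l / 2) ≤ ∫ x in (0:ℝ)..1, |v (x + l) - v x| ^ q := by
    intro ν hν v hper hv h1 h2 h3 h4 l hl
    have hν0 := hν.1
    have hνM : ν * M ≤ A := by
      rw [← le_div_iff₀ hM0]; exact hν.2.trans (min_le_right _ _)
    have h1' : ∀ x, deriv v x ≤ M := fun x => (le_max_left _ _).trans (h1 x)
    have hd : Differentiable ℝ v := hv.differentiable (by norm_num)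
    have hl0 : 0 < l := lt_of_lt_of_le (by positivity) hl.1
    have hl1 : l ≤ 1 := hl.2.trans (min_le_left _ _)
    have hl2 : l * (2 * M) ≤ D := by
      rw [← le_div_iff₀ (by positivity)]; exact hl.2.trans (min_le_right _ _)
    have inc : ∀ x y, x ≤ y → v y - v x ≤ M * (y - x) := fun x y hxy =>
      image_sub_le_mul_sub_of_deriv_le hd h1' hxy
    refine ⟨hl0, fun x => ?_, fun q hq => ?_⟩
    · have := inc x (x + l) (by linarith)
      simpa using this
    obtain ⟨z, hz⟩ := aux_point M A ν hM hA hν0 hνM v hv h1' h2 (by rw [← hAα]; exact h4)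
    have hdrop := aux_drop A K ν z hA hK hν0 v hv h3 hz
    rw [← hDdef] at hdrop
    have ha : A / (2 * K) * ν ≤ l / 2 := by
      have : A / (2 * K) * ν = (A / K * ν) / 2 := by field_simp
      rw [this]; linarith [hl.1]
    have ha0 : 0 < A / (2 * K) * ν := by positivity
    have hcont : Continuous fun x => v (x + l) - v x := by
      have := hd.continuous; fun_prop
    apply aux_lower (fun x => |v (x + l) - v x| ^ q)
      (hcont.abs.rpow_const (fun _ => Or.inr hq.le)) ?_ (fun x => by positivity) (z - l / 2)
      (l / 2) _ (by linarith) (by linarith)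
    · intro x hx
      have i1 := inc x z (by linarith [hx.2])
      have i2 := inc (z + A / (2 * K) * ν) (x + l) (by linarith [hx.1])
      have i3 : M * (z - x) + M * (x + l - (z + A / (2 * K) * ν)) ≤ M * l := by
        rw [← mul_add]; gcongr; linarith
      apply Real.rpow_le_rpow (by linarith) _ hq.le
      rw [le_abs]; right
      linarith
    · intro x
      have e1 := hper (x + l)
      have e2 := hper x
      have e3 : x + 1 + l = x + l + 1 := by ring
      simp only [e3, e1, e2]
  have hcs : 0 < min 1 (A / M) := by positivity
  have hc2 : 0 < min 1 (D / (2 * M)) := by positivity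
  rcases le_or_gt 1 p with h1p | hp1
  · refine ⟨min 1 (A / M), A / K, min 1 (D / (2 * M)), (D / 2) ^ p / 2, hcs, min_le_left _ _,
      by positivity, hc2, by positivity, ?_⟩
    intro ν hν v hper hv _ h1 h2 h3 h4 l hl
    have := (main ν hν v hper hv h1 h2 h3 h4 l hl).2.2 p hp
    rw [min_eq_left h1p, Real.rpow_one]
    linarith
  · refine ⟨min 1 (A / M), A / K, min 1 (D / (2 * M)), M ^ (p - 1) * (D / 8), hcs,
      min_le_left _ _, by positivity, hc2, by positivity, ?_⟩
    intro ν hν v hper hv _ h1 h2 h3 h4 l hl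
    obtain ⟨hl0, hup, hlow⟩ := main ν hν v hper hv h1 h2 h3 h4 l hl
    have hlow := hlow 1 one_pos
    simp only [Real.rpow_one] at hlow
    rw [min_eq_right hp1.le]
    have hvc : Continuous v := hv.continuous
    have hcont : Continuous fun x => v (x + l) - v x := by fun_prop
    have hzero : ∫ x in (0:ℝ)..1, (v (x + l) - v x) = 0 := by
      rw [intervalIntegral.integral_sub
        ((by fun_prop : Continuous fun x => v (x + l)).intervalIntegrable _ _)
        (hvc.intervalIntegrable _ _), intervalIntegral.integral_comp_add_right]
      have := hper.intervalIntegral_add_eq 0 l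
      rw [zero_add] at this
      rw [this, zero_add, add_comm 1 l, sub_self]
    have hmono : ∫ x in (0:ℝ)..1, (M * l) ^ (p - 1) / 2 * (|v (x + l) - v x| + (v (x + l) - v x))
        ≤ ∫ x in (0:ℝ)..1, |v (x + l) - v x| ^ p := by
      apply intervalIntegral.integral_mono_on (by norm_num)
        ((continuous_const.mul (hcont.abs.add hcont)).intervalIntegrable _ _)
        ((hcont.abs.rpow_const (fun _ => Or.inr hp.le)).intervalIntegrable _ _)
      intro x _
      have hx := hup x
      show (M * l) ^ (p - 1) / 2 * (|v (x + l) - v x| + (v (x + l) - v x)) ≤ |v (x + l) - v x| ^ p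
      generalize v (x + l) - v x = g at hx ⊢
      rcases le_or_gt g 0 with hg | hg
      · rw [abs_of_nonpos hg]; simp
        exact Real.rpow_nonneg (by linarith) _
      · rw [abs_of_pos hg]
        have e : g ^ p = g ^ (p - 1) * g := by
          rw [← Real.rpow_add_one hg.ne']; simp
        have := Real.rpow_le_rpow_of_nonpos hg hx (by linarith : p - 1 ≤ 0)
        rw [e]
        nlinarith
    rw [intervalIntegral.integral_const_mul, intervalIntegral.integral_add
      (hcont.abs.intervalIntegrable _ _) (hcont.intervalIntegrable _ _), hzero, add_zero] at hmono
    refine le_trans ?_ hmono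
    have e : l ^ p = l ^ (p - 1) * l := by
      rw [← Real.rpow_add_one hl0.ne']; simp
    rw [Real.mul_rpow hM0.le hl0.le, e]
    have : M ^ (p - 1) * (D / 8) * (l ^ (p - 1) * l)
      = M ^ (p - 1) * l ^ (p - 1) / 2 * (D / 2 * (l / 2)) := by ring
    rw [this]
    gcongr
end

section
/- Let u : S¹ → ℝ be continuously differentiable with ∫_{S¹} u(x) dx = 0, and let l ∈ (0,1]. Then ∫_{S¹} |u(x + l) − u(x)| dx ≤ 2·l·sup_x (u′(x))⁺, where a⁺ = max(a,0). -/
/-- The estimate from part 1 of Theorem 13.2 of the paper: for a mean-zero C¹ function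
`u` on the circle S¹ = ℝ/ℤ (represented as a 1-periodic function) and `l ∈ (0,1]`,
`∫ |u(x+l) − u(x)| dx ≤ 2 l sup_x (u'(x))⁺`. -/
theorem stmt_10 (u : ℝ → ℝ) (hper : Function.Periodic u 1) (hu : ContDiff ℝ 1 u)
    (hmean : ∫ x in (0:ℝ)..1, u x = 0) (l : ℝ) (hl : l ∈ Set.Ioc (0:ℝ) 1) :
    (∫ x in (0:ℝ)..1, |u (x + l) - u x|) ≤ 2 * l * ⨆ x : ℝ, max (deriv u x) 0 := by
  have hd : Continuous (deriv u) := hu.continuous_deriv (le_refl _)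
  have hc : Continuous u := hu.continuous
  have hdiff : Differentiable ℝ u := hu.differentiable (by norm_num)
  have hdper : Function.Periodic (deriv u) 1 := by
    intro x
    have h : (fun y => u (y + 1)) = u := funext hper
    rw [← deriv_comp_add_const, h]
  have hmper : Function.Periodic (fun x => max (deriv u x) 0) 1 := by
    intro x
    simp only [hdper x]
  have hbdd : BddAbove (Set.range fun x => max (deriv u x) 0) :=
    (hmper.compact_of_continuous one_ne_zero (hd.max continuous_const)).bddAbove
  set M := ⨆ x : ℝ, max (deriv u x) 0 with hM
  have hle : ∀ x, max (deriv u x) 0 ≤ M := fun x => le_ciSup hbdd x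
  have hM0 : 0 ≤ M := (le_max_right _ _).trans (hle 0)
  have hinc : ∀ x, u (x + l) - u x ≤ l * M := by
    intro x
    have h := image_sub_le_mul_sub_of_deriv_le hdiff
      (fun y => (le_max_left _ _).trans (hle y)) (show x ≤ x + l by linarith [hl.1])
    linarith
  have hpt : ∀ x, |u (x + l) - u x| ≤ 2 * l * M - (u (x + l) - u x) := by
    intro x
    have h0 : 0 ≤ l * M := mul_nonneg hl.1.le hM0
    rw [abs_le]
    constructor <;> linarith [hinc x]
  have hcl : Continuous fun x => u (x + l) := by fun_prop
  have hshift : ∫ x in (0:ℝ)..1, u (x + l) = 0 := by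
    rw [intervalIntegral.integral_comp_add_right]
    have h := hper.intervalIntegral_add_eq l 0
    rw [zero_add, hmean] at h
    rw [zero_add, add_comm 1 l, h]
  have hi1 := hcl.intervalIntegrable (μ := MeasureTheory.volume) 0 1
  have hi2 := hc.intervalIntegrable (μ := MeasureTheory.volume) 0 1
  calc (∫ x in (0:ℝ)..1, |u (x + l) - u x|)
      ≤ ∫ x in (0:ℝ)..1, (2 * l * M - (u (x + l) - u x)) := by
        apply intervalIntegral.integral_mono_on zero_le_one
        · exact (hi1.sub hi2).abs
        · exact intervalIntegrable_const.sub (hi1.sub hi2)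
        · exact fun x _ => hpt x
    _ = 2 * l * M := by
        rw [intervalIntegral.integral_sub intervalIntegrable_const (hi1.sub hi2),
          intervalIntegral.integral_sub hi1 hi2, hshift, hmean]
        simp
end

section
/- For all C₀ > 0 and c₀ > 0 there exists M₀ ≥ 2 such that for every real M ≥ M₀ there exist constants c₃ > 0 and c₄ > 0 (depending on C₀, c₀, M) with the following property: for every integer k ≥ 1 and every sequence (a_n)_{n≥1} of nonnegative reals satisfying a_n ≤ C₀·n⁻² for all n ≥ 1 and Σ_{n=1}^∞ sin²(nπ/k)·a_n ≥ c₀·k⁻¹, one has c₃·k⁻² ≤ (2k(M − M⁻¹))⁻¹ · Σ_{n : M⁻¹k ≤ n ≤ Mk} a_n ≤ c₄·k⁻². -/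
theorem aux_tail (U : ℕ) (hU : 1 ≤ U) (N : ℕ) :
    ∑ i ∈ Finset.range N, 1 / ((i + (U + 1) : ℕ) : ℝ) ^ 2 ≤ 1 / (U : ℝ) - 1 / ((U : ℝ) + N) := by
  have hU' : (1 : ℝ) ≤ U := by exact_mod_cast hU
  induction N with
  | zero => simp
  | succ N ih =>
    rw [Finset.sum_range_succ]
    have h : 1 / ((N + (U + 1) : ℕ) : ℝ) ^ 2 ≤ 1 / ((U : ℝ) + N) - 1 / ((U : ℝ) + (N + 1 : ℕ)) := by
      push_cast
      have hN : (0 : ℝ) ≤ N := Nat.cast_nonneg N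
      have h1 : (0 : ℝ) < U + N := by linarith
      have h2 : (0 : ℝ) < U + (N + 1) := by linarith
      rw [div_sub_div _ _ h1.ne' h2.ne', div_le_div_iff₀ (by positivity) (by positivity)]
      nlinarith
    linarith

/-- The deterministic summation lemma at the core of Theorem 14.2 of the paper (spectral
power law `E_k ∼ k⁻²`): if `0 ≤ a_n ≤ C₀ n⁻²` and `Σ_n sin²(nπ/k) a_n ≥ c₀ k⁻¹`, then
for every sufficiently large `M` the normalized window sum
`(2k(M − M⁻¹))⁻¹ Σ_{M⁻¹k ≤ n ≤ Mk} a_n` is comparable to `k⁻²`. -/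
theorem stmt_14 (C₀ c₀ : ℝ) (hC₀ : 0 < C₀) (hc₀ : 0 < c₀) :
    ∃ M₀ : ℝ, 2 ≤ M₀ ∧ ∀ M : ℝ, M₀ ≤ M →
      ∃ c₃ > (0:ℝ), ∃ c₄ > (0:ℝ), ∀ k : ℕ, 1 ≤ k → ∀ a : ℕ → ℝ,
        (∀ n : ℕ, 1 ≤ n → 0 ≤ a n) →
        (∀ n : ℕ, 1 ≤ n → a n ≤ C₀ / (n : ℝ) ^ 2) →
        (c₀ / (k : ℝ) ≤ ∑' n : ℕ, Real.sin ((n : ℝ) * Real.pi / (k : ℝ)) ^ 2 * a n) →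
        c₃ / (k : ℝ) ^ 2 ≤
            (2 * (k : ℝ) * (M - M⁻¹))⁻¹ *
              ∑ n ∈ Finset.Icc ⌈M⁻¹ * (k : ℝ)⌉₊ ⌊M * (k : ℝ)⌋₊, a n ∧
          (2 * (k : ℝ) * (M - M⁻¹))⁻¹ *
              ∑ n ∈ Finset.Icc ⌈M⁻¹ * (k : ℝ)⌉₊ ⌊M * (k : ℝ)⌋₊, a n ≤
            c₄ / (k : ℝ) ^ 2 := by
  have hpi := Real.pi_pos
  refine ⟨max 2 (2 * C₀ * (Real.pi ^ 2 + 2) / c₀), le_max_left _ _, fun M hM => ?_⟩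
  have hM2 : 2 ≤ M := (le_max_left _ _).trans hM
  have hM0 : 0 < M := by linarith
  have hMC : 2 * C₀ * (Real.pi ^ 2 + 2) ≤ M * c₀ := by
    rw [← div_le_iff₀ hc₀]; exact (le_max_right _ _).trans hM
  have hMi : M⁻¹ ≤ 1 := inv_le_one_of_one_le₀ (by linarith)
  have hMi0 : 0 < M⁻¹ := inv_pos.mpr hM0
  have hD : 0 < M - M⁻¹ := by linarith
  refine ⟨c₀ / (4 * (M - M⁻¹)), by positivity, C₀ * M ^ 3 / (2 * (M - M⁻¹)), by positivity, ?_⟩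
  intro k hk a ha0 haC hsum
  have hk1 : (1 : ℝ) ≤ k := by exact_mod_cast hk
  have hk0 : (0 : ℝ) < k := by linarith
  set L := ⌈M⁻¹ * (k : ℝ)⌉₊ with hL
  set U := ⌊M * (k : ℝ)⌋₊ with hUdef
  have hL1 : 1 ≤ L := Nat.ceil_pos.mpr (by positivity)
  have hLk : L ≤ k := Nat.ceil_le.mpr (by nlinarith)
  have hkU : k ≤ U := Nat.le_floor (by nlinarith)
  have hU1 : 1 ≤ U := hk.trans hkU
  have hUle : (U : ℝ) ≤ M * k := Nat.floor_le (by positivity)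
  have hUge : M * k / 2 ≤ U := by
    have := Nat.lt_floor_add_one (M * (k : ℝ))
    rw [← hUdef] at this
    nlinarith
  have hLle : M⁻¹ * k ≤ L := Nat.le_ceil _
  have hLlt : (L : ℝ) < M⁻¹ * k + 1 := Nat.ceil_lt_add_one (by positivity)
  set S := ∑ n ∈ Finset.Icc L U, a n with hS
  set f : ℕ → ℝ := fun n => Real.sin ((n : ℝ) * Real.pi / (k : ℝ)) ^ 2 * a n with hf
  have hf0 : f 0 = 0 := by simp [hf]
  have hfnn : ∀ n, 0 ≤ f n := by
    intro n
    rcases Nat.eq_zero_or_pos n with rfl | hn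
    · rw [hf0]
    · exact mul_nonneg (sq_nonneg _) (ha0 n hn)
  have hfa : ∀ n, 1 ≤ n → f n ≤ a n := fun n hn =>
    mul_le_of_le_one_left (ha0 n hn) (Real.sin_sq_le_one _)
  have hfC : ∀ n, f n ≤ C₀ * (1 / (n : ℝ) ^ 2) := by
    intro n
    rcases Nat.eq_zero_or_pos n with rfl | hn
    · rw [hf0]; positivity
    · rw [mul_one_div]; exact (hfa n hn).trans (haC n hn)
  have hsm : Summable f := Summable.of_nonneg_of_le hfnn hfC
    ((Real.summable_one_div_nat_pow.mpr (by norm_num)).mul_left C₀)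
  have htail : ∑' i, f (i + (U + 1)) ≤ 2 * C₀ / (M * k) := by
    refine Real.tsum_le_of_sum_range_le (fun _ => hfnn _) fun N => ?_
    calc ∑ i ∈ Finset.range N, f (i + (U + 1))
        ≤ ∑ i ∈ Finset.range N, C₀ * (1 / ((i + (U + 1) : ℕ) : ℝ) ^ 2) :=
          Finset.sum_le_sum fun i _ => hfC _
      _ = C₀ * ∑ i ∈ Finset.range N, (1 / ((i + (U + 1) : ℕ) : ℝ) ^ 2) := by
          rw [Finset.mul_sum]
      _ ≤ C₀ * (1 / (U : ℝ)) := by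
          have := aux_tail U hU1 N
          have h2 : 0 ≤ 1 / ((U : ℝ) + N) := by positivity
          exact mul_le_mul_of_nonneg_left (by linarith) hC₀.le
      _ ≤ C₀ * (1 / (M * k / 2)) := by gcongr
      _ = 2 * C₀ / (M * k) := by field_simp
  have hhead : ∑ i ∈ Finset.range L, f i ≤ C₀ * Real.pi ^ 2 / (M * k) := by
    obtain ⟨l, hl⟩ : ∃ l, L = l + 1 := ⟨L - 1, by omega⟩
    have hl' : (l : ℝ) ≤ M⁻¹ * k := by
      rw [hl] at hLlt; push_cast at hLlt; linarith
    rw [hl, Finset.sum_range_succ', hf0, add_zero]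
    calc ∑ i ∈ Finset.range l, f (i + 1)
        ≤ ∑ i ∈ Finset.range l, C₀ * Real.pi ^ 2 / (k : ℝ) ^ 2 := by
          refine Finset.sum_le_sum fun i _ => ?_
          have hn : (0 : ℝ) < ((i + 1 : ℕ) : ℝ) := by positivity
          have h1 : Real.sin (((i + 1 : ℕ) : ℝ) * Real.pi / k) ^ 2
              ≤ (((i + 1 : ℕ) : ℝ) * Real.pi / k) ^ 2 := by
            rw [sq_le_sq]; exact Real.abs_sin_le_abs
          calc f (i + 1) ≤ (((i + 1 : ℕ) : ℝ) * Real.pi / k) ^ 2 * (C₀ / ((i + 1 : ℕ) : ℝ) ^ 2) :=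
                mul_le_mul h1 (haC _ (by omega)) (ha0 _ (by omega)) (sq_nonneg _)
            _ = C₀ * Real.pi ^ 2 / (k : ℝ) ^ 2 := by field_simp
      _ = l * (C₀ * Real.pi ^ 2 / (k : ℝ) ^ 2) := by simp
      _ ≤ (M⁻¹ * k) * (C₀ * Real.pi ^ 2 / (k : ℝ) ^ 2) := by gcongr
      _ = C₀ * Real.pi ^ 2 / (M * k) := by field_simp
  have hmid : ∑ i ∈ Finset.Ico L (U + 1), f i ≤ S := by
    have : Finset.Ico L (U + 1) = Finset.Icc L U := by ext; simp
    rw [this]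
    exact Finset.sum_le_sum fun i hi => hfa i (hL1.trans (Finset.mem_Icc.mp hi).1)
  have hsplit := hsm.sum_add_tsum_nat_add (U + 1)
  have hsplit2 := Finset.sum_range_add_sum_Ico f (show L ≤ U + 1 by omega)
  have hSlow : c₀ / (2 * k) ≤ S := by
    have h1 : c₀ / k ≤ C₀ * Real.pi ^ 2 / (M * k) + S + 2 * C₀ / (M * k) := by linarith
    have h2 : C₀ * Real.pi ^ 2 / (M * k) + 2 * C₀ / (M * k) ≤ c₀ / (2 * k) := by
      rw [← add_div, div_le_div_iff₀ (by positivity) (by positivity)]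
      nlinarith
    have h3 : c₀ / k = c₀ / (2 * k) + c₀ / (2 * k) := by field_simp; norm_num
    linarith
  have hShigh : S ≤ C₀ * M ^ 3 / k := by
    calc S ≤ ∑ n ∈ Finset.Icc L U, C₀ / (M⁻¹ * k) ^ 2 := by
          refine Finset.sum_le_sum fun n hn => ?_
          have hn := (Finset.mem_Icc.mp hn).1
          have hn' : (L : ℝ) ≤ n := by exact_mod_cast hn
          refine (haC n (hL1.trans hn)).trans ?_
          gcongr
          linarith
      _ = ((U + 1 - L : ℕ) : ℝ) * (C₀ / (M⁻¹ * k) ^ 2) := by simp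
      _ ≤ (M * k) * (C₀ / (M⁻¹ * k) ^ 2) := by
          have : ((U + 1 - L : ℕ) : ℝ) ≤ U := by exact_mod_cast (by omega)
          gcongr
          linarith
      _ = C₀ * M ^ 3 / k := by field_simp
  constructor
  · calc c₀ / (4 * (M - M⁻¹)) / (k : ℝ) ^ 2
        = (2 * (k : ℝ) * (M - M⁻¹))⁻¹ * (c₀ / (2 * k)) := by
          generalize M - M⁻¹ = D at hD
          field_simp; norm_num
      _ ≤ _ := by gcongr
  · calc _ ≤ (2 * (k : ℝ) * (M - M⁻¹))⁻¹ * (C₀ * M ^ 3 / k) := by gcongr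
      _ = _ := by
          generalize M - M⁻¹ = D at hD
          field_simp
end
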